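/- Let 1 ≤ p < ∞. There exist positive constants C_1(p) and C_2(p) such that for every probability space (Ω,μ), every N ≥ 3, and every N-dimensional linear space X_N of real-valued measurable functions defined at every point of Ω with finite L_p(μ)-norm, there exist points ξ^1,…,ξ^m ∈ Ω (repetitions allowed) with ‖f‖_p ≤ C_2 ((1/m)∑_{j=1}^m |f(ξ^j)|^p)^{1/p} for all f ∈ X_N, where: m ≤ C_1 N if p = 2; m ≤ C_1 N log N if p = 1; m ≤ C_1 N log N (log log N)² if 1 < p < 2; m ≤ C_1 N^{p/2} if p is an even integer; and m ≤ C_1 N^{p/2} log N if p > 2. -/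

import Mathlib

open MeasureTheory

/-- The `L_p(μ)`-norm of a function `f`, `(∫ |f|^p dμ)^(1/p)`. -/
noncomputable def LpNorm {Ω : Type*} [MeasurableSpace Ω] (μ : Measure Ω) (p : ℝ)
    (f : Ω → ℝ) : ℝ :=
  (∫ ω, |f ω| ^ p ∂μ) ^ (1 / p)


lemma st_exists_lt {α : Type*} [Fintype α] (P R : α → ℝ) (hP : ∀ x, 0 ≤ P x) (h1 : ∑ x, P x = 1)
    (c : ℝ) (h : ∑ x, P x * R x < c) : ∃ x, R x < c := by
  by_contra hcon
  push Not at hcon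
  have : ∑ x, P x * c ≤ ∑ x, P x * R x :=
    Finset.sum_le_sum fun x _ => mul_le_mul_of_nonneg_left (hcon x) (hP x)
  rw [← Finset.sum_mul, h1, one_mul] at this
  linarith

lemma st_prodsum {ι : Type*} [Fintype ι] [DecidableEq ι] (M : ℕ) (π φ : ι → ℝ) :
    ∑ ξ : Fin M → ι, (∏ i, π (ξ i)) * ∏ i, φ (ξ i) = (∑ x, π x * φ x) ^ M := by
  rw [Fintype.sum_pow]
  simp_rw [Finset.prod_mul_distrib]

lemma st_prodone {ι : Type*} [Fintype ι] [DecidableEq ι] (M : ℕ) (π : ι → ℝ) (h1 : ∑ x, π x = 1) :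
    ∑ ξ : Fin M → ι, (∏ i, π (ξ i)) = 1 := by
  rw [← Fintype.sum_pow, h1, one_pow]

lemma st_prodlin {ι : Type*} [Fintype ι] [DecidableEq ι] (M : ℕ) (π g : ι → ℝ)
    (h1 : ∑ x, π x = 1) :
    ∑ ξ : Fin M → ι, (∏ i, π (ξ i)) * ∑ i, g (ξ i) = M * ∑ x, π x * g x := by
  have key : ∀ i : Fin M, ∑ ξ : Fin M → ι, (∏ j, π (ξ j)) * g (ξ i) = ∑ x, π x * g x := by
    intro i
    have h2 : ∀ ξ : Fin M → ι, (∏ j, π (ξ j)) * g (ξ i)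
        = ∏ j, (π (ξ j) * (if j = i then g (ξ j) else 1)) := by
      intro ξ
      rw [Finset.prod_mul_distrib, Finset.prod_ite_eq' Finset.univ i (fun j => g (ξ j))]
      simp
    simp_rw [h2]
    have h3 := Finset.prod_univ_sum (fun _ : Fin M => (Finset.univ : Finset ι))
      (fun j x => π x * (if j = i then g x else 1))
    rw [Fintype.piFinset_univ] at h3
    rw [← h3, ← Finset.mul_prod_erase Finset.univ _ (Finset.mem_univ i)]
    rw [Finset.prod_eq_one]
    · simp
    · intro j hj
      have : j ≠ i := (Finset.mem_erase.mp hj).1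
      simp [this, h1]
  simp_rw [Finset.mul_sum]
  rw [Finset.sum_comm]
  simp_rw [key]
  simp [Finset.mul_sum]

lemma st_sampling {ι Code : Type*} [Fintype ι] [DecidableEq ι] [Fintype Code] (π g : ι → ℝ)
    (hπ : ∀ x, 0 ≤ π x) (hπ1 : ∑ x, π x = 1) (hg : ∀ x, 0 ≤ g x) (hg1 : ∑ x, π x * g x ≤ 1)
    (M : ℕ) (hM : 0 < M) (J : Code → Finset ι) (cost : Code → ℝ)
    (hc : ∑ c, Real.exp (-cost c) ≤ 1 / 2) :
    ∃ ξ : Fin M → ι, (∑ i, g (ξ i) ≤ 4 * M) ∧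
      ∀ c, 4 * cost c ≤ M * ∑ x ∈ J c, π x →
        (M * ∑ x ∈ J c, π x) / 4 ≤ ∑ i, (if ξ i ∈ J c then (1 : ℝ) else 0) := by
  classical
  have hMr : (0 : ℝ) < M := by exact_mod_cast hM
  set q : Code → ℝ := fun c => ∑ x ∈ J c, π x with hq
  set R : (Fin M → ι) → ℝ := fun ξ =>
    (∑ c, if 4 * cost c ≤ M * q c then
      Real.exp (M * q c / 4 - ∑ i, (if ξ i ∈ J c then (1 : ℝ) else 0)) else 0)
      + (∑ i, g (ξ i)) / (4 * M) with hR
  have hE : ∑ ξ : Fin M → ι, (∏ i, π (ξ i)) * R ξ < 1 := by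
    have e1 : ∑ ξ : Fin M → ι, (∏ i, π (ξ i)) * R ξ =
        (∑ c, if 4 * cost c ≤ M * q c then
          Real.exp (M * q c / 4) * (∑ x, π x * Real.exp (-(if x ∈ J c then (1 : ℝ) else 0))) ^ M
          else 0) + (M * ∑ x, π x * g x) / (4 * M) := by
      simp only [hR, mul_add, Finset.sum_add_distrib]
      congr 1
      · rw [Finset.sum_congr rfl (fun ξ _ => Finset.mul_sum _ _ _)]
        rw [Finset.sum_comm]
        refine Finset.sum_congr rfl fun c _ => ?_
        split_ifs with h
        · rw [← st_prodsum M π (fun x => Real.exp (-(if x ∈ J c then (1 : ℝ) else 0))), Finset.mul_sum _ _ (Real.exp (M * q c / 4))]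
          refine Finset.sum_congr rfl fun ξ _ => ?_
          rw [sub_eq_add_neg, Real.exp_add]
          have hh : -(∑ i, (if ξ i ∈ J c then (1 : ℝ) else 0)) = ∑ i, -(if ξ i ∈ J c then (1 : ℝ) else 0) := by
            rw [Finset.sum_neg_distrib]
          rw [hh, Real.exp_sum]
          ring
        · simp
      · rw [← st_prodlin M π g hπ1, Finset.sum_div]
        refine Finset.sum_congr rfl fun ξ _ => ?_
        ring
    rw [e1]
    have h2 : (M * ∑ x, π x * g x) / (4 * M) ≤ 1 / 4 := by
      rw [div_le_iff₀ (by positivity)]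
      nlinarith
    have h3 : (∑ c, if 4 * cost c ≤ M * q c then
          Real.exp (M * q c / 4) * (∑ x, π x * Real.exp (-(if x ∈ J c then (1 : ℝ) else 0))) ^ M
          else 0) ≤ ∑ c, Real.exp (-cost c) := by
      refine Finset.sum_le_sum fun c _ => ?_
      split_ifs with h
      · have hs : ∑ x, π x * Real.exp (-(if x ∈ J c then (1 : ℝ) else 0))
            ≤ Real.exp (-(q c / 2)) := by
          have : ∑ x, π x * Real.exp (-(if x ∈ J c then (1 : ℝ) else 0))
              ≤ ∑ x, (π x - (if x ∈ J c then π x else 0) / 2) := by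
            refine Finset.sum_le_sum fun x _ => ?_
            split_ifs
            · have : Real.exp (-1) ≤ 1 / 2 := by
                have := Real.exp_neg_one_lt_d9; linarith
              nlinarith [hπ x]
            · simp
          refine this.trans ?_
          rw [Finset.sum_sub_distrib, hπ1, ← Finset.sum_div, Finset.sum_ite_mem, Finset.univ_inter]
          have := Real.add_one_le_exp (-(q c / 2))
          linarith
        have hs0 : 0 ≤ ∑ x, π x * Real.exp (-(if x ∈ J c then (1 : ℝ) else 0)) :=
          Finset.sum_nonneg fun x _ => mul_nonneg (hπ x) (Real.exp_pos _).le
        calc _ ≤ Real.exp (M * q c / 4) * (Real.exp (-(q c / 2))) ^ M := by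
              gcongr
          _ = Real.exp (M * q c / 4 + M * (-(q c / 2))) := by
              rw [← Real.exp_nat_mul, Real.exp_add]
          _ ≤ _ := by
              apply Real.exp_le_exp.mpr; linarith
      · exact (Real.exp_pos _).le
    linarith
  obtain ⟨ξ, hξ⟩ := st_exists_lt _ R (fun ξ => Finset.prod_nonneg fun i _ => hπ _)
    (st_prodone M π hπ1) 1 hE
  have hn1 : ∀ c, 0 ≤ (if 4 * cost c ≤ M * q c then
      Real.exp (M * q c / 4 - ∑ i, (if ξ i ∈ J c then (1 : ℝ) else 0)) else 0) := by
    intro c; split_ifs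
    · exact (Real.exp_pos _).le
    · exact le_rfl
  have hn2 : 0 ≤ (∑ i, g (ξ i)) / (4 * M) :=
    div_nonneg (Finset.sum_nonneg fun i _ => hg _) (by positivity)
  refine ⟨ξ, ?_, ?_⟩
  · have : (∑ i, g (ξ i)) / (4 * M) < 1 := by
      have := Finset.sum_nonneg (s := Finset.univ) fun c _ => hn1 c
      simp only [hR] at hξ
      linarith
    rw [div_lt_one (by positivity)] at this
    exact this.le
  · intro c hcc
    by_contra hlt
    push Not at hlt
    have h4 := Finset.single_le_sum (f := fun c => (if 4 * cost c ≤ M * q c then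
      Real.exp (M * q c / 4 - ∑ i, (if ξ i ∈ J c then (1 : ℝ) else 0)) else 0))
      (fun c _ => hn1 c) (Finset.mem_univ c)
    simp only [hq] at h4
    rw [if_pos hcc] at h4
    have h5 : 1 < Real.exp (M * (∑ x ∈ J c, π x) / 4 - ∑ i, (if ξ i ∈ J c then (1 : ℝ) else 0)) := by
      rw [Real.one_lt_exp_iff]; linarith
    simp only [hR, hq] at hξ
    linarith

/-- Dyadic levels. -/
noncomputable def st_t (s : ℕ) : ℝ := 2 ^ s / 4

lemma st_t_pos (s : ℕ) : 0 < st_t s := by unfold st_t; positivity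

lemma st_t_succ (s : ℕ) : st_t (s + 1) = 2 * st_t s := by unfold st_t; ring

lemma st_t_mono {s r : ℕ} (h : s ≤ r) : st_t s ≤ st_t r := by
  unfold st_t
  have : (2 : ℝ) ^ s ≤ 2 ^ r := pow_le_pow_right₀ (by norm_num) h
  linarith

lemma st_two_le_rpow {p : ℝ} (hp : 1 ≤ p) : (2 : ℝ) ≤ 2 ^ p := by
  calc (2 : ℝ) = 2 ^ (1 : ℝ) := by simp
    _ ≤ 2 ^ p := Real.rpow_le_rpow_of_exponent_le (by norm_num) hp

lemma st_geom {p : ℝ} (hp : 1 ≤ p) (n : ℕ) :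
    ∑ s ∈ Finset.range (n + 1), st_t s ^ p ≤ 2 * st_t n ^ p := by
  induction n with
  | zero =>
    simp
    have : 0 < st_t 0 ^ p := Real.rpow_pos_of_pos (st_t_pos 0) p
    linarith
  | succ n ih =>
    rw [Finset.sum_range_succ]
    have h1 : st_t (n + 1) ^ p = 2 ^ p * st_t n ^ p := by
      rw [st_t_succ, Real.mul_rpow (by norm_num) (st_t_pos n).le]
    have h2 : 0 < st_t n ^ p := Real.rpow_pos_of_pos (st_t_pos n) p
    have := st_two_le_rpow hp
    nlinarith

lemma st_geom_filter {p : ℝ} (hp : 1 ≤ p) (n : ℕ) (A : ℝ) (hA : 0 ≤ A) :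
    ∑ s ∈ Finset.range (n + 1), (if st_t s ≤ A then st_t s ^ p else 0) ≤ 2 * A ^ p := by
  induction n with
  | zero =>
    have h0 : 0 ≤ A ^ p := Real.rpow_nonneg hA p
    rw [Finset.sum_range_one]
    split_ifs with h
    · have : st_t 0 ^ p ≤ A ^ p := Real.rpow_le_rpow (st_t_pos 0).le h (by linarith)
      linarith
    · linarith
  | succ n ih =>
    by_cases h : st_t (n + 1) ≤ A
    · calc _ ≤ ∑ s ∈ Finset.range (n + 1 + 1), st_t s ^ p := by
            refine Finset.sum_le_sum fun s _ => ?_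
            split_ifs
            · exact le_rfl
            · exact (Real.rpow_pos_of_pos (st_t_pos s) p).le
        _ ≤ 2 * st_t (n + 1) ^ p := st_geom hp (n + 1)
        _ ≤ _ := by
          have : st_t (n + 1) ^ p ≤ A ^ p := Real.rpow_le_rpow (st_t_pos _).le h (by linarith)
          linarith
    · rw [Finset.sum_range_succ, if_neg h, add_zero]
      exact ih

lemma st_exists_level (S : ℕ) (y : ℝ) (h0 : st_t 0 ≤ y) (h1 : y < 2 * st_t S) :
    ∃ s, s ≤ S ∧ st_t s ≤ y ∧ y < 2 * st_t s := by
  induction S with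
  | zero => exact ⟨0, le_rfl, h0, h1⟩
  | succ S ih =>
    by_cases h : y < 2 * st_t S
    · obtain ⟨s, a, b⟩ := ih h
      exact ⟨s, by omega, b⟩
    · push Not at h
      exact ⟨S + 1, le_rfl, by rw [st_t_succ]; exact h, h1⟩

lemma st_core_of_codes {ι Code : Type*} [Fintype ι] [DecidableEq ι] [Fintype Code] (π g : ι → ℝ)
    (hπ : ∀ x, 0 ≤ π x) (hπ1 : ∑ x, π x = 1) (hg : ∀ x, 0 ≤ g x) (hg1 : ∑ x, π x * g x ≤ 1)
    (p : ℝ) (hp : 1 ≤ p) (S : ℕ)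
    (M : ℕ) (hM : 0 < M) (J : Code → Finset ι) (cost : Code → ℝ) (hc0 : ∀ c, 0 ≤ cost c)
    (hc : ∑ c, Real.exp (-cost c) ≤ 1 / 2) :
    ∃ ξ : Fin M → ι, (∑ i, g (ξ i) ≤ 4 * M) ∧
      ∀ F : ι → ℝ, ∑ x, π x * |F x| ^ p = 1 → (∀ x, |F x| < 2 * st_t S) →
        (∃ (c : ℕ → Code) (Bad : Finset ι),
          (∀ s, s ≤ S → ∀ x ∈ J (c s), st_t s ≤ 2 * |F x|) ∧
          (∀ s, s ≤ S → ∀ x, x ∉ Bad → st_t s ≤ |F x| → |F x| < 2 * st_t s → x ∈ J (c s)) ∧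
          ∑ x ∈ Bad, π x * |F x| ^ p ≤ 1 / 4 ∧
          ∑ s ∈ Finset.range (S + 1), st_t s ^ p * (16 * 2 ^ p * cost (c s)) ≤ M) →
        (M : ℝ) ≤ (32 * 2 ^ p * 2 ^ p) * ∑ i, |F (ξ i)| ^ p := by
  obtain ⟨ξ, hξ1, hξ2⟩ := st_sampling π g hπ hπ1 hg hg1 M hM J cost hc
  refine ⟨ξ, hξ1, ?_⟩
  rintro F hF hFS ⟨c, Bad, hJ1, hJ2, hBad, hcost⟩
  have hMr : (0 : ℝ) < M := by exact_mod_cast hM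
  have h2p : (0 : ℝ) < 2 ^ p := Real.rpow_pos_of_pos (by norm_num) p
  have hF0 : ∀ x, 0 ≤ |F x| ^ p := fun x => Real.rpow_nonneg (abs_nonneg _) p
  have htp : ∀ s, 0 < st_t s ^ p := fun s => Real.rpow_pos_of_pos (st_t_pos s) p
  -- counts
  have hn : ∀ s, (M * ∑ x ∈ J (c s), π x - 4 * cost (c s)) / 4
      ≤ ∑ i, (if ξ i ∈ J (c s) then (1 : ℝ) else 0) := by
    intro s
    have h0 : 0 ≤ ∑ i, (if ξ i ∈ J (c s) then (1 : ℝ) else 0) :=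
      Finset.sum_nonneg fun i _ => by split_ifs <;> norm_num
    by_cases h : 4 * cost (c s) ≤ M * ∑ x ∈ J (c s), π x
    · have := hξ2 _ h
      have := hc0 (c s)
      linarith
    · push Not at h
      linarith
  -- upper
  have hup : ∑ s ∈ Finset.range (S + 1), st_t s ^ p * ∑ i, (if ξ i ∈ J (c s) then (1 : ℝ) else 0)
      ≤ 2 * 2 ^ p * ∑ i, |F (ξ i)| ^ p := by
    simp_rw [Finset.mul_sum]
    rw [Finset.sum_comm]
    refine Finset.sum_le_sum fun i _ => ?_
    have := st_geom_filter hp S (2 * |F (ξ i)|) (by positivity)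
    rw [Real.mul_rpow (by norm_num) (abs_nonneg _), ← mul_assoc] at this
    refine le_trans (Finset.sum_le_sum fun s hs => ?_) this
    have hs' : s ≤ S := by simpa [Nat.lt_succ_iff] using hs
    by_cases h : ξ i ∈ J (c s)
    · rw [if_pos h, if_pos (hJ1 s hs' _ h), mul_one]
    · rw [if_neg h, mul_zero]
      split_ifs
      · exact (htp s).le
      · exact le_rfl
  -- lower
  have hlow : 1 / 2 ≤ 2 ^ p * ∑ s ∈ Finset.range (S + 1), st_t s ^ p * ∑ x ∈ J (c s), π x := by
    have e : ∀ x, π x * |F x| ^ p ≤ (if x ∈ Bad then π x * |F x| ^ p else 0) + π x * (1 / 4)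
        + 2 ^ p * ∑ s ∈ Finset.range (S + 1), st_t s ^ p * (if x ∈ J (c s) then π x else 0) := by
      intro x
      have hnn : 0 ≤ 2 ^ p * ∑ s ∈ Finset.range (S + 1), st_t s ^ p * (if x ∈ J (c s) then π x else 0) := by
        refine mul_nonneg h2p.le (Finset.sum_nonneg fun s _ => mul_nonneg (htp s).le ?_)
        split_ifs
        · exact hπ x
        · exact le_rfl
      have hpx := hπ x
      by_cases hb : x ∈ Bad
      · rw [if_pos hb]; linarith
      rw [if_neg hb]
      by_cases hsm : |F x| < st_t 0
      · have : |F x| ^ p ≤ 1 / 4 := by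
          have h14 : |F x| ≤ 1 / 4 := by simpa [st_t] using hsm.le
          calc |F x| ^ p ≤ (1 / 4 : ℝ) ^ p := Real.rpow_le_rpow (abs_nonneg _) h14 (by linarith)
            _ ≤ (1 / 4 : ℝ) ^ (1 : ℝ) :=
              Real.rpow_le_rpow_of_exponent_ge (by norm_num) (by norm_num) hp
            _ = 1 / 4 := by simp
        nlinarith
      · push Not at hsm
        obtain ⟨s, hs, hs1, hs2⟩ := st_exists_level S _ hsm (hFS x)
        have hmem := hJ2 s hs x hb hs1 hs2
        have h1 : st_t s ^ p * π x ≤ ∑ s ∈ Finset.range (S + 1), st_t s ^ p * (if x ∈ J (c s) then π x else 0) := by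
          have := Finset.single_le_sum (s := Finset.range (S + 1)) (f := fun s => st_t s ^ p * (if x ∈ J (c s) then π x else 0)) (fun s _ => mul_nonneg (htp s).le (by split_ifs; exact hπ x; exact le_rfl)) (Finset.mem_range.mpr (by omega : s < S + 1))
          simpa [hmem] using this
        have h2 : |F x| ^ p ≤ 2 ^ p * st_t s ^ p := by
          rw [← Real.mul_rpow (by norm_num) (st_t_pos s).le]
          exact Real.rpow_le_rpow (abs_nonneg _) hs2.le (by linarith)
        have h3 : π x * |F x| ^ p ≤ 2 ^ p * (st_t s ^ p * π x) := by nlinarith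
        have h4 := mul_le_mul_of_nonneg_left h1 h2p.le
        linarith
    have e2 := Finset.sum_le_sum (s := Finset.univ) fun x _ => e x
    rw [hF, Finset.sum_add_distrib, Finset.sum_add_distrib, ← Finset.sum_mul, hπ1, ← Finset.mul_sum,
      Finset.sum_comm, Finset.sum_ite_mem, Finset.univ_inter] at e2
    simp_rw [← Finset.mul_sum, Finset.sum_ite_mem, Finset.univ_inter] at e2
    linarith
  have hmid : ∑ s ∈ Finset.range (S + 1), st_t s ^ p * ((M * ∑ x ∈ J (c s), π x - 4 * cost (c s)) / 4)
      ≤ 2 * 2 ^ p * ∑ i, |F (ξ i)| ^ p :=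
    (Finset.sum_le_sum fun s _ => mul_le_mul_of_nonneg_left (hn s) (htp s).le).trans hup
  have heq : ∑ s ∈ Finset.range (S + 1), st_t s ^ p * ((M * ∑ x ∈ J (c s), π x - 4 * cost (c s)) / 4)
      = M / 4 * (∑ s ∈ Finset.range (S + 1), st_t s ^ p * ∑ x ∈ J (c s), π x)
        - 1 / (16 * 2 ^ p) * ∑ s ∈ Finset.range (S + 1), st_t s ^ p * (16 * 2 ^ p * cost (c s)) := by
    rw [Finset.mul_sum (Finset.range (S + 1)), Finset.mul_sum (Finset.range (S + 1)), ← Finset.sum_sub_distrib]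
    refine Finset.sum_congr rfl fun s _ => ?_
    field_simp
  rw [heq] at hmid
  have h5 : 1 / (16 * 2 ^ p) * ∑ s ∈ Finset.range (S + 1), st_t s ^ p * (16 * 2 ^ p * cost (c s)) ≤ 1 / (16 * 2 ^ p) * M :=
    mul_le_mul_of_nonneg_left hcost (by positivity)
  have h6 : 1 / (8 * 2 ^ p) * M ≤ M / 4 * (∑ s ∈ Finset.range (S + 1), st_t s ^ p * ∑ x ∈ J (c s), π x) := by
    rw [div_mul_eq_mul_div, div_le_iff₀ (by positivity)]
    nlinarith
  have h7 : 1 / (16 * 2 ^ p) * M ≤ 2 * 2 ^ p * ∑ i, |F (ξ i)| ^ p := by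
    have : 1 / (8 * (2:ℝ) ^ p) * M = 2 * (1 / (16 * 2 ^ p) * M) := by field_simp; norm_num
    linarith
  rw [div_mul_eq_mul_div, div_le_iff₀ (by positivity)] at h7
  linarith

/-- Linear functional family. -/
def st_F {ι : Type*} {d : ℕ} (u : ι → Fin d → ℝ) (a : Fin d → ℝ) (x : ι) : ℝ := ∑ j, a j * u x j

lemma st_F_smul {ι : Type*} {d : ℕ} (u : ι → Fin d → ℝ) (r : ℝ) (a : Fin d → ℝ) (x : ι) :
    st_F u (fun j => r * a j) x = r * st_F u a x := by
  unfold st_F; rw [Finset.mul_sum]; exact Finset.sum_congr rfl fun j _ => by ring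

lemma st_codes_sum {E : Type*} [Fintype E] (S K : ℕ) (hE : S + 1 ≤ Fintype.card E) :
    ∑ c : Fin (S + 1) × (Σ k : Fin (K + 1), Fin (k : ℕ) → E),
      Real.exp (-(((c.2.1 : ℕ) + 2 : ℝ) * Real.log (2 * Fintype.card E))) ≤ 1 / 2 := by
  set e : ℝ := (Fintype.card E : ℝ) with he
  have he1 : (S : ℝ) + 1 ≤ e := by rw [he]; exact_mod_cast hE
  have he0 : 1 ≤ e := by have : (0 : ℝ) ≤ S := by positivity
                         linarith
  have hterm : ∀ k : ℕ, Real.exp (-((k + 2 : ℝ) * Real.log (2 * e))) = (2 * e)⁻¹ ^ (k + 2) := by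
    intro k
    rw [Real.exp_neg, inv_pow, mul_comm, Real.exp_mul, Real.exp_log (by linarith)]
    norm_cast
  rw [Fintype.sum_prod_type]
  simp only [Finset.sum_const, Finset.card_univ, Fintype.card_fin]
  rw [Fintype.sum_sigma]
  simp only [Finset.sum_const, Finset.card_univ, Fintype.card_fun, Fintype.card_fin, hterm]
  simp only [nsmul_eq_mul, Nat.cast_pow, ← he]
  have h1 : ∀ k : ℕ, e ^ k * (2 * e)⁻¹ ^ (k + 2) = (2 * e)⁻¹ ^ 2 * (1 / 2) ^ k := by
    intro k
    have : e ≠ 0 := by linarith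
    rw [pow_add, ← mul_assoc, ← mul_pow]
    have : e * (2 * e)⁻¹ = 1 / 2 := by field_simp
    rw [this]; ring
  simp_rw [h1]
  rw [← Finset.mul_sum, Fin.sum_univ_eq_sum_range (fun k => (1 / 2 : ℝ) ^ k)]
  have hg : ∑ k ∈ Finset.range (K + 1), (1 / 2 : ℝ) ^ k ≤ 2 := by
    rw [geom_sum_eq (by norm_num)]
    have : (0 : ℝ) < (1 / 2) ^ (K + 1) := by positivity
    rw [div_le_iff_of_neg (by norm_num)]; linarith
  push_cast
  have h3 : 0 ≤ (2 * e)⁻¹ ^ 2 := by positivity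
  have h4 : (e * e) * (2 * e)⁻¹ ^ 2 = 1 / 4 := by
    have : e ≠ 0 := by linarith
    field_simp; norm_num
  calc ((S : ℝ) + 1) * ((2 * e)⁻¹ ^ 2 * ∑ k ∈ Finset.range (K + 1), (1 / 2 : ℝ) ^ k)
      ≤ e * ((2 * e)⁻¹ ^ 2 * 2) := by gcongr
    _ ≤ (e * e) * ((2 * e)⁻¹ ^ 2 * 2) := by
        apply mul_le_mul_of_nonneg_right _ (by positivity); nlinarith
    _ = 1 / 2 := by rw [← mul_assoc, h4]; norm_num

lemma st_core_of_lists {ι E : Type*} [Fintype ι] [DecidableEq ι] [Fintype E] {d : ℕ}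
    (u : ι → Fin d → ℝ) (π g : ι → ℝ)
    (hπ : ∀ x, 0 ≤ π x) (hπ1 : ∑ x, π x = 1) (hg : ∀ x, 0 ≤ g x) (hg1 : ∑ x, π x * g x ≤ 1)
    (p : ℝ) (hp : 1 ≤ p) (S : ℕ)
    (M : ℕ) (hM : 0 < M) (hE : S + 1 ≤ Fintype.card E) (J : ℕ → List E → Finset ι)
    (hgood : ∀ a : Fin d → ℝ, ∑ x, π x * |st_F u a x| ^ p = 1 →
        (∀ x, |st_F u a x| < 2 * st_t S) ∧
        (∃ (c : ℕ → List E) (Bad : Finset ι),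
          (∀ s, s ≤ S → ∀ x ∈ J s (c s), st_t s ≤ 2 * |st_F u a x|) ∧
          (∀ s, s ≤ S → ∀ x, x ∉ Bad → st_t s ≤ |st_F u a x| → |st_F u a x| < 2 * st_t s →
            x ∈ J s (c s)) ∧
          ∑ x ∈ Bad, π x * |st_F u a x| ^ p ≤ 1 / 4 ∧
          ∑ s ∈ Finset.range (S + 1), st_t s ^ p * (16 * 2 ^ p *
            (((c s).length + 2) * Real.log (2 * Fintype.card E))) ≤ M)) :
    ∃ ξ : Fin M → ι, (∑ i, g (ξ i) ≤ 4 * M) ∧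
      ∀ a : Fin d → ℝ, M * ∑ x, π x * |st_F u a x| ^ p
        ≤ (32 * 2 ^ p * 2 ^ p) * ∑ i, |st_F u a (ξ i)| ^ p := by
  classical
  set K : ℕ := ⌈(M : ℝ) * 4 ^ p⌉₊ with hK
  have hMr : (0 : ℝ) < M := by exact_mod_cast hM
  have he1 : (1 : ℝ) ≤ Fintype.card E := by exact_mod_cast (by omega : 1 ≤ Fintype.card E)
  have hlog : 1 / 2 ≤ Real.log (2 * Fintype.card E) := by
    have h1 := Real.log_two_gt_d9
    have h2 : Real.log 2 ≤ Real.log (2 * Fintype.card E) := Real.log_le_log (by norm_num) (by linarith)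
    linarith
  obtain ⟨ξ, h1, h2⟩ := st_core_of_codes π g hπ hπ1 hg hg1 p hp S M hM
    (fun c : Fin (S + 1) × (Σ k : Fin (K + 1), Fin (k : ℕ) → E) => J c.1 (List.ofFn c.2.2))
    (fun c => (((c.2.1 : ℕ) + 2 : ℝ) * Real.log (2 * Fintype.card E)))
    (fun c => by positivity) (st_codes_sum S K hE)
  refine ⟨ξ, h1, ?_⟩
  have h2p : (0 : ℝ) < 2 ^ p := Real.rpow_pos_of_pos (by norm_num) p
  have key : ∀ a : Fin d → ℝ, ∑ x, π x * |st_F u a x| ^ p = 1 →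
      (M : ℝ) ≤ (32 * 2 ^ p * 2 ^ p) * ∑ i, |st_F u a (ξ i)| ^ p := by
    intro a ha
    obtain ⟨hb, c, Bad, hJ1, hJ2, hBad, hcost⟩ := hgood a ha
    have hlen : ∀ s, s ≤ S → (c s).length < K + 1 := by
      intro s hs
      have hnn : ∀ s ∈ Finset.range (S + 1), 0 ≤ st_t s ^ p * (16 * 2 ^ p *
            (((c s).length + 2) * Real.log (2 * Fintype.card E))) := by
        intro s _
        have := Real.rpow_pos_of_pos (st_t_pos s) p
        positivity
      have h3 := (Finset.single_le_sum hnn (Finset.mem_range.mpr (by omega : s < S + 1))).trans hcost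
      have h4 : (1 / 4 : ℝ) ^ p ≤ st_t s ^ p := by
        apply Real.rpow_le_rpow (by norm_num) _ (by linarith)
        have := st_t_mono (Nat.zero_le s)
        simpa [st_t] using this
      have h5 : (1 / 4 : ℝ) ^ p * 4 ^ p = 1 := by
        rw [← Real.mul_rpow (by norm_num) (by norm_num)]; norm_num
      have h4p : (0 : ℝ) < 4 ^ p := Real.rpow_pos_of_pos (by norm_num) p
      have h6 : ((c s).length : ℝ) ≤ 16 * 2 ^ p *
            (((c s).length + 2) * Real.log (2 * Fintype.card E)) := by
        have h7 := st_two_le_rpow hp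
        have h8 : (0 : ℝ) ≤ (c s).length := by positivity
        have h9 : ((c s).length + 2 : ℝ) * (1 / 2) ≤ ((c s).length + 2) * Real.log (2 * Fintype.card E) := by
          gcongr
        nlinarith
      have h7 : (1 / 4 : ℝ) ^ p * (c s).length ≤ M := by
        refine le_trans ?_ h3
        exact mul_le_mul h4 h6 (by positivity) (Real.rpow_pos_of_pos (st_t_pos s) p).le
      have h8 : ((c s).length : ℝ) ≤ M * 4 ^ p := by
        have := mul_le_mul_of_nonneg_right h7 h4p.le
        calc ((c s).length : ℝ) = ((1 / 4 : ℝ) ^ p * 4 ^ p) * (c s).length := by rw [h5, one_mul]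
          _ = (1 / 4 : ℝ) ^ p * (c s).length * 4 ^ p := by ring
          _ ≤ _ := this
      have h9 : ((c s).length : ℝ) ≤ K := h8.trans (Nat.le_ceil _)
      have : (c s).length ≤ K := by exact_mod_cast h9
      omega
    let c' : ℕ → Fin (S + 1) × (Σ k : Fin (K + 1), Fin (k : ℕ) → E) := fun s =>
      if h : s ≤ S then (⟨s, by omega⟩, ⟨⟨(c s).length, hlen s h⟩, (c s).get⟩)
      else (0, ⟨0, fun i => absurd i.2 (by simp)⟩)
    have hc' : ∀ s (h : s ≤ S), c' s = (⟨s, by omega⟩, ⟨⟨(c s).length, hlen s h⟩, (c s).get⟩) := by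
      intro s h; simp only [c']; rw [dif_pos h]
    refine h2 _ ha hb ⟨c', Bad, ?_, ?_, hBad, ?_⟩
    · intro s hs x hx
      rw [hc' s hs] at hx
      simp only [List.ofFn_get] at hx
      exact hJ1 s hs x hx
    · intro s hs x h3 h4 h5
      rw [hc' s hs]
      simp only [List.ofFn_get]
      exact hJ2 s hs x h3 h4 h5
    · refine le_trans (le_of_eq ?_) hcost
      refine Finset.sum_congr rfl fun s hs => ?_
      have hs' : s ≤ S := by simpa [Nat.lt_succ_iff] using hs
      rw [hc' s hs']
  intro a
  have hF0 : ∀ x, 0 ≤ |st_F u a x| ^ p := fun x => Real.rpow_nonneg (abs_nonneg _) p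
  have hA0 : 0 ≤ ∑ x, π x * |st_F u a x| ^ p :=
    Finset.sum_nonneg fun x _ => mul_nonneg (hπ x) (hF0 x)
  have hR0 : 0 ≤ ∑ i, |st_F u a (ξ i)| ^ p := Finset.sum_nonneg fun i _ => hF0 _
  rcases hA0.eq_or_lt with h0 | hpos
  · rw [← h0, mul_zero]; positivity
  set A := ∑ x, π x * |st_F u a x| ^ p with hA
  have hsc : ∀ x, |st_F u (fun j => A ^ (-1 / p) * a j) x| ^ p = A⁻¹ * |st_F u a x| ^ p := by
    intro x
    rw [st_F_smul, abs_mul, Real.mul_rpow (abs_nonneg _) (abs_nonneg _),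
      abs_of_pos (Real.rpow_pos_of_pos hpos _), ← Real.rpow_mul hpos.le,
      div_mul_cancel₀ _ (by linarith : p ≠ 0), Real.rpow_neg_one]
  have h3 := key (fun j => A ^ (-1 / p) * a j) (by
    simp_rw [hsc, mul_left_comm _ A⁻¹]
    rw [← Finset.mul_sum, ← hA, inv_mul_cancel₀ hpos.ne'])
  simp_rw [hsc] at h3
  rw [← Finset.mul_sum] at h3
  have h4 := mul_le_mul_of_nonneg_right h3 hpos.le
  refine h4.trans (le_of_eq ?_)
  field_simp

/-- Isotropic frame data. -/
structure st_Frame {ι : Type*} [Fintype ι] {d : ℕ} (π : ι → ℝ) (u : ι → Fin d → ℝ) : Prop where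
  nonneg : ∀ x, 0 ≤ π x
  one : ∑ x, π x = 1
  sq : ∀ x, ∑ j, u x j ^ 2 = d
  orth : ∀ i j, ∑ x, π x * (u x i * u x j) = if i = j then 1 else 0

lemma st_frame_parseval {ι : Type*} [Fintype ι] {d : ℕ} {π : ι → ℝ} {u : ι → Fin d → ℝ}
    (h : st_Frame π u) (a b : Fin d → ℝ) :
    ∑ x, π x * (st_F u a x * st_F u b x) = ∑ j, a j * b j := by
  have h1 : ∀ x, π x * (st_F u a x * st_F u b x)
      = ∑ i, ∑ j, (a i * b j) * (π x * (u x i * u x j)) := by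
    intro x
    unfold st_F
    rw [Finset.sum_mul_sum, Finset.mul_sum]
    refine Finset.sum_congr rfl fun i _ => ?_
    rw [Finset.mul_sum]
    exact Finset.sum_congr rfl fun j _ => by ring
  simp_rw [h1]
  rw [Finset.sum_comm]
  refine Finset.sum_congr rfl fun i _ => ?_
  rw [Finset.sum_comm]
  simp_rw [← Finset.mul_sum, h.orth]
  simp

lemma st_frame_cs {ι : Type*} [Fintype ι] {d : ℕ} {π : ι → ℝ} {u : ι → Fin d → ℝ}
    (h : st_Frame π u) (a : Fin d → ℝ) (x : ι) :
    st_F u a x ^ 2 ≤ d * ∑ j, a j ^ 2 := by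
  unfold st_F
  have := Finset.sum_mul_sq_le_sq_mul_sq Finset.univ a (u x)
  rw [h.sq x] at this
  linarith

lemma st_frame_parseval' {ι : Type*} [Fintype ι] {d : ℕ} {π : ι → ℝ} {u : ι → Fin d → ℝ}
    (h : st_Frame π u) (a : Fin d → ℝ) :
    ∑ x, π x * st_F u a x ^ 2 = ∑ j, a j ^ 2 := by
  have := st_frame_parseval h a a
  simp_rw [← sq] at this
  exact this

lemma st_frame_high {ι : Type*} [Fintype ι] {d : ℕ} {π : ι → ℝ} {u : ι → Fin d → ℝ}
    (h : st_Frame π u) {p : ℝ} (hp : 2 ≤ p) (a : Fin d → ℝ)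
    (ha : ∑ x, π x * |st_F u a x| ^ p = 1) : ∑ j, a j ^ 2 ≤ 1 := by
  rw [← st_frame_parseval' h a]
  have hy : ∀ y : ℝ, y ^ 2 ≤ (2 / p) * |y| ^ p + (1 - 2 / p) := by
    intro y
    have hp0 : 0 < p := by linarith
    have h1 := Real.geom_mean_le_arith_mean2_weighted (w₁ := 2 / p) (w₂ := 1 - 2 / p)
      (p₁ := |y| ^ p) (p₂ := 1) (by positivity)
      (by rw [sub_nonneg, div_le_one hp0]; exact hp)
      (Real.rpow_nonneg (abs_nonneg _) _) (by norm_num) (by ring)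
    rw [Real.one_rpow, mul_one, ← Real.rpow_mul (abs_nonneg _), mul_div_cancel₀ _ hp0.ne', mul_one] at h1
    rw [← sq_abs]
    exact_mod_cast h1
  calc ∑ x, π x * st_F u a x ^ 2
      ≤ ∑ x, ((2 / p) * (π x * |st_F u a x| ^ p) + π x * (1 - 2 / p)) := by
        refine Finset.sum_le_sum fun x _ => ?_
        have := mul_le_mul_of_nonneg_left (hy (st_F u a x)) (h.nonneg x)
        linarith
    _ = 1 := by
        rw [Finset.sum_add_distrib, ← Finset.mul_sum, ← Finset.sum_mul, ha, h.one]; ring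

lemma st_frame_low {ι : Type*} [Fintype ι] {d : ℕ} {π : ι → ℝ} {u : ι → Fin d → ℝ}
    (h : st_Frame π u) {p : ℝ} (hp : 1 ≤ p) (hp2 : p < 2) (a : Fin d → ℝ)
    (ha : ∑ x, π x * |st_F u a x| ^ p = 1) :
    (∀ x, |st_F u a x| ^ p ≤ d) ∧ (∑ j, a j ^ 2 ≤ d) := by
  classical
  have hne : Nonempty ι := by
    by_contra hcon
    rw [not_nonempty_iff] at hcon
    simp at ha
  obtain ⟨x0, hx0⟩ := Finite.exists_max (fun x => |st_F u a x|)
  set m := |st_F u a x0| with hm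
  have hm0 : 0 ≤ m := abs_nonneg _
  have hmpos : 0 < m := by
    rcases hm0.eq_or_lt with h0 | h0
    · exfalso
      have : ∀ x, |st_F u a x| ^ p = 0 := by
        intro x
        have : |st_F u a x| = 0 := le_antisymm ((hx0 x).trans h0.symm.le) (abs_nonneg _)
        rw [this, Real.zero_rpow (by linarith)]
      simp [this] at ha
    · exact h0
  have h1 : ∑ j, a j ^ 2 ≤ m ^ (2 - p) := by
    rw [← st_frame_parseval' h a]
    calc ∑ x, π x * st_F u a x ^ 2 ≤ ∑ x, m ^ (2 - p) * (π x * |st_F u a x| ^ p) := by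
          refine Finset.sum_le_sum fun x _ => ?_
          have h2 : st_F u a x ^ 2 ≤ m ^ (2 - p) * |st_F u a x| ^ p := by
            rcases (abs_nonneg (st_F u a x)).eq_or_lt with h0 | h0
            · have : st_F u a x = 0 := abs_eq_zero.mp h0.symm
              rw [this]; simp [Real.zero_rpow (by linarith : p ≠ 0)]
            · have : st_F u a x ^ 2 = |st_F u a x| ^ (2 - p) * |st_F u a x| ^ p := by
                rw [← Real.rpow_add h0, sub_add_cancel, ← sq_abs]; norm_cast
              rw [this]
              exact mul_le_mul_of_nonneg_right
                (Real.rpow_le_rpow h0.le (hx0 x) (by linarith)) (Real.rpow_nonneg h0.le _)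
          have := mul_le_mul_of_nonneg_left h2 (h.nonneg x)
          linarith
      _ = m ^ (2 - p) := by rw [← Finset.mul_sum, ha, mul_one]
  have h2 : m ^ 2 ≤ d * m ^ (2 - p) := by
    have := st_frame_cs h a x0
    rw [hm, sq_abs]
    exact this.trans (mul_le_mul_of_nonneg_left h1 (by positivity))
  have h3 : m ^ p ≤ d := by
    have e : m ^ 2 = m ^ p * m ^ (2 - p) := by
      rw [← Real.rpow_add hmpos, add_sub_cancel]; norm_cast
    rw [e] at h2
    exact le_of_mul_le_mul_right h2 (Real.rpow_pos_of_pos hmpos _)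
  refine ⟨fun x => (Real.rpow_le_rpow (abs_nonneg _) (hx0 x) (by linarith)).trans h3, h1.trans ?_⟩
  have hd1 : (1 : ℝ) ≤ d := by
    have : 0 < m ^ p := Real.rpow_pos_of_pos hmpos _
    have : (0 : ℝ) < d := by linarith
    exact_mod_cast Nat.pos_of_ne_zero (by rintro rfl; simp at this)
  by_cases hm1 : m ≤ 1
  · exact (Real.rpow_le_one hm0 hm1 (by linarith)).trans hd1
  · push Not at hm1
    exact (Real.rpow_le_rpow_of_exponent_le hm1.le (by linarith)).trans h3

lemma st_frame_any {ι : Type*} [Fintype ι] {d : ℕ} {π : ι → ℝ} {u : ι → Fin d → ℝ}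
    (h : st_Frame π u) {p : ℝ} (hp : 1 ≤ p) (hd : 1 ≤ d) (a : Fin d → ℝ)
    (ha : ∑ x, π x * |st_F u a x| ^ p = 1) : ∑ j, a j ^ 2 ≤ d := by
  rcases lt_or_ge p 2 with h2 | h2
  · exact (st_frame_low h hp h2 a ha).2
  · exact (st_frame_high h h2 a ha).trans (by exact_mod_cast hd)

lemma st_exists_S (R : ℝ) (hR : 1 ≤ R) :
    ∃ S : ℕ, st_t S ≤ R ∧ R < 2 * st_t S ∧ (S : ℝ) + 1 ≤ 4 * R := by
  obtain ⟨n, h1, h2⟩ := exists_nat_pow_near (x := 4 * R) (y := 2) (by linarith) (by norm_num)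
  refine ⟨n, ?_, ?_, ?_⟩
  · unfold st_t; linarith
  · unfold st_t; rw [pow_succ] at h2; linarith
  · refine le_trans ?_ h1
    have : n + 1 ≤ 2 ^ n := Nat.lt_two_pow_self
    exact_mod_cast this

lemma st_core_approx {ι E : Type*} [Fintype ι] [DecidableEq ι] [Fintype E] {d : ℕ}
    (u : ι → Fin d → ℝ) (π g : ι → ℝ)
    (hπ : ∀ x, 0 ≤ π x) (hπ1 : ∑ x, π x = 1) (hg : ∀ x, 0 ≤ g x) (hg1 : ∑ x, π x * g x ≤ 1)
    (p : ℝ) (hp : 1 ≤ p) (S : ℕ)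
    (M : ℕ) (hM : 0 < M) (hE : S + 1 ≤ Fintype.card E) (h : ℕ → List E → ι → ℝ) (n : ℕ → ℝ)
    (hn : ∑ s ∈ Finset.range (S + 1), st_t s ^ p * (16 * 2 ^ p *
            ((n s + 2) * Real.log (2 * Fintype.card E))) ≤ M)
    (hgood : ∀ a : Fin d → ℝ, ∑ x, π x * |st_F u a x| ^ p = 1 →
        (∀ x, |st_F u a x| < 2 * st_t S) ∧
        (∀ s, s ≤ S → ∃ c : List E, (c.length : ℝ) ≤ n s ∧
          ∀ x, |st_F u a x - h s c x| ≤ st_t s / 4)) :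
    ∃ ξ : Fin M → ι, (∑ i, g (ξ i) ≤ 4 * M) ∧
      ∀ a : Fin d → ℝ, M * ∑ x, π x * |st_F u a x| ^ p
        ≤ (32 * 2 ^ p * 2 ^ p) * ∑ i, |st_F u a (ξ i)| ^ p := by
  classical
  refine st_core_of_lists u π g hπ hπ1 hg hg1 p hp S M hM hE
    (fun s c => Finset.univ.filter fun x => 3 / 4 * st_t s ≤ |h s c x|) ?_
  intro a ha
  obtain ⟨h1, h2⟩ := hgood a ha
  refine ⟨h1, ?_⟩
  choose! c hc1 hc2 using h2
  refine ⟨c, ∅, ?_, ?_, by simp, ?_⟩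
  · intro s hs x hx
    simp only [Finset.mem_filter, Finset.mem_univ, true_and] at hx
    have h3 := hc2 s hs x
    have h4 := abs_sub_abs_le_abs_sub (h s (c s) x) (st_F u a x)
    rw [abs_sub_comm] at h4
    linarith
  · intro s hs x _ hx _
    simp only [Finset.mem_filter, Finset.mem_univ, true_and]
    have h3 := hc2 s hs x
    have h4 := abs_sub_abs_le_abs_sub (st_F u a x) (h s (c s) x)
    linarith
  · refine le_trans (Finset.sum_le_sum fun s hs => ?_) hn
    have hs' : s ≤ S := by simpa [Nat.lt_succ_iff] using hs
    have := Real.rpow_pos_of_pos (st_t_pos s) p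
    have h6 := hc1 s hs'
    have he1 : (1 : ℝ) ≤ Fintype.card E := by exact_mod_cast (by omega : 1 ≤ Fintype.card E)
    have hlog : 0 ≤ Real.log (2 * Fintype.card E) := Real.log_nonneg (by linarith)
    gcongr

lemma st_core_crude (p : ℝ) (hp : 1 ≤ p) : ∃ C : ℝ, 0 < C ∧
    ∀ {ι : Type} [Fintype ι] [DecidableEq ι] {d : ℕ} (u : ι → Fin d → ℝ) (π g : ι → ℝ),
    1 ≤ d → st_Frame π u → (∀ x, 0 ≤ g x) → (∑ x, π x * g x ≤ 1) →
    ∀ M : ℕ, C * ((d : ℝ) ^ p * d ^ 3) ≤ M →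
    ∃ ξ : Fin M → ι, (∑ i, g (ξ i) ≤ 4 * M) ∧
      ∀ a : Fin d → ℝ, M * ∑ x, π x * |st_F u a x| ^ p
        ≤ (32 * 2 ^ p * 2 ^ p) * ∑ i, |st_F u a (ξ i)| ^ p := by
  have h2p : (0 : ℝ) < 2 ^ p := Real.rpow_pos_of_pos (by norm_num) p
  refine ⟨2 * (16 * 2 ^ p * (3 * 66)), by positivity, ?_⟩
  intro ι _ _ d u π g hd hfr hg hg1 M hM
  have hd1 : (1 : ℝ) ≤ d := by exact_mod_cast hd
  have hdp : (0 : ℝ) < (d : ℝ) ^ p := Real.rpow_pos_of_pos (by linarith) p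
  obtain ⟨S, hS1, hS2, hS3⟩ := st_exists_S d hd1
  have hMr : (0 : ℝ) < M := lt_of_lt_of_le (by positivity) hM
  have hE : S + 1 ≤ Fintype.card (Fin (32 * d ^ 2 + 1)) := by
    rw [Fintype.card_fin]
    have : S + 1 ≤ 4 * d := by exact_mod_cast hS3
    nlinarith
  set δ : ℝ := 1 / (16 * d) with hδ
  have hδ0 : 0 < δ := by positivity
  refine st_core_approx (E := Fin (32 * d ^ 2 + 1)) u π g hfr.nonneg hfr.one hg hg1 p hp S M
    (by exact_mod_cast hMr) hE
    (fun _ c x => st_F u (fun j => δ * (((c.getD (j : ℕ) 0 : Fin (32 * d ^ 2 + 1)) : ℕ) - 16 * d ^ 2)) x)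
    (fun _ => d) ?_ ?_
  · rw [← Finset.sum_mul]
    rw [Fintype.card_fin]
    push_cast
    have h1 := (st_geom hp S).trans (mul_le_mul_of_nonneg_left
      (Real.rpow_le_rpow (st_t_pos S).le hS1 (by linarith : 0 ≤ p)) (by norm_num : (0:ℝ) ≤ 2))
    have h2 : Real.log (2 * (32 * d ^ 2 + 1)) ≤ 66 * d ^ 2 := by
      have := Real.log_le_sub_one_of_pos (by positivity : (0 : ℝ) < 2 * (32 * d ^ 2 + 1))
      nlinarith
    have h20 : 0 ≤ Real.log (2 * (32 * (d : ℝ) ^ 2 + 1)) := Real.log_nonneg (by nlinarith)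
    have h3 : (d : ℝ) + 2 ≤ 3 * d := by linarith
    calc _ ≤ (2 * (d : ℝ) ^ p) * (16 * 2 ^ p * ((3 * d) * (66 * d ^ 2))) := by gcongr
      _ = 2 * (16 * 2 ^ p * (3 * 66)) * ((d : ℝ) ^ p * d ^ 3) := by ring
      _ ≤ M := hM
  · intro a ha
    have hna := st_frame_any hfr hp hd a ha
    constructor
    · intro x
      refine lt_of_le_of_lt ?_ hS2
      apply abs_le_of_sq_le_sq' _ (by linarith) |> abs_le.mpr
      have := st_frame_cs hfr a x
      nlinarith
    · intro s _
      have haj : ∀ j, |a j| ≤ d := by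
        intro j
        apply abs_le_of_sq_le_sq' _ (by linarith) |> abs_le.mpr
        have := Finset.single_le_sum (f := fun j => a j ^ 2) (fun j _ => sq_nonneg _) (Finset.mem_univ j)
        nlinarith
      have hk : ∀ j, ∃ k : Fin (32 * d ^ 2 + 1), |a j - δ * ((k : ℕ) - 16 * d ^ 2)| ≤ δ := by
        intro j
        set z := a j / δ + 16 * d ^ 2 with hz
        have hb := abs_le.mp (haj j)
        have hz1 : a j / δ = 16 * d * a j := by rw [hδ]; field_simp
        have hz0 : 0 ≤ z := by rw [hz, hz1]; nlinarith
        have hz2 : z ≤ 32 * d ^ 2 := by rw [hz, hz1]; nlinarith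
        have hf := Nat.floor_le hz0
        have hf2 := Nat.lt_floor_add_one z
        refine ⟨⟨⌊z⌋₊, ?_⟩, ?_⟩
        · have : ⌊z⌋₊ ≤ 32 * d ^ 2 := by
            have := hf.trans hz2
            exact_mod_cast this
          omega
        · have e : a j - δ * ((⌊z⌋₊ : ℝ) - 16 * d ^ 2) = δ * (z - ⌊z⌋₊) := by
            rw [hz]; field_simp; ring
          simp only [e]
          rw [abs_mul, abs_of_pos hδ0, abs_of_nonneg (by linarith)]
          nlinarith
      choose k hk using hk
      refine ⟨List.ofFn k, by simp, ?_⟩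
      intro x
      have hdec : ∀ j : Fin d, (List.ofFn k).getD (j : ℕ) 0 = k j := by
        intro j; simp
      simp only [hdec]
      have e : st_F u a x - st_F u (fun j => δ * (((k j : ℕ) : ℝ) - 16 * d ^ 2)) x
          = st_F u (fun j => a j - δ * (((k j : ℕ) : ℝ) - 16 * d ^ 2)) x := by
        unfold st_F; rw [← Finset.sum_sub_distrib]
        exact Finset.sum_congr rfl fun j _ => by ring
      rw [e]
      have h1 := st_frame_cs hfr (fun j => a j - δ * (((k j : ℕ) : ℝ) - 16 * d ^ 2)) x
      have h2 : ∑ j, (a j - δ * (((k j : ℕ) : ℝ) - 16 * d ^ 2)) ^ 2 ≤ d * δ ^ 2 := by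
        calc _ ≤ ∑ j : Fin d, δ ^ 2 := by
              refine Finset.sum_le_sum fun j _ => ?_
              rw [← sq_abs]
              exact pow_le_pow_left₀ (abs_nonneg _) (hk j) 2
          _ = _ := by simp
      have h3 : d * δ = 1 / 16 := by rw [hδ]; field_simp
      have ht : (1 : ℝ) / 4 ≤ st_t s := by
        have := st_t_mono (Nat.zero_le s)
        simpa [st_t] using this
      have : |st_F u (fun j => a j - δ * (((k j : ℕ) : ℝ) - 16 * d ^ 2)) x| ≤ 1 / 16 := by
        apply abs_le_of_sq_le_sq' _ (by norm_num) |> abs_le.mpr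
        rw [← h3]
        nlinarith
      linarith

lemma st_geom' {α : ℝ} (hα : 0 < α) (n : ℕ) :
    ∑ s ∈ Finset.range (n + 1), st_t s ^ α ≤ (2 ^ α / (2 ^ α - 1)) * st_t n ^ α := by
  have h2 : (1 : ℝ) < 2 ^ α := Real.one_lt_rpow (by norm_num) hα
  have hc : 1 ≤ (2 : ℝ) ^ α / (2 ^ α - 1) := by
    rw [le_div_iff₀ (by linarith)]; linarith
  induction n with
  | zero =>
    rw [Finset.sum_range_one]
    have : 0 < st_t 0 ^ α := Real.rpow_pos_of_pos (st_t_pos 0) α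
    nlinarith
  | succ n ih =>
    rw [Finset.sum_range_succ]
    have h1 : st_t (n + 1) ^ α = 2 ^ α * st_t n ^ α := by
      rw [st_t_succ, Real.mul_rpow (by norm_num) (st_t_pos n).le]
    have h3 : (2 : ℝ) ^ α / (2 ^ α - 1) * (2 ^ α * st_t n ^ α)
        = (2 : ℝ) ^ α / (2 ^ α - 1) * st_t n ^ α + 2 ^ α * st_t n ^ α := by
      have : (2 : ℝ) ^ α - 1 ≠ 0 := by linarith
      field_simp
      ring
    rw [h1, h3]
    linarith

/-- Vector coded by a list of signed points. -/
noncomputable def st_vec {ι : Type*} {d : ℕ} (u : ι → Fin d → ℝ) (η : ℝ) : List (ι × Bool) → Fin d → ℝ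
  | [] => fun _ => 0
  | e :: l => fun j => st_vec u η l j + (if e.2 then 1 else -1) * η * u e.1 j

lemma st_perceptron {ι : Type*} [Fintype ι] {d : ℕ} {π : ι → ℝ} {u : ι → Fin d → ℝ}
    (hfr : st_Frame π u) (hd : 1 ≤ d) (a : Fin d → ℝ) (ha : ∑ j, a j ^ 2 ≤ 1) (η : ℝ) (hη : 0 < η) :
    ∃ l : List (ι × Bool), (l.length : ℝ) ≤ d / η ^ 2 + 1 ∧
      ∀ x, |st_F u a x - st_F u (st_vec u (η / d) l) x| ≤ η := by
  have hd1 : (1 : ℝ) ≤ d := by exact_mod_cast hd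
  have key : ∀ n : ℕ, ∃ l : List (ι × Bool), l.length ≤ n ∧
      ((∀ x, |st_F u a x - st_F u (st_vec u (η / d) l) x| ≤ η) ∨
        ∑ j, (a j - st_vec u (η / d) l j) ^ 2 ≤ 1 - n * (η ^ 2 / d)) := by
    intro n
    induction n with
    | zero => exact ⟨[], by simp, Or.inr (by simpa [st_vec] using ha)⟩
    | succ n ih =>
      obtain ⟨l, hl, h⟩ := ih
      by_cases hgood : ∀ x, |st_F u a x - st_F u (st_vec u (η / d) l) x| ≤ η
      · exact ⟨l, by omega, Or.inl hgood⟩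
      have h := h.resolve_left hgood
      push Not at hgood
      obtain ⟨x, hx⟩ := hgood
      set D := st_F u a x - st_F u (st_vec u (η / d) l) x with hD
      have hDs : D = ∑ j, (a j - st_vec u (η / d) l j) * u x j := by
        rw [hD]; unfold st_F; rw [← Finset.sum_sub_distrib]
        exact Finset.sum_congr rfl fun j _ => by ring
      have main : ∀ b : Bool, (if b then (1 : ℝ) else -1) * D = |D| →
          ∃ l : List (ι × Bool), l.length ≤ n + 1 ∧
      ((∀ x, |st_F u a x - st_F u (st_vec u (η / d) l) x| ≤ η) ∨
        ∑ j, (a j - st_vec u (η / d) l j) ^ 2 ≤ 1 - ((n + 1 : ℕ) : ℝ) * (η ^ 2 / d)) := by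
        intro b hb
        refine ⟨(x, b) :: l, by simp; omega, Or.inr ?_⟩
        simp only [st_vec]
        set σ : ℝ := if b then (1 : ℝ) else -1 with hσ
        have hσ2 : σ ^ 2 = 1 := by rw [hσ]; split_ifs <;> norm_num
        have e : ∑ j, (a j - (st_vec u (η / d) l j + σ * (η / d) * u x j)) ^ 2
            = ∑ j, (a j - st_vec u (η / d) l j) ^ 2 - 2 * (η / d) * (σ * D) + (η / d) ^ 2 * d := by
          have hq : (η / d) ^ 2 * d = ∑ j, (η / d) ^ 2 * u x j ^ 2 := by
            rw [← Finset.mul_sum, hfr.sq x]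
          rw [hDs, hq]
          simp_rw [Finset.mul_sum]
          rw [← Finset.sum_sub_distrib, ← Finset.sum_add_distrib]
          refine Finset.sum_congr rfl fun j _ => ?_
          linear_combination (η / d) ^ 2 * u x j ^ 2 * hσ2
        rw [e, hb]
        have h3 : (η / d) ^ 2 * d = η ^ 2 / d := by field_simp
        have h4 : η ^ 2 / d ≤ (η / d) * |D| := by
          rw [show η ^ 2 / d = (η / d) * η by ring]
          exact mul_le_mul_of_nonneg_left hx.le (by positivity)
        rw [h3]; push_cast
        linarith
      rcases le_total 0 D with h0 | h0
      · exact main true (by simp [abs_of_nonneg h0])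
      · exact main false (by simp [abs_of_nonpos h0])
  obtain ⟨l, hl, h⟩ := key (⌊d / η ^ 2⌋₊ + 1)
  have hq : (0 : ℝ) ≤ d / η ^ 2 := by positivity
  refine ⟨l, ?_, ?_⟩
  · have h1 : (l.length : ℝ) ≤ ((⌊d / η ^ 2⌋₊ + 1 : ℕ) : ℝ) := by exact_mod_cast hl
    push_cast at h1
    have := Nat.floor_le hq
    linarith
  · rcases h with h | h
    · exact h
    · exfalso
      have h0 : 0 ≤ ∑ j, (a j - st_vec u (η / d) l j) ^ 2 := Finset.sum_nonneg fun j _ => sq_nonneg _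
      have h1 := Nat.lt_floor_add_one (d / η ^ 2)
      push_cast at h
      have h2 : (d / η ^ 2) * (η ^ 2 / d) = 1 := by field_simp
      have h3 : 0 < η ^ 2 / d := by positivity
      nlinarith

lemma st_core_high (p : ℝ) (hp : 2 < p) : ∃ C : ℝ, 0 < C ∧
    ∀ {ι : Type} [Fintype ι] [DecidableEq ι] {d : ℕ} (u : ι → Fin d → ℝ) (π g : ι → ℝ),
    1 ≤ d → st_Frame π u → (∀ x, 0 ≤ g x) → (∑ x, π x * g x ≤ 1) →
    ∀ M : ℕ, C * ((d : ℝ) ^ (p / 2) * Real.log (Fintype.card ι + d + 2)) ≤ M →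
    ∃ ξ : Fin M → ι, (∑ i, g (ξ i) ≤ 4 * M) ∧
      ∀ a : Fin d → ℝ, M * ∑ x, π x * |st_F u a x| ^ p
        ≤ (32 * 2 ^ p * 2 ^ p) * ∑ i, |st_F u a (ξ i)| ^ p := by
  have h2p : (0 : ℝ) < 2 ^ p := Real.rpow_pos_of_pos (by norm_num) p
  have h2q : (1 : ℝ) < 2 ^ (p - 2) := Real.one_lt_rpow (by norm_num) (by linarith)
  set G : ℝ := 2 ^ (p - 2) / (2 ^ (p - 2) - 1) with hG
  have hG0 : 0 < G := div_pos (by linarith) (by linarith)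
  refine ⟨16 * 2 ^ p * 4 * (16 * G + 6), by positivity, ?_⟩
  intro ι _ _ d u π g hd hfr hg hg1 M hM
  have hne : Nonempty ι := by
    by_contra hcon
    rw [not_nonempty_iff] at hcon
    have := hfr.one
    simp at this
  have hc1 : 1 ≤ Fintype.card ι := Fintype.card_pos
  have hc1r : (1 : ℝ) ≤ Fintype.card ι := by exact_mod_cast hc1
  have hd1 : (1 : ℝ) ≤ d := by exact_mod_cast hd
  have hdp : (0 : ℝ) < (d : ℝ) ^ (p / 2) := Real.rpow_pos_of_pos (by linarith) _
  set X : ℝ := Fintype.card ι + d + 2 with hX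
  have hLpos : 0 < Real.log X := Real.log_pos (by linarith)
  obtain ⟨S, hS1, hS2, hS3⟩ := st_exists_S (Real.sqrt d) (Real.one_le_sqrt.mpr hd1)
  have hMr : (0 : ℝ) < M := lt_of_lt_of_le (by positivity) hM
  have hsd : Real.sqrt d ≤ d := by
    rw [Real.sqrt_le_left (by linarith)]; nlinarith
  have hcard : Fintype.card ((ι × Bool) × Fin (4 * d)) = 8 * d * Fintype.card ι := by
    simp; ring
  have hE : S + 1 ≤ Fintype.card ((ι × Bool) × Fin (4 * d)) := by
    rw [hcard]
    have : S + 1 ≤ 4 * d := by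
      have : (S : ℝ) + 1 ≤ 4 * d := by linarith
      exact_mod_cast this
    nlinarith
  have hlog : Real.log (2 * Fintype.card ((ι × Bool) × Fin (4 * d))) ≤ 4 * Real.log X := by
    rw [hcard]; push_cast
    rw [show (4 : ℝ) * Real.log X = Real.log (X ^ 4) by rw [Real.log_pow]; norm_num]
    apply Real.log_le_log (by positivity)
    have h1 : (16 : ℝ) ≤ X ^ 2 := by nlinarith
    have h2 : (d : ℝ) * Fintype.card ι ≤ X ^ 2 := by
      rw [sq]; apply mul_le_mul <;> linarith
    calc 2 * (8 * (d : ℝ) * Fintype.card ι) = 16 * (d * Fintype.card ι) := by ring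
      _ ≤ X ^ 2 * X ^ 2 := by apply mul_le_mul h1 h2 <;> positivity
      _ = X ^ 4 := by ring
  have hlog0 : 0 ≤ Real.log (2 * Fintype.card ((ι × Bool) × Fin (4 * d))) := by
    apply Real.log_nonneg
    rw [hcard]; push_cast
    nlinarith
  refine st_core_approx (E := (ι × Bool) × Fin (4 * d)) u π g hfr.nonneg hfr.one hg hg1 p
    (by linarith) S M (by exact_mod_cast hMr) hE
    (fun s c x => st_F u (st_vec u (st_t s / 4 / d) (c.map Prod.fst)) x)
    (fun s => 16 * d / st_t s ^ 2 + 1) ?_ ?_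
  · have hterm : ∀ s ∈ Finset.range (S + 1), st_t s ^ p * (16 * 2 ^ p *
            ((16 * d / st_t s ^ 2 + 1 + 2) * Real.log (2 * Fintype.card ((ι × Bool) × Fin (4 * d)))))
        ≤ 16 * 2 ^ p * 4 * Real.log X * (16 * d * st_t s ^ (p - 2) + 3 * st_t s ^ p) := by
      intro s _
      have ht := st_t_pos s
      have htp := Real.rpow_pos_of_pos ht p
      have e : st_t s ^ p / st_t s ^ 2 = st_t s ^ (p - 2) := by
        rw [Real.rpow_sub ht]; norm_cast
      calc _ ≤ st_t s ^ p * (16 * 2 ^ p *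
            ((16 * d / st_t s ^ 2 + 1 + 2) * (4 * Real.log X))) := by gcongr
        _ = 16 * 2 ^ p * 4 * Real.log X * (16 * d * (st_t s ^ p / st_t s ^ 2) + 3 * st_t s ^ p) := by
          ring
        _ = _ := by rw [e]
    refine (Finset.sum_le_sum hterm).trans ?_
    rw [← Finset.mul_sum, Finset.sum_add_distrib, ← Finset.mul_sum, ← Finset.mul_sum]
    have g1 := st_geom' (by linarith : 0 < p - 2) S
    have g2 := st_geom (by linarith : 1 ≤ p) S
    have k1 : st_t S ^ (p - 2) ≤ (d : ℝ) ^ (p / 2 - 1) := by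
      calc st_t S ^ (p - 2) ≤ (Real.sqrt d) ^ (p - 2) :=
            Real.rpow_le_rpow (st_t_pos S).le hS1 (by linarith)
        _ = _ := by
          rw [Real.sqrt_eq_rpow, ← Real.rpow_mul (by linarith)]; congr 1; ring
    have k2 : st_t S ^ p ≤ (d : ℝ) ^ (p / 2) := by
      calc st_t S ^ p ≤ (Real.sqrt d) ^ p :=
            Real.rpow_le_rpow (st_t_pos S).le hS1 (by linarith)
        _ = _ := by
          rw [Real.sqrt_eq_rpow, ← Real.rpow_mul (by linarith)]; congr 1; ring
    have k3 : (d : ℝ) * (d : ℝ) ^ (p / 2 - 1) = (d : ℝ) ^ (p / 2) := by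
      rw [Real.rpow_sub (by linarith), Real.rpow_one]; field_simp
    calc _ ≤ 16 * 2 ^ p * 4 * Real.log X * (16 * d * (G * (d : ℝ) ^ (p / 2 - 1)) + 3 * (2 * (d : ℝ) ^ (p / 2))) := by
          gcongr
          · exact g1.trans (mul_le_mul_of_nonneg_left k1 hG0.le)
          · exact g2.trans (by linarith)
      _ = 16 * 2 ^ p * 4 * Real.log X * (16 * G * (d * (d : ℝ) ^ (p / 2 - 1)) + 6 * (d : ℝ) ^ (p / 2)) := by
          ring
      _ = 16 * 2 ^ p * 4 * (16 * G + 6) * ((d : ℝ) ^ (p / 2) * Real.log X) := by rw [k3]; ring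
      _ ≤ M := hM
  · intro a ha
    have hna := st_frame_high hfr hp.le a ha
    constructor
    · intro x
      refine lt_of_le_of_lt ?_ hS2
      apply Real.abs_le_sqrt
      have := st_frame_cs hfr a x
      nlinarith
    · intro s _
      obtain ⟨l, hl1, hl2⟩ := st_perceptron hfr hd a hna (st_t s / 4) (by have := st_t_pos s; positivity)
      refine ⟨l.map (fun e => (e, ⟨0, by omega⟩)), ?_, ?_⟩
      · rw [List.length_map]
        refine hl1.trans (le_of_eq ?_)
        have := st_t_pos s
        field_simp
        norm_num
      · intro x
        have : (l.map (fun e => (e, (⟨0, by omega⟩ : Fin (4 * d))))).map Prod.fst = l := by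
          rw [List.map_map]; simp [Function.comp_def]
        rw [this]
        exact hl2 x

lemma st_cvx {p : ℝ} (h1 : 1 < p) (h2 : p < 2) {R : ℝ} (hR : 0 < R) :
    ConvexOn ℝ (Set.Icc 0 R) (fun y : ℝ => y ^ p - (p * (p - 1) / 2 * R ^ (p - 2)) * y ^ 2) := by
  set κ := p * (p - 1) / 2 * R ^ (p - 2) with hκ
  refine convexOn_of_hasDerivWithinAt2_nonneg (convex_Icc 0 R)
    (f' := fun y => p * y ^ (p - 1) - κ * (2 * y))
    (f'' := fun y => p * ((p - 1) * y ^ (p - 2)) - κ * 2) ?_ ?_ ?_ ?_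
  · apply ContinuousOn.sub
    · exact (Real.continuous_rpow_const (by linarith)).continuousOn
    · fun_prop
  · intro x hx
    rw [interior_Icc] at hx
    apply HasDerivAt.hasDerivWithinAt
    have a1 := Real.hasDerivAt_rpow_const (x := x) (p := p) (Or.inl hx.1.ne')
    have a2 := (hasDerivAt_pow 2 x).const_mul κ
    have a3 := a1.sub a2
    simp only [Nat.cast_ofNat, Nat.add_one_sub_one, pow_one] at a3
    exact a3
  · intro x hx
    rw [interior_Icc] at hx
    apply HasDerivAt.hasDerivWithinAt
    have a1 := (Real.hasDerivAt_rpow_const (x := x) (p := p - 1) (Or.inl hx.1.ne')).const_mul p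
    have a2 := ((hasDerivAt_id x).const_mul 2).const_mul κ
    have a3 := a1.sub a2
    rw [show p - 1 - 1 = p - 2 by ring, mul_one] at a3
    exact a3
  · intro x hx
    rw [interior_Icc] at hx
    have : R ^ (p - 2) ≤ x ^ (p - 2) :=
      Real.rpow_le_rpow_of_nonpos hx.1 hx.2.le (by linarith)
    have hpp : 0 < p * (p - 1) := by nlinarith
    rw [hκ]
    nlinarith

lemma st_conv_pos {p : ℝ} (h1 : 1 < p) (h2 : p < 2) {m t : ℝ} (hm : 0 ≤ m) (ht : 0 ≤ t) :
    p * (p - 1) * t ^ 2 * (m + t) ^ (p - 2) ≤ (m + t) ^ p + |m - t| ^ p - 2 * m ^ p := by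
  rcases (add_nonneg hm ht).eq_or_lt with h0 | hR
  · have hm0 : m = 0 := by linarith
    have ht0 : t = 0 := by linarith
    subst hm0; subst ht0
    simp [Real.zero_rpow (by linarith : p ≠ 0)]
  have hc := st_cvx h1 h2 hR
  set R := m + t with hRd
  have hpp : 0 < p * (p - 1) := by nlinarith
  have hpp2 : p * (p - 1) ≤ 2 := by nlinarith
  have hR2 : 0 < R ^ (p - 2) := Real.rpow_pos_of_pos hR _
  set κ := p * (p - 1) / 2 * R ^ (p - 2) with hκ
  have hcc : ∀ x, x ∈ Set.Icc 0 R → ∀ y, y ∈ Set.Icc 0 R → ∀ a b : ℝ, 0 ≤ a → 0 ≤ b → a + b = 1 →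
      (a • x + b • y) ^ p - κ * (a • x + b • y) ^ 2 ≤ a • (x ^ p - κ * x ^ 2) + b • (y ^ p - κ * y ^ 2) :=
    fun x hx y hy a b ha hb hab => hc.2 hx hy ha hb hab
  rcases le_total t m with h | h
  · rw [abs_of_nonneg (by linarith)]
    have := hcc R ⟨hR.le, le_rfl⟩ (m - t) ⟨by linarith, by linarith⟩
      (1 / 2) (1 / 2) (by norm_num) (by norm_num) (by norm_num)
    simp only [smul_eq_mul] at this
    rw [show 1 / 2 * R + 1 / 2 * (m - t) = m by rw [hRd]; ring] at this
    have e : κ * R ^ 2 + κ * (m - t) ^ 2 - 2 * (κ * m ^ 2) = p * (p - 1) * t ^ 2 * R ^ (p - 2) := by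
      have : κ * R ^ 2 + κ * (m - t) ^ 2 - 2 * (κ * m ^ 2) = 2 * κ * t ^ 2 := by rw [hRd]; ring
      rw [this, hκ]; ring
    linarith
  · rw [abs_of_nonpos (by linarith), neg_sub]
    have := hcc R ⟨hR.le, le_rfl⟩ (t - m) ⟨by linarith, by linarith⟩
      (1 / 2) (1 / 2) (by norm_num) (by norm_num) (by norm_num)
    simp only [smul_eq_mul] at this
    rw [show 1 / 2 * R + 1 / 2 * (t - m) = t by rw [hRd]; ring] at this
    have htp : 0 < t := by linarith
    have h3 := hcc 0 ⟨le_rfl, hR.le⟩ t ⟨ht, by linarith⟩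
      (1 - m / t) (m / t) (by rw [sub_nonneg, div_le_one htp]; exact h) (by positivity) (by ring)
    simp only [smul_eq_mul, mul_zero, zero_add] at h3
    rw [div_mul_cancel₀ _ htp.ne'] at h3
    rw [Real.zero_rpow (by linarith : p ≠ 0)] at h3
    have h4 : 0 ≤ t ^ p - κ * t ^ 2 := by
      have e1 : t ^ p = t ^ (p - 2) * t ^ 2 := by
        rw [← Real.rpow_natCast t 2, ← Real.rpow_add htp]; norm_num
      have e2 : R ^ (p - 2) ≤ t ^ (p - 2) :=
        Real.rpow_le_rpow_of_nonpos htp (by linarith) (by linarith)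
      rw [e1, ← sub_mul]
      apply mul_nonneg _ (sq_nonneg _)
      rw [hκ]; nlinarith
    have h5 : m / t * (t ^ p - κ * t ^ 2) ≤ 1 * (t ^ p - κ * t ^ 2) :=
      mul_le_mul_of_nonneg_right (by rw [div_le_one htp]; exact h) h4
    have e : κ * R ^ 2 + κ * (t - m) ^ 2 - 2 * (κ * m ^ 2) = p * (p - 1) * t ^ 2 * R ^ (p - 2) := by
      have : κ * R ^ 2 + κ * (t - m) ^ 2 - 2 * (κ * m ^ 2) = 2 * κ * t ^ 2 := by rw [hRd]; ring
      rw [this, hκ]; ring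
    norm_num at h3
    linarith

lemma st_conv {p : ℝ} (h1 : 1 < p) (h2 : p < 2) (m t : ℝ) :
    p * (p - 1) * t ^ 2 * (|m| + |t|) ^ (p - 2) ≤ |m + t| ^ p + |m - t| ^ p - 2 * |m| ^ p := by
  have := st_conv_pos h1 h2 (abs_nonneg m) (abs_nonneg t)
  rw [sq_abs] at this
  have e : (|m| + |t|) ^ p + |(|m| - |t|)| ^ p = |m + t| ^ p + |m - t| ^ p := by
    rcases le_total 0 m with hm | hm <;> rcases le_total 0 t with ht | ht
    · rw [abs_of_nonneg hm, abs_of_nonneg ht, abs_of_nonneg (by linarith : 0 ≤ m + t)]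
    · rw [abs_of_nonneg hm, abs_of_nonpos ht, abs_of_nonneg (by linarith : 0 ≤ m - t),
        sub_neg_eq_add, ← sub_eq_add_neg, add_comm]
    · rw [abs_of_nonpos hm, abs_of_nonneg ht, abs_of_nonpos (by linarith : m - t ≤ 0),
        show -m - t = -(m + t) by ring, abs_neg, add_comm, show -m + t = -(m - t) by ring]
    · rw [abs_of_nonpos hm, abs_of_nonpos ht, abs_of_nonpos (by linarith : m + t ≤ 0),
        show -m - -t = -(m - t) by ring, abs_neg, show -m + -t = -(m + t) by ring]
  linarith

lemma st_young {p : ℝ} (h1 : 1 < p) (h2 : p < 2) : ∃ C : ℝ, 1 ≤ C ∧ ∀ k h D : ℝ,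
    k * D - p * (p - 1) / 4 * D ^ 2 * (|h| + |D|) ^ (p - 2)
      ≤ C * (k ^ 2 * |h| ^ (2 - p) + |k| ^ (p / (p - 1))) := by
  set c := p * (p - 1) / 4 with hc
  have hc0 : 0 < c := by rw [hc]; nlinarith
  set A := (2 / c) ^ (1 / (p - 1)) with hA
  have hA0 : 0 < A := Real.rpow_pos_of_pos (by positivity) _
  have h12 : (1 / 2 : ℝ) ≤ 2 ^ (p - 2) := by
    calc (1 / 2 : ℝ) = 2 ^ (-1 : ℝ) := by rw [Real.rpow_neg_one]; norm_num
      _ ≤ 2 ^ (p - 2) := Real.rpow_le_rpow_of_exponent_le (by norm_num) (by linarith)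
  refine ⟨1 + 1 / (2 * c) + A, by have : 0 < 1 / (2 * c) := by positivity
                                  linarith, ?_⟩
  intro k h D
  have n1 : 0 ≤ k ^ 2 * |h| ^ (2 - p) := mul_nonneg (sq_nonneg _) (Real.rpow_nonneg (abs_nonneg _) _)
  have n2 : 0 ≤ |k| ^ (p / (p - 1)) := Real.rpow_nonneg (abs_nonneg _) _
  have n3 : 0 < 1 / (2 * c) := by positivity
  rcases eq_or_ne D 0 with hD | hD
  · subst hD; simp; positivity
  have hDp : 0 < |D| := abs_pos.mpr hD
  rcases le_or_gt |D| |h| with hh | hh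
  · have hhp : 0 < |h| := by linarith
    set B := |h| ^ (2 - p) with hB
    have hB0 : 0 < B := Real.rpow_pos_of_pos hhp _
    have e1 : 1 / 2 * (1 / B) ≤ (|h| + |D|) ^ (p - 2) := by
      calc 1 / 2 * (1 / B) ≤ 2 ^ (p - 2) * |h| ^ (p - 2) := by
            have : 1 / B = |h| ^ (p - 2) := by
              rw [hB, one_div, ← Real.rpow_neg hhp.le]; congr 1; ring
            rw [this]
            exact mul_le_mul_of_nonneg_right h12 (Real.rpow_nonneg hhp.le _)
        _ = (2 * |h|) ^ (p - 2) := (Real.mul_rpow (by norm_num) hhp.le).symm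
        _ ≤ _ := Real.rpow_le_rpow_of_nonpos (by positivity) (by linarith) (by linarith)
    have e2 : k * D - c * D ^ 2 * (1 / 2 * (1 / B)) ≤ 1 / (2 * c) * (k ^ 2 * B) := by
      have h3 : 0 ≤ (c * D - k * B) ^ 2 / (2 * c * B) := by positivity
      have h4 : (c * D - k * B) ^ 2 / (2 * c * B)
          = c * D ^ 2 * (1 / 2 * (1 / B)) - k * D + 1 / (2 * c) * (k ^ 2 * B) := by
        field_simp; ring
      linarith
    have e3 := mul_le_mul_of_nonneg_left e1 (by positivity : 0 ≤ c * D ^ 2)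
    have n4 : 0 ≤ (1 + A) * (k ^ 2 * B) := by positivity
    have n5 : 0 ≤ (1 + 1 / (2 * c) + A) * |k| ^ (p / (p - 1)) := by positivity
    nlinarith
  · have e1 : 1 / 2 * |D| ^ (p - 2) ≤ (|h| + |D|) ^ (p - 2) := by
      calc 1 / 2 * |D| ^ (p - 2) ≤ 2 ^ (p - 2) * |D| ^ (p - 2) :=
            mul_le_mul_of_nonneg_right h12 (Real.rpow_nonneg hDp.le _)
        _ = (2 * |D|) ^ (p - 2) := (Real.mul_rpow (by norm_num) hDp.le).symm
        _ ≤ _ := Real.rpow_le_rpow_of_nonpos (by positivity) (by linarith) (by linarith)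
    have e2 : D ^ 2 * |D| ^ (p - 2) = |D| * |D| ^ (p - 1) := by
      rw [← sq_abs, ← Real.rpow_natCast |D| 2, ← Real.rpow_add hDp, ← Real.rpow_one_add' hDp.le (by linarith)]
      congr 1; norm_num
    have e3 := mul_le_mul_of_nonneg_left e1 (by positivity : 0 ≤ c * D ^ 2)
    have e4 : k * D ≤ |k| * |D| := by rw [← abs_mul]; exact le_abs_self _
    have main : |k| * |D| - c / 2 * (|D| * |D| ^ (p - 1)) ≤ A * |k| ^ (p / (p - 1)) := by
      rcases le_or_gt |k| (c / 2 * |D| ^ (p - 1)) with hk | hk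
      · have := mul_le_mul_of_nonneg_right hk hDp.le
        have : 0 ≤ A * |k| ^ (p / (p - 1)) := by positivity
        linarith
      · have hkp : 0 < |k| := lt_of_le_of_lt (by positivity) hk
        have h3 : |D| ^ (p - 1) ≤ 2 / c * |k| := by
          rw [div_mul_eq_mul_div, le_div_iff₀ hc0]; linarith
        have h4 : |D| ≤ A * |k| ^ (1 / (p - 1)) := by
          have := Real.rpow_le_rpow (Real.rpow_nonneg hDp.le _) h3 (by
            apply div_nonneg <;> linarith : 0 ≤ 1 / (p - 1))
          rw [← Real.rpow_mul hDp.le, mul_one_div_cancel (by linarith : p - 1 ≠ 0), Real.rpow_one,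
            Real.mul_rpow (by positivity) hkp.le] at this
          exact this
        have h5 : |k| * |k| ^ (1 / (p - 1)) = |k| ^ (p / (p - 1)) := by
          have hne : p - 1 ≠ 0 := by linarith
          have hpos : 0 < p - 1 := by linarith
          rw [← Real.rpow_one_add' hkp.le (by positivity)]
          congr 1; field_simp; ring
        have h6 := mul_le_mul_of_nonneg_left h4 hkp.le
        have h7 : 0 ≤ c / 2 * (|D| * |D| ^ (p - 1)) := by positivity
        calc _ ≤ |k| * (A * |k| ^ (1 / (p - 1))) := by linarith
          _ = A * (|k| * |k| ^ (1 / (p - 1))) := by ring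
          _ = _ := by rw [h5]
    have n4 : 0 ≤ (1 + 1 / (2 * c) + A) * (k ^ 2 * |h| ^ (2 - p)) := by positivity
    have n5 : 0 ≤ (1 + 1 / (2 * c)) * |k| ^ (p / (p - 1)) := by positivity
    have e5 : c * D ^ 2 * (1 / 2 * |D| ^ (p - 2)) = c / 2 * (|D| * |D| ^ (p - 1)) := by
      rw [← e2]; ring
    nlinarith

/-- Dot product. -/
def st_dot {d : ℕ} (a b : Fin d → ℝ) : ℝ := ∑ j, a j * b j

/-- The p-energy. -/
noncomputable def st_Phi {ι : Type*} [Fintype ι] {d : ℕ} (π : ι → ℝ) (u : ι → Fin d → ℝ) (p : ℝ)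
    (b : Fin d → ℝ) : ℝ := ∑ x, π x * |st_F u b x| ^ p

/-- Being a maximizer of the dual problem. -/
def st_IsMx {ι : Type*} [Fintype ι] {d : ℕ} (π : ι → ℝ) (u : ι → Fin d → ℝ) (p : ℝ)
    (z b : Fin d → ℝ) : Prop :=
  ∑ j, b j ^ 2 ≤ d ∧ ∀ b' : Fin d → ℝ, ∑ j, b' j ^ 2 ≤ d →
    st_dot z b' - st_Phi π u p b' ≤ st_dot z b - st_Phi π u p b

/-- A maximizer. -/
noncomputable def st_bm {ι : Type*} [Fintype ι] {d : ℕ} (π : ι → ℝ) (u : ι → Fin d → ℝ) (p : ℝ)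
    (z : Fin d → ℝ) : Fin d → ℝ := Classical.epsilon (st_IsMx π u p z)

/-- Dual potential. -/
noncomputable def st_G {ι : Type*} [Fintype ι] {d : ℕ} (π : ι → ℝ) (u : ι → Fin d → ℝ) (p : ℝ)
    (z : Fin d → ℝ) : ℝ := st_dot z (st_bm π u p z) - st_Phi π u p (st_bm π u p z)

lemma st_bm_spec {ι : Type*} [Fintype ι] {d : ℕ} (π : ι → ℝ) (u : ι → Fin d → ℝ) {p : ℝ}
    (hp : 0 ≤ p) (z : Fin d → ℝ) : st_IsMx π u p z (st_bm π u p z) := by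
  apply Classical.epsilon_spec (p := st_IsMx π u p z)
  have hcl : IsClosed {b : Fin d → ℝ | ∑ j, b j ^ 2 ≤ d} :=
    isClosed_le (by fun_prop) continuous_const
  have hcomp : IsCompact {b : Fin d → ℝ | ∑ j, b j ^ 2 ≤ d} := by
    refine IsCompact.of_isClosed_subset
      (isCompact_univ_pi fun _ : Fin d => isCompact_Icc (a := -(d : ℝ)) (b := d)) hcl ?_
    intro b hb j _
    have hd : (1 : ℝ) ≤ d := by
      have : 0 < d := Fin.pos j
      exact_mod_cast this
    have h1 := Finset.single_le_sum (f := fun j => b j ^ 2) (fun j _ => sq_nonneg _) (Finset.mem_univ j)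
    have h2 : ∑ j, b j ^ 2 ≤ d := hb
    exact abs_le_of_sq_le_sq' (by nlinarith) (by linarith)
  have hcont : Continuous fun b : Fin d → ℝ => st_dot z b - st_Phi π u p b := by
    unfold st_dot st_Phi st_F
    apply Continuous.sub
    · fun_prop
    · refine continuous_finsetSum _ fun x _ => continuous_const.mul ?_
      exact (Real.continuous_rpow_const hp).comp (continuous_abs.comp (by fun_prop))
  obtain ⟨b, hb, hmax⟩ := hcomp.exists_isMaxOn ⟨fun _ => 0, by simp⟩ hcont.continuousOn
  exact ⟨b, hb, fun b' hb' => hmax hb'⟩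

lemma st_F_add {ι : Type*} {d : ℕ} (u : ι → Fin d → ℝ) (a b : Fin d → ℝ) (x : ι) :
    st_F u (fun j => a j + b j) x = st_F u a x + st_F u b x := by
  unfold st_F; rw [← Finset.sum_add_distrib]; exact Finset.sum_congr rfl fun j _ => by ring

lemma st_F_sub {ι : Type*} {d : ℕ} (u : ι → Fin d → ℝ) (a b : Fin d → ℝ) (x : ι) :
    st_F u (fun j => a j - b j) x = st_F u a x - st_F u b x := by
  unfold st_F; rw [← Finset.sum_sub_distrib]; exact Finset.sum_congr rfl fun j _ => by ring

lemma st_G_step {ι : Type*} [Fintype ι] {d : ℕ} {π : ι → ℝ} {u : ι → Fin d → ℝ}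
    (hfr : st_Frame π u) {p : ℝ} (h1 : 1 < p) (h2 : p < 2) {C : ℝ}
    (hC : ∀ k h D : ℝ, k * D - p * (p - 1) / 4 * D ^ 2 * (|h| + |D|) ^ (p - 2)
      ≤ C * (k ^ 2 * |h| ^ (2 - p) + |k| ^ (p / (p - 1)))) (z w : Fin d → ℝ) :
    st_G π u p (fun j => z j + w j) ≤ st_G π u p z + st_dot w (st_bm π u p z)
      + C * ∑ y, π y * (st_F u w y ^ 2 * |st_F u (st_bm π u p z) y| ^ (2 - p)
        + |st_F u w y| ^ (p / (p - 1))) := by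
  set b := st_bm π u p z with hb
  set b' := st_bm π u p (fun j => z j + w j) with hb'
  have sb := st_bm_spec π u (by linarith : 0 ≤ p) z
  have sb' := st_bm_spec π u (by linarith : 0 ≤ p) (fun j => z j + w j)
  rw [← hb] at sb
  rw [← hb'] at sb'
  set mid : Fin d → ℝ := fun j => (b j + b' j) / 2 with hmid
  have hmid2 : ∑ j, mid j ^ 2 ≤ d := by
    have : ∑ j, mid j ^ 2 ≤ ∑ j, (b j ^ 2 + b' j ^ 2) / 2 := by
      refine Finset.sum_le_sum fun j _ => ?_
      simp only [hmid]; nlinarith [sq_nonneg (b j - b' j)]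
    rw [← Finset.sum_div, Finset.sum_add_distrib] at this
    have := sb.1
    have := sb'.1
    linarith
  have hA := sb.2 mid hmid2
  have hdm : st_dot z mid = (st_dot z b + st_dot z b') / 2 := by
    unfold st_dot
    rw [← Finset.sum_add_distrib, Finset.sum_div]
    exact Finset.sum_congr rfl fun j _ => by simp only [hmid]; ring
  have hFm : ∀ x, st_F u mid x = (st_F u b x + st_F u b' x) / 2 := by
    intro x; unfold st_F
    rw [← Finset.sum_add_distrib, Finset.sum_div]
    exact Finset.sum_congr rfl fun j _ => by simp only [hmid]; ring
  have hgap : ∀ x, p * (p - 1) / 4 * (st_F u b' x - st_F u b x) ^ 2 *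
      (|st_F u b x| + |st_F u b' x - st_F u b x|) ^ (p - 2)
      ≤ |st_F u b x| ^ p + |st_F u b' x| ^ p - 2 * |st_F u mid x| ^ p := by
    intro x
    have hh := st_conv h1 h2 (st_F u mid x) ((st_F u b' x - st_F u b x) / 2)
    rw [show st_F u mid x + (st_F u b' x - st_F u b x) / 2 = st_F u b' x by rw [hFm]; ring,
      show st_F u mid x - (st_F u b' x - st_F u b x) / 2 = st_F u b x by rw [hFm]; ring] at hh
    rcases eq_or_ne (st_F u b' x - st_F u b x) 0 with h0 | h0
    · rw [h0] at hh ⊢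
      simp at hh ⊢
      linarith
    have hDp := abs_pos.mpr h0
    set D := st_F u b' x - st_F u b x with hD
    have hle : |st_F u mid x| + |D / 2| ≤ |st_F u b x| + |D| := by
      have e : st_F u mid x = st_F u b x + D / 2 := by rw [hFm, hD]; ring
      have := abs_add_le (st_F u b x) (D / 2)
      rw [e]
      have e2 : |D / 2| = |D| / 2 := by rw [abs_div]; norm_num
      rw [e2] at this ⊢
      linarith
    have hpos : 0 < |st_F u mid x| + |D / 2| := by
      have e2 : |D / 2| = |D| / 2 := by rw [abs_div]; norm_num
      rw [e2]; positivity
    have hr := Real.rpow_le_rpow_of_nonpos hpos hle (by linarith : p - 2 ≤ 0)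
    have hnn : 0 ≤ p * (p - 1) / 4 * D ^ 2 := by
      have : 0 < p * (p - 1) := by nlinarith
      positivity
    have := mul_le_mul_of_nonneg_left hr hnn
    have e3 : p * (p - 1) * (D / 2) ^ 2 = p * (p - 1) / 4 * D ^ 2 := by ring
    rw [e3] at hh
    linarith
  have hsum : ∑ x, π x * (p * (p - 1) / 4 * (st_F u b' x - st_F u b x) ^ 2 *
      (|st_F u b x| + |st_F u b' x - st_F u b x|) ^ (p - 2))
      ≤ st_Phi π u p b + st_Phi π u p b' - 2 * st_Phi π u p mid := by
    unfold st_Phi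
    rw [Finset.mul_sum, ← Finset.sum_add_distrib, ← Finset.sum_sub_distrib]
    refine Finset.sum_le_sum fun x _ => ?_
    have := mul_le_mul_of_nonneg_left (hgap x) (hfr.nonneg x)
    linarith
  have hdot : st_dot w b' - st_dot w b = ∑ x, π x * (st_F u w x * (st_F u b' x - st_F u b x)) := by
    have := st_frame_parseval hfr w (fun j => b' j - b j)
    simp_rw [st_F_sub] at this
    rw [this]
    unfold st_dot
    rw [← Finset.sum_sub_distrib]
    exact Finset.sum_congr rfl fun j _ => by ring
  have hy : ∑ x, π x * (st_F u w x * (st_F u b' x - st_F u b x))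
      - ∑ x, π x * (p * (p - 1) / 4 * (st_F u b' x - st_F u b x) ^ 2 *
      (|st_F u b x| + |st_F u b' x - st_F u b x|) ^ (p - 2))
      ≤ C * ∑ y, π y * (st_F u w y ^ 2 * |st_F u b y| ^ (2 - p) + |st_F u w y| ^ (p / (p - 1))) := by
    rw [← Finset.sum_sub_distrib, Finset.mul_sum]
    refine Finset.sum_le_sum fun x _ => ?_
    have := mul_le_mul_of_nonneg_left (hC (st_F u w x) (st_F u b x) (st_F u b' x - st_F u b x)) (hfr.nonneg x)
    linarith
  have hz : st_dot (fun j => z j + w j) b' = st_dot z b' + st_dot w b' := by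
    unfold st_dot; rw [← Finset.sum_add_distrib]; exact Finset.sum_congr rfl fun j _ => by ring
  unfold st_G
  rw [← hb, ← hb', hz]
  linarith

/-- Local variance functional. -/
noncomputable def st_V {ι : Type*} [Fintype ι] {d : ℕ} (π : ι → ℝ) (u : ι → Fin d → ℝ) (p : ℝ)
    (b : Fin d → ℝ) (x : ι) : ℝ := ∑ y, π y * (st_F u (u x) y ^ 2 * |st_F u b y| ^ (2 - p))

lemma st_V_nonneg {ι : Type*} [Fintype ι] {d : ℕ} {π : ι → ℝ} {u : ι → Fin d → ℝ}
    (hfr : st_Frame π u) (p : ℝ) (b : Fin d → ℝ) (x : ι) : 0 ≤ st_V π u p b x :=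
  Finset.sum_nonneg fun y _ => mul_nonneg (hfr.nonneg y)
    (mul_nonneg (sq_nonneg _) (Real.rpow_nonneg (abs_nonneg _) _))

lemma st_Ksq {ι : Type*} [Fintype ι] {d : ℕ} {π : ι → ℝ} {u : ι → Fin d → ℝ}
    (hfr : st_Frame π u) (x : ι) : ∑ y, π y * st_F u (u x) y ^ 2 = d := by
  rw [st_frame_parseval' hfr, hfr.sq]

lemma st_Kle {ι : Type*} [Fintype ι] {d : ℕ} {π : ι → ℝ} {u : ι → Fin d → ℝ}
    (hfr : st_Frame π u) (x y : ι) : |st_F u (u x) y| ≤ d := by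
  have := st_frame_cs hfr (u x) y
  rw [hfr.sq, ← sq] at this
  exact abs_le.mpr (abs_le_of_sq_le_sq' this (by positivity))

lemma st_drop {ι : Type*} [Fintype ι] {d : ℕ} {π : ι → ℝ} {u : ι → Fin d → ℝ}
    (hfr : st_Frame π u) (hd : 1 ≤ d) {p : ℝ} (h1 : 1 < p) (h2 : p < 2) {C C0 : ℝ}
    (hC : ∀ k h D : ℝ, k * D - p * (p - 1) / 4 * D ^ 2 * (|h| + |D|) ^ (p - 2)
      ≤ C * (k ^ 2 * |h| ^ (2 - p) + |k| ^ (p / (p - 1)))) (hC1 : 1 ≤ C) (hC0 : 1 ≤ C0)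
    (z a : Fin d → ℝ) (x : ι) (ρ σ η : ℝ) (hη : η = 1 / (4 * C * C0)) (hρ : 0 < ρ) (hσ : |σ| = 1)
    (hV : st_V π u p (st_bm π u p z) x ≤ C0 * d * ρ ^ (2 - p))
    (hgap : ρ ≤ σ * (st_F u a x - st_F u (st_bm π u p z) x)) :
    st_G π u p (fun j => z j + σ * (η * ρ ^ (p - 1) / d) * u x j)
        - st_dot (fun j => z j + σ * (η * ρ ^ (p - 1) / d) * u x j) a
      ≤ st_G π u p z - st_dot z a - η / 2 * ρ ^ p / d := by
  have hd1 : (1 : ℝ) ≤ d := by exact_mod_cast hd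
  have hd0 : (0 : ℝ) < d := by linarith
  have hη0 : 0 < η := by rw [hη]; positivity
  set c := η * ρ ^ (p - 1) / d with hc
  have hρ1 : 0 < ρ ^ (p - 1) := Real.rpow_pos_of_pos hρ _
  have hc0 : 0 < c := by positivity
  set b := st_bm π u p z with hb
  have hs := st_G_step hfr h1 h2 hC z (fun j => σ * c * u x j)
  rw [← hb] at hs
  simp_rw [st_F_smul] at hs
  have hdot1 : st_dot (fun j => σ * c * u x j) b = σ * c * st_F u b x := by
    unfold st_dot st_F; rw [Finset.mul_sum]; exact Finset.sum_congr rfl fun j _ => by ring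
  have hdot2 : st_dot (fun j => z j + σ * c * u x j) a = st_dot z a + σ * c * st_F u a x := by
    unfold st_dot st_F
    rw [Finset.mul_sum, ← Finset.sum_add_distrib]; exact Finset.sum_congr rfl fun j _ => by ring
  rw [hdot1] at hs
  rw [hdot2]
  have hσ2 : σ ^ 2 = 1 := by rw [← sq_abs, hσ]; norm_num
  set q := p / (p - 1) with hq
  have hp1 : 0 < p - 1 := by linarith
  have hq2 : 2 ≤ q := by rw [hq, le_div_iff₀ hp1]; linarith
  have hsplit : ∑ y, π y * ((σ * c * st_F u (u x) y) ^ 2 * |st_F u b y| ^ (2 - p)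
        + |σ * c * st_F u (u x) y| ^ q) ≤ c ^ 2 * st_V π u p b x + c ^ q * (d : ℝ) ^ (q - 1) := by
    have hterm : ∀ y, π y * ((σ * c * st_F u (u x) y) ^ 2 * |st_F u b y| ^ (2 - p)
        + |σ * c * st_F u (u x) y| ^ q) ≤ c ^ 2 * (π y * (st_F u (u x) y ^ 2 * |st_F u b y| ^ (2 - p)))
        + c ^ q * (d : ℝ) ^ (q - 2) * (π y * st_F u (u x) y ^ 2) := by
      intro y
      have e1 : (σ * c * st_F u (u x) y) ^ 2 = c ^ 2 * st_F u (u x) y ^ 2 := by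
        rw [mul_pow, mul_pow, hσ2, one_mul]
      have e2 : |σ * c * st_F u (u x) y| ^ q ≤ c ^ q * ((d : ℝ) ^ (q - 2) * st_F u (u x) y ^ 2) := by
        rw [abs_mul, abs_mul, hσ, one_mul, abs_of_pos hc0, Real.mul_rpow hc0.le (abs_nonneg _)]
        refine mul_le_mul_of_nonneg_left ?_ (Real.rpow_nonneg hc0.le _)
        rcases (abs_nonneg (st_F u (u x) y)).eq_or_lt with h0 | h0
        · rw [← h0, Real.zero_rpow (by linarith)]
          have := Real.rpow_nonneg hd0.le (q - 2)
          positivity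
        · have e3 : |st_F u (u x) y| ^ q = |st_F u (u x) y| ^ (q - 2) * st_F u (u x) y ^ 2 := by
            rw [← sq_abs, ← Real.rpow_natCast _ 2, ← Real.rpow_add h0]; norm_num
          rw [e3]
          exact mul_le_mul_of_nonneg_right (Real.rpow_le_rpow h0.le (st_Kle hfr x y) (by linarith)) (sq_nonneg _)
      rw [e1]
      have := mul_le_mul_of_nonneg_left e2 (hfr.nonneg y)
      linarith
    refine (Finset.sum_le_sum fun y _ => hterm y).trans (le_of_eq ?_)
    rw [Finset.sum_add_distrib, ← Finset.mul_sum, ← Finset.mul_sum, st_Ksq hfr]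
    unfold st_V
    rw [mul_assoc (c ^ q)]
    congr 2
    rw [show q - 1 = (q - 2) + 1 by ring, Real.rpow_add_one hd0.ne']
  have hρp : 0 < ρ ^ p := Real.rpow_pos_of_pos hρ _
  have k1 : c ^ 2 * st_V π u p b x ≤ η ^ 2 * C0 * (ρ ^ p / d) := by
    calc c ^ 2 * st_V π u p b x ≤ c ^ 2 * (C0 * d * ρ ^ (2 - p)) :=
          mul_le_mul_of_nonneg_left hV (sq_nonneg _)
      _ = η ^ 2 * C0 * ((ρ ^ (p - 1) * ρ ^ (p - 1) * ρ ^ (2 - p)) / d) := by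
          rw [hc]; field_simp
      _ = _ := by
          rw [← Real.rpow_add hρ, ← Real.rpow_add hρ]; congr 3; ring
  have k2 : c ^ q * (d : ℝ) ^ (q - 1) = η ^ q * (ρ ^ p / d) := by
    rw [hc, Real.div_rpow (by positivity) hd0.le, Real.mul_rpow hη0.le hρ1.le, ← Real.rpow_mul hρ.le,
      Real.rpow_sub hd0, Real.rpow_one, show (p - 1) * q = p by rw [hq]; field_simp]
    have : (0:ℝ) < (d : ℝ) ^ q := Real.rpow_pos_of_pos hd0 _
    field_simp
  have hη1 : η ≤ 1 := by
    rw [hη, div_le_one (by positivity)]; nlinarith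
  have k3 : η ^ q ≤ η ^ 2 := by
    rw [← Real.rpow_natCast η 2]
    exact Real.rpow_le_rpow_of_exponent_ge hη0 hη1 (by exact_mod_cast hq2)
  have k4 : C * C0 * η = 1 / 4 := by rw [hη]; field_simp
  set T := ρ ^ p / d with hT
  have hT0 : 0 < T := by positivity
  have k5 : C * (c ^ 2 * st_V π u p b x + c ^ q * (d : ℝ) ^ (q - 1)) ≤ η / 2 * T := by
    rw [k2]
    calc C * (c ^ 2 * st_V π u p b x + η ^ q * T) ≤ C * (η ^ 2 * C0 * T + η ^ 2 * C0 * T) := by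
          have : η ^ q * T ≤ η ^ 2 * C0 * T := by
            apply mul_le_mul_of_nonneg_right _ hT0.le
            nlinarith [sq_nonneg η]
          gcongr
      _ = 2 * (C * C0 * η) * η * T := by ring
      _ = η / 2 * T := by rw [k4]; ring
  have k6 : η * T ≤ c * (σ * (st_F u a x - st_F u b x)) := by
    calc η * T = c * ρ := by
          rw [hc, hT]
          have : ρ ^ p = ρ ^ (p - 1) * ρ := by
            rw [← Real.rpow_add_one hρ.ne']; congr 1; ring
          rw [this]; ring
      _ ≤ _ := mul_le_mul_of_nonneg_left hgap hc0.le
  have k7 := mul_le_mul_of_nonneg_left hsplit (by linarith : 0 ≤ C)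
  have k8 : η / 2 * ρ ^ p / d = η / 2 * T := by rw [hT]; ring
  rw [k8]
  linarith

/-- Local radius. -/
noncomputable def st_rho {ι : Type*} [Fintype ι] {d : ℕ} (π : ι → ℝ) (u : ι → Fin d → ℝ) (p lam : ℝ)
    (t : ℝ) (b : Fin d → ℝ) (x : ι) : ℝ :=
  max (lam * t) ((st_V π u p b x / (256 * d)) ^ (1 / (2 - p)))

/-- Dual vector coded by a list. -/
noncomputable def st_zl {ι : Type*} [Fintype ι] {d n : ℕ} (π : ι → ℝ) (u : ι → Fin d → ℝ) (p lam η : ℝ) :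
    List ((ι × Bool) × Fin n) → Fin d → ℝ
  | [] => fun _ => 0
  | e :: l => fun j => st_zl π u p lam η l j + (if e.1.2 then 1 else -1) *
      (η * st_rho π u p lam (st_t e.2) (st_bm π u p (st_zl π u p lam η l)) e.1.1 ^ (p - 1) / d) * u e.1.1 j

lemma st_rho_pow {ι : Type*} [Fintype ι] {d : ℕ} {π : ι → ℝ} {u : ι → Fin d → ℝ}
    (hfr : st_Frame π u) {p lam t : ℝ} (h2 : p < 2) (hl : 0 < lam) (ht : 0 < t)
    (b : Fin d → ℝ) (x : ι) :
    st_rho π u p lam t b x ^ (2 - p) = max ((lam * t) ^ (2 - p)) (st_V π u p b x / (256 * d)) := by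
  have hV : 0 ≤ st_V π u p b x / (256 * d) := div_nonneg (st_V_nonneg hfr p b x) (by positivity)
  have hlt : 0 ≤ lam * t := by positivity
  have hα : 0 < 2 - p := by linarith
  have e : ((st_V π u p b x / (256 * d)) ^ (1 / (2 - p))) ^ (2 - p) = st_V π u p b x / (256 * d) := by
    rw [← Real.rpow_mul hV, one_div, inv_mul_cancel₀ hα.ne', Real.rpow_one]
  have h0 : 0 ≤ (st_V π u p b x / (256 * d)) ^ (1 / (2 - p)) := Real.rpow_nonneg hV _
  unfold st_rho
  rcases le_total (lam * t) ((st_V π u p b x / (256 * d)) ^ (1 / (2 - p))) with h | h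
  · rw [max_eq_right h, e, max_eq_right]
    have := Real.rpow_le_rpow hlt h hα.le
    rwa [e] at this
  · rw [max_eq_left h, max_eq_left]
    have := Real.rpow_le_rpow h0 h hα.le
    rwa [e] at this

section
variable {ι : Type*} [Fintype ι] {d n : ℕ} {π : ι → ℝ} {u : ι → Fin d → ℝ} {p lam η : ℝ}

/-- Potential along a list. -/
noncomputable def st_P (π : ι → ℝ) (u : ι → Fin d → ℝ) (p lam η : ℝ) (a : Fin d → ℝ)
    (l : List ((ι × Bool) × Fin n)) : ℝ :=
  st_G π u p (st_zl π u p lam η l) - st_dot (st_zl π u p lam η l) a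

lemma st_P_ge (h1 : 1 < p) (a : Fin d → ℝ) (ha : ∑ j, a j ^ 2 ≤ d) (hP : st_Phi π u p a = 1)
    (l : List ((ι × Bool) × Fin n)) : -1 ≤ st_P π u p lam η a l := by
  have := (st_bm_spec π u (by linarith : 0 ≤ p) (st_zl π u p lam η l)).2 a ha
  unfold st_P st_G
  linarith

lemma st_P_nil (hπ : ∀ x, 0 ≤ π x) (a : Fin d → ℝ) :
    st_P π u p lam η a ([] : List ((ι × Bool) × Fin n)) ≤ 0 := by
  unfold st_P st_G st_zl
  have : 0 ≤ st_Phi π u p (st_bm π u p fun _ : Fin d => (0 : ℝ)) :=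
    Finset.sum_nonneg fun x _ => mul_nonneg (hπ x) (Real.rpow_nonneg (abs_nonneg _) _)
  simp only [st_dot, zero_mul, Finset.sum_const_zero]
  linarith

lemma st_scale (hfr : st_Frame π u) (hd : 1 ≤ d) (h1 : 1 < p) (h2 : p < 2) {C : ℝ}
    (hC : ∀ k h D : ℝ, k * D - p * (p - 1) / 4 * D ^ 2 * (|h| + |D|) ^ (p - 2)
      ≤ C * (k ^ 2 * |h| ^ (2 - p) + |k| ^ (p / (p - 1)))) (hC1 : 1 ≤ C)
    (hη : η = 1 / (4 * C * 256)) (hlam : 0 < lam) (a : Fin d → ℝ) (ha : ∑ j, a j ^ 2 ≤ d)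
    (hP : st_Phi π u p a = 1) (l : List ((ι × Bool) × Fin n)) (s : Fin n) :
    ∃ l' : List ((ι × Bool) × Fin n),
      (∀ x, |st_F u a x - st_F u (st_bm π u p (st_zl π u p lam η l')) x|
        ≤ st_rho π u p lam (st_t s) (st_bm π u p (st_zl π u p lam η l')) x) ∧
      ∃ k : ℕ, l'.length = l.length + k ∧
      st_P π u p lam η a l' ≤ st_P π u p lam η a l - k * (η / 2 * lam ^ p / d * st_t s ^ p) := by
  set κ := η / 2 * lam ^ p / d * st_t s ^ p with hκ
  have hd1 : (1 : ℝ) ≤ d := by exact_mod_cast hd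
  have ht := st_t_pos s
  have hη0 : 0 < η := by rw [hη]; positivity
  have hκ0 : 0 < κ := by
    have := Real.rpow_pos_of_pos ht p
    have := Real.rpow_pos_of_pos hlam p
    positivity
  by_contra hcon
  push Not at hcon
  have key : ∀ N : ℕ, ∃ l' : List ((ι × Bool) × Fin n), l'.length = l.length + N ∧
      st_P π u p lam η a l' ≤ st_P π u p lam η a l - N * κ := by
    intro N
    induction N with
    | zero => exact ⟨l, by simp, by simp⟩
    | succ N ih =>
      obtain ⟨l', hl, hl2⟩ := ih
      by_cases hg : ∀ x, |st_F u a x - st_F u (st_bm π u p (st_zl π u p lam η l')) x|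
        ≤ st_rho π u p lam (st_t s) (st_bm π u p (st_zl π u p lam η l')) x
      · exact absurd hl2 (not_le.mpr (hcon l' hg N hl))
      push Not at hg
      obtain ⟨x, hx⟩ := hg
      set z := st_zl π u p lam η l' with hz
      set ρ := st_rho π u p lam (st_t s) (st_bm π u p z) x with hρ
      have hρl : lam * st_t s ≤ ρ := le_max_left _ _
      have hρ0 : 0 < ρ := lt_of_lt_of_le (by positivity) hρl
      have hV : st_V π u p (st_bm π u p z) x ≤ 256 * d * ρ ^ (2 - p) := by
        rw [hρ, st_rho_pow hfr h2 hlam ht]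
        have := le_max_right ((lam * st_t s) ^ (2 - p)) (st_V π u p (st_bm π u p z) x / (256 * d))
        rwa [div_le_iff₀' (by positivity)] at this
      have main : ∀ bo : Bool, (if bo then (1 : ℝ) else -1) * (st_F u a x - st_F u (st_bm π u p z) x)
          = |st_F u a x - st_F u (st_bm π u p z) x| → ∃ l' : List ((ι × Bool) × Fin n),
          l'.length = l.length + (N + 1) ∧
          st_P π u p lam η a l' ≤ st_P π u p lam η a l - ((N + 1 : ℕ) : ℝ) * κ := by
        intro bo hbo
        refine ⟨((x, bo), s) :: l', by simp [hl]; ring, ?_⟩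
        have hdr := st_drop hfr hd h1 h2 hC hC1 (by norm_num : (1:ℝ) ≤ 256) z a x ρ
          (if bo then (1 : ℝ) else -1) η hη hρ0 (by split_ifs <;> simp) hV (by rw [hbo]; exact hx.le)
        have e : st_P π u p lam η a (((x, bo), s) :: l') =
          st_G π u p (fun j => z j + (if bo then (1 : ℝ) else -1) * (η * ρ ^ (p - 1) / d) * u x j)
          - st_dot (fun j => z j + (if bo then (1 : ℝ) else -1) * (η * ρ ^ (p - 1) / d) * u x j) a := rfl
        have e2 : st_P π u p lam η a l' = st_G π u p z - st_dot z a := rfl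
        rw [e]
        have hκle : κ ≤ η / 2 * ρ ^ p / d := by
          have h3 := Real.rpow_le_rpow (by positivity) hρl (by linarith : 0 ≤ p)
          rw [Real.mul_rpow hlam.le ht.le] at h3
          calc κ = η / 2 * (lam ^ p * st_t s ^ p) / d := by rw [hκ]; ring
            _ ≤ _ := by gcongr
        push_cast
        linarith
      rcases le_total 0 (st_F u a x - st_F u (st_bm π u p z) x) with h0 | h0
      · exact main true (by simp [abs_of_nonneg h0])
      · exact main false (by simp [abs_of_nonpos h0])
  obtain ⟨N, hN⟩ := exists_nat_gt ((st_P π u p lam η a l + 1) / κ)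
  rw [div_lt_iff₀ hκ0] at hN
  obtain ⟨l', _, h⟩ := key N
  have := st_P_ge (π := π) (u := u) (lam := lam) (η := η) h1 a ha hP l'
  linarith

lemma st_chain (hfr : st_Frame π u) (hd : 1 ≤ d) (h1 : 1 < p) (h2 : p < 2) {C : ℝ}
    (hC : ∀ k h D : ℝ, k * D - p * (p - 1) / 4 * D ^ 2 * (|h| + |D|) ^ (p - 2)
      ≤ C * (k ^ 2 * |h| ^ (2 - p) + |k| ^ (p / (p - 1)))) (hC1 : 1 ≤ C)
    (hη : η = 1 / (4 * C * 256)) (hlam : 0 < lam) (a : Fin d → ℝ) (ha : ∑ j, a j ^ 2 ≤ d)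
    (hP : st_Phi π u p a = 1) (m : ℕ) : m ≤ n → ∀ l : List ((ι × Bool) × Fin n),
    ∃ c : ℕ → List ((ι × Bool) × Fin n),
      (∀ s < m, ∀ x, |st_F u a x - st_F u (st_bm π u p (st_zl π u p lam η (c s))) x|
        ≤ st_rho π u p lam (st_t s) (st_bm π u p (st_zl π u p lam η (c s))) x) ∧
      ∑ s ∈ Finset.range m, st_t s ^ p * (c s).length ≤
        (∑ s ∈ Finset.range m, st_t s ^ p) * l.length
          + 2 / (η / 2 * lam ^ p / d) * (st_P π u p lam η a l + 1) := by
  have hd1 : (1 : ℝ) ≤ d := by exact_mod_cast hd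
  have hη0 : 0 < η := by rw [hη]; positivity
  set κ := η / 2 * lam ^ p / d with hκ
  have hκ0 : 0 < κ := by
    have := Real.rpow_pos_of_pos hlam p
    positivity
  induction m with
  | zero =>
    intro _ l
    refine ⟨fun _ => [], by simp, ?_⟩
    have := st_P_ge (π := π) (u := u) (lam := lam) (η := η) h1 a ha hP l
    simp only [Finset.range_zero, Finset.sum_empty, zero_mul, zero_add]
    exact mul_nonneg (by positivity) (by linarith)
  | succ m ih =>
    intro hm l
    obtain ⟨l', hg, k, hk, hl'⟩ := st_scale hfr hd h1 h2 hC hC1 hη hlam a ha hP l (⟨m, by omega⟩ : Fin n)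
    obtain ⟨c, hc1, hc2⟩ := ih (by omega) l'
    refine ⟨fun s => if s < m then c s else l', ?_, ?_⟩
    · intro s hs
      by_cases h : s < m
      · simp only [h, if_true]; exact hc1 s h
      · have : s = m := by omega
        subst this
        simp only [lt_irrefl, if_false]; exact hg
    · rw [Finset.sum_range_succ]
      have e : ∑ s ∈ Finset.range m, st_t s ^ p * ((if s < m then c s else l').length : ℝ)
          = ∑ s ∈ Finset.range m, st_t s ^ p * (c s).length :=
        Finset.sum_congr rfl fun s hs => by rw [if_pos (Finset.mem_range.mp hs)]
      rw [e]
      simp only [lt_irrefl, if_false]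
      have hgeo := st_geom h1.le m
      rw [← hκ] at hl'
      simp only at hl'
      have h3 : 2 / κ * (st_P π u p lam η a l' + 1) ≤ 2 / κ * (st_P π u p lam η a l + 1) - k * (2 * st_t m ^ p) := by
        have : 2 / κ * (st_P π u p lam η a l' + 1) ≤ 2 / κ * (st_P π u p lam η a l - k * (κ * st_t m ^ p) + 1) := by
          gcongr
        refine this.trans (le_of_eq ?_)
        field_simp
        ring
      have hkr : (0 : ℝ) ≤ k := by positivity
      have h4 := mul_le_mul_of_nonneg_left hgeo hkr
      rw [hk] at hc2 ⊢
      push_cast at hc2 ⊢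
      rw [Finset.sum_range_succ] at h4 ⊢
      nlinarith
end

lemma st_Ksymm {ι : Type*} {d : ℕ} (u : ι → Fin d → ℝ) (x y : ι) :
    st_F u (u x) y = st_F u (u y) x := by
  unfold st_F; exact Finset.sum_congr rfl fun j _ => mul_comm _ _

lemma st_bad {ι : Type*} [Fintype ι] {d : ℕ} {π : ι → ℝ} {u : ι → Fin d → ℝ}
    (hfr : st_Frame π u) (hd : 1 ≤ d) {r : ℝ} (hr : 1 ≤ r) (S : ℕ) (φ : ι → ℝ) (hφ : ∀ x, 0 ≤ φ x)
    (hφ1 : ∑ x, π x * φ x ^ r = 1) (q : Fin (S + 1) → ι → ℝ) (e : Fin (S + 1) → ℝ)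
    (he : ∀ s, 0 ≤ e s)
    (h : ∀ s x, q s x ≤ e s + 1 / 256 * ∑ y, (π y * st_F u (u x) y ^ 2 / d) * (φ y + q s y)) :
    ∃ Y : ι → ℝ, (∀ x, 0 ≤ Y x) ∧ (∀ s x, q s x ≤ Y x + 2 * e s) ∧
      ∑ x, π x * Y x ^ r ≤ 2 * (1 / 128) ^ r := by
  have hd1 : (1 : ℝ) ≤ d := by exact_mod_cast hd
  set W : ι → ι → ℝ := fun x y => π y * st_F u (u x) y ^ 2 / d with hW
  have hW0 : ∀ x y, 0 ≤ W x y := fun x y => div_nonneg (mul_nonneg (hfr.nonneg y) (sq_nonneg _)) (by positivity)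
  have hW1 : ∀ x, ∑ y, W x y = 1 := by
    intro x
    simp only [hW]
    rw [← Finset.sum_div, st_Ksq hfr]; field_simp
  have hW2 : ∀ y, ∑ x, π x * W x y = π y := by
    intro y
    have : ∀ x, π x * W x y = π y * (π x * st_F u (u y) x ^ 2) / d := by
      intro x; simp only [hW]; rw [st_Ksymm u x y]; ring
    simp_rw [this]
    rw [← Finset.sum_div, ← Finset.mul_sum, st_Ksq hfr]; field_simp
  set Y : ι → ℝ := fun x => Finset.univ.sup' Finset.univ_nonempty
    (fun s : Fin (S + 1) => max 0 (q s x - 2 * e s)) with hY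
  have hYs : ∀ s x, max 0 (q s x - 2 * e s) ≤ Y x := fun s x =>
    Finset.le_sup' (fun s : Fin (S + 1) => max 0 (q s x - 2 * e s)) (Finset.mem_univ s)
  have hY0 : ∀ x, 0 ≤ Y x := fun x => (le_max_left _ _).trans (hYs 0 x)
  have hYq : ∀ s x, q s x ≤ Y x + 2 * e s := fun s x => by
    have := (le_max_right _ _).trans (hYs s x)
    linarith
  refine ⟨Y, hY0, hYq, ?_⟩
  have hYr : ∀ x, Y x ≤ 1 / 256 * ∑ y, W x y * (φ y + Y y) := by
    intro x
    apply Finset.sup'_le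
    intro s _
    apply max_le
    · exact mul_nonneg (by norm_num) (Finset.sum_nonneg fun y _ => mul_nonneg (hW0 x y) (add_nonneg (hφ y) (hY0 y)))
    · have h1 : ∑ y, W x y * (φ y + q s y) ≤ ∑ y, W x y * (φ y + Y y) + 2 * e s := by
        calc _ ≤ ∑ y, (W x y * (φ y + Y y) + W x y * (2 * e s)) := by
              refine Finset.sum_le_sum fun y _ => ?_
              have := mul_le_mul_of_nonneg_left (hYq s y) (hW0 x y)
              linarith
          _ = _ := by rw [Finset.sum_add_distrib, ← Finset.sum_mul, hW1]; ring
      have h2 := h s x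
      have h3 := he s
      change q s x ≤ e s + 1 / 256 * ∑ y, W x y * (φ y + q s y) at h2
      linarith
  have hr0 : 0 ≤ r := by linarith
  have hJ : ∀ x, Y x ^ r ≤ (1 / 128) ^ r * ∑ y, W x y * (φ y ^ r + Y y ^ r) := by
    intro x
    have h1 := Real.rpow_le_rpow (hY0 x) (hYr x) hr0
    have hnn : 0 ≤ ∑ y, W x y * ((φ y + Y y) / 2) :=
      Finset.sum_nonneg fun y _ => mul_nonneg (hW0 x y) (by have := hφ y; have := hY0 y; positivity)
    have h2 : (1 : ℝ) / 256 * ∑ y, W x y * (φ y + Y y) = 1 / 128 * ∑ y, W x y * ((φ y + Y y) / 2) := by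
      rw [Finset.mul_sum, Finset.mul_sum]; exact Finset.sum_congr rfl fun y _ => by ring
    rw [h2, Real.mul_rpow (by norm_num) hnn] at h1
    refine h1.trans (mul_le_mul_of_nonneg_left ?_ (by positivity))
    refine (Real.rpow_arith_mean_le_arith_mean_rpow Finset.univ (W x) _ (fun y _ => hW0 x y) (hW1 x)
      (fun y _ => by have := hφ y; have := hY0 y; positivity) hr).trans ?_
    refine Finset.sum_le_sum fun y _ => mul_le_mul_of_nonneg_left ?_ (hW0 x y)
    have hm : (φ y + Y y) / 2 ≤ max (φ y) (Y y) := by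
      have := le_max_left (φ y) (Y y); have := le_max_right (φ y) (Y y); linarith
    have h3 := Real.rpow_le_rpow (by have := hφ y; have := hY0 y; positivity) hm hr0
    refine h3.trans ?_
    have := Real.rpow_nonneg (hφ y) r
    have := Real.rpow_nonneg (hY0 y) r
    rcases max_choice (φ y) (Y y) with h | h <;> rw [h] <;> linarith
  set A := ∑ x, π x * Y x ^ r with hA
  have hA1 : A ≤ (1 / 128) ^ r * (1 + A) := by
    calc A ≤ ∑ x, π x * ((1 / 128) ^ r * ∑ y, W x y * (φ y ^ r + Y y ^ r)) :=
          Finset.sum_le_sum fun x _ => mul_le_mul_of_nonneg_left (hJ x) (hfr.nonneg x)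
      _ = (1 / 128) ^ r * ∑ y, (∑ x, π x * W x y) * (φ y ^ r + Y y ^ r) := by
          simp_rw [Finset.mul_sum, Finset.sum_mul]
          rw [Finset.sum_comm]
          simp_rw [Finset.mul_sum]
          exact Finset.sum_congr rfl fun y _ => Finset.sum_congr rfl fun x _ => by ring
      _ = _ := by
          simp_rw [hW2, mul_add, Finset.sum_add_distrib]
          rw [hφ1]; ring
  have hle : (1 / 128 : ℝ) ^ r ≤ 1 / 128 := by
    have := Real.rpow_le_rpow_of_exponent_ge (by norm_num : (0:ℝ) < 1 / 128) (by norm_num) hr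
    rwa [Real.rpow_one] at this
  have hA0 : 0 ≤ A := Finset.sum_nonneg fun x _ => mul_nonneg (hfr.nonneg x) (Real.rpow_nonneg (hY0 x) _)
  nlinarith

lemma st_Elog {ι : Type} [Fintype ι] [Nonempty ι] {d : ℕ} (hd : 1 ≤ d) :
    Fintype.card ((ι × Bool) × Fin (4 * d)) = 8 * d * Fintype.card ι ∧
    Real.log (2 * Fintype.card ((ι × Bool) × Fin (4 * d))) ≤ 4 * Real.log (Fintype.card ι + d + 2) ∧
    0 ≤ Real.log (2 * Fintype.card ((ι × Bool) × Fin (4 * d))) := by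
  have hcard : Fintype.card ((ι × Bool) × Fin (4 * d)) = 8 * d * Fintype.card ι := by
    simp; ring
  have hc1 : 1 ≤ Fintype.card ι := Fintype.card_pos
  have hc1r : (1 : ℝ) ≤ Fintype.card ι := by exact_mod_cast hc1
  have hd1 : (1 : ℝ) ≤ d := by exact_mod_cast hd
  set X : ℝ := Fintype.card ι + d + 2 with hX
  refine ⟨hcard, ?_, ?_⟩
  · rw [hcard]; push_cast
    rw [show (4 : ℝ) * Real.log X = Real.log (X ^ 4) by rw [Real.log_pow]; norm_num]
    apply Real.log_le_log (by positivity)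
    have h1 : (16 : ℝ) ≤ X ^ 2 := by nlinarith
    have h2 : (d : ℝ) * Fintype.card ι ≤ X ^ 2 := by
      rw [sq]; apply mul_le_mul <;> linarith
    calc 2 * (8 * (d : ℝ) * Fintype.card ι) = 16 * (d * Fintype.card ι) := by ring
      _ ≤ X ^ 2 * X ^ 2 := by apply mul_le_mul h1 h2 <;> positivity
      _ = X ^ 4 := by ring
  · apply Real.log_nonneg
    rw [hcard]; push_cast
    nlinarith

lemma st_core_low (p : ℝ) (h1 : 1 < p) (h2 : p < 2) : ∃ C : ℝ, 0 < C ∧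
    ∀ {ι : Type} [Fintype ι] [DecidableEq ι] {d : ℕ} (u : ι → Fin d → ℝ) (π g : ι → ℝ),
    1 ≤ d → st_Frame π u → (∀ x, 0 ≤ g x) → (∑ x, π x * g x ≤ 1) →
    ∀ M : ℕ, C * ((d : ℝ) * Real.log (Fintype.card ι + d + 2)) ≤ M →
    ∃ ξ : Fin M → ι, (∑ i, g (ξ i) ≤ 4 * M) ∧
      ∀ a : Fin d → ℝ, M * ∑ x, π x * |st_F u a x| ^ p
        ≤ (32 * 2 ^ p * 2 ^ p) * ∑ i, |st_F u a (ξ i)| ^ p := by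
  obtain ⟨CC, hCC1, hCC⟩ := st_young h1 h2
  have h2p : (0 : ℝ) < 2 ^ p := Real.rpow_pos_of_pos (by norm_num) p
  set α := 2 - p with hα
  have hα0 : 0 < α := by rw [hα]; linarith
  have hα1 : α < 1 := by rw [hα]; linarith
  obtain ⟨lam, hlam, hlamα⟩ : ∃ lam : ℝ, 0 < lam ∧ lam ^ α = 1 / 4 * (1 / 4) ^ α := by
    refine ⟨(1 / 4 * (1 / 4) ^ α) ^ (1 / α), by positivity, ?_⟩
    rw [← Real.rpow_mul (by positivity), one_div_mul_cancel hα0.ne', Real.rpow_one]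
  set η : ℝ := 1 / (4 * CC * 256) with hη
  have hη0 : 0 < η := by rw [hη]; positivity
  have hlp : 0 < lam ^ p := Real.rpow_pos_of_pos hlam p
  set B : ℝ := 2 / (η / 2 * lam ^ p) with hB
  have hB0 : 0 < B := by positivity
  refine ⟨16 * 2 ^ p * 4 * (B + 4), by positivity, ?_⟩
  intro ι _ _ d u π g hd hfr hg hg1 M hM
  have hne : Nonempty ι := by
    by_contra hcon
    rw [not_nonempty_iff] at hcon
    have := hfr.one
    simp at this
  obtain ⟨hcard, hlog, hlog0⟩ := st_Elog (ι := ι) hd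
  have hc1 : 1 ≤ Fintype.card ι := Fintype.card_pos
  have hc1r : (1 : ℝ) ≤ Fintype.card ι := by exact_mod_cast hc1
  have hd1 : (1 : ℝ) ≤ d := by exact_mod_cast hd
  set X : ℝ := Fintype.card ι + d + 2 with hX
  have hLpos : 0 < Real.log X := Real.log_pos (by linarith)
  have hR1 : 1 ≤ (d : ℝ) ^ (1 / p) := Real.one_le_rpow hd1 (by positivity)
  obtain ⟨S, hS1, hS2, hS3⟩ := st_exists_S ((d : ℝ) ^ (1 / p)) hR1
  have hRd : (d : ℝ) ^ (1 / p) ≤ d := by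
    have := Real.rpow_le_rpow_of_exponent_le hd1 (by rw [div_le_one (by linarith)]; linarith : 1 / p ≤ 1)
    rwa [Real.rpow_one] at this
  have hRp : ((d : ℝ) ^ (1 / p)) ^ p = d := by
    rw [← Real.rpow_mul (by linarith), one_div, inv_mul_cancel₀ (by linarith), Real.rpow_one]
  have hMr : (0 : ℝ) < M := lt_of_lt_of_le (by positivity) hM
  have hS4 : S + 1 ≤ 4 * d := by
    have : (S : ℝ) + 1 ≤ 4 * d := by linarith
    exact_mod_cast this
  have hE : S + 1 ≤ Fintype.card ((ι × Bool) × Fin (4 * d)) := by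
    rw [hcard]; nlinarith
  set bb : List ((ι × Bool) × Fin (4 * d)) → Fin d → ℝ := fun l => st_bm π u p (st_zl π u p lam η l) with hbb
  refine st_core_of_lists (E := (ι × Bool) × Fin (4 * d)) u π g hfr.nonneg hfr.one hg hg1 p
    h1.le S M (by exact_mod_cast hMr) hE
    (fun s l => Finset.univ.filter fun x => 3 / 4 * st_t s ≤ |st_F u (bb l) x| ∧
      st_rho π u p lam (st_t s) (bb l) x ≤ st_t s / 4) ?_
  intro a ha
  obtain ⟨hsup, hna⟩ := st_frame_low hfr h1.le h2 a ha
  constructor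
  · intro x
    refine lt_of_le_of_lt ?_ hS2
    have := hsup x
    rw [← hRp] at this
    exact (Real.rpow_le_rpow_iff (abs_nonneg _) (by linarith) (by linarith)).mp this
  obtain ⟨c, hc1, hc2⟩ := st_chain hfr hd h1 h2 hCC hCC1 hη hlam a hna ha (S + 1) hS4 []
  set r := p / α with hr
  have hr1 : 1 ≤ r := by rw [hr, le_div_iff₀ hα0]; linarith
  have hαr : α * r = p := by rw [hr]; field_simp
  have hpow : ∀ y : ℝ, 0 ≤ y → (y ^ α) ^ r = y ^ p := fun y hy => by rw [← Real.rpow_mul hy, hαr]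
  obtain ⟨Y, hY0, hYq, hYs⟩ := st_bad hfr hd hr1 S (fun x => |st_F u a x| ^ α)
    (fun x => by positivity)
    (by simp_rw [hpow _ (abs_nonneg _)]; exact ha)
    (fun s x => st_rho π u p lam (st_t s) (bb (c s)) x ^ α)
    (fun s => (lam * st_t s) ^ α)
    (fun s => by have := st_t_pos s; positivity)
    (by
      intro s x
      have ht := st_t_pos s
      rw [hα, st_rho_pow hfr h2 hlam ht, ← hα]
      have hV : st_V π u p (bb (c s)) x / (256 * d) ≤ 1 / 256 * ∑ y, (π y * st_F u (u x) y ^ 2 / d) *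
          (|st_F u a y| ^ α + st_rho π u p lam (st_t s) (bb (c s)) y ^ α) := by
        unfold st_V
        rw [Finset.sum_div, Finset.mul_sum]
        refine Finset.sum_le_sum fun y _ => ?_
        have hρ0 : 0 ≤ st_rho π u p lam (st_t s) (bb (c s)) y := by
          refine le_trans ?_ (le_max_left _ _)
          positivity
        have h3 : |st_F u (bb (c s)) y| ≤ |st_F u a y| + st_rho π u p lam (st_t s) (bb (c s)) y := by
          have h4 := hc1 s s.2 y
          have h5 := abs_sub_abs_le_abs_sub (st_F u (bb (c s)) y) (st_F u a y)
          rw [abs_sub_comm] at h5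
          have h4' : |st_F u a y - st_F u (bb (c s)) y| ≤ st_rho π u p lam (st_t s) (bb (c s)) y := h4
          linarith
        have h6 := (Real.rpow_le_rpow (abs_nonneg _) h3 hα0.le).trans
          (Real.rpow_add_le_add_rpow (abs_nonneg _) hρ0 hα0.le hα1.le)
        rw [← hα]
        calc π y * (st_F u (u x) y ^ 2 * |st_F u (bb (c s)) y| ^ α) / (256 * d)
            = 1 / 256 * ((π y * st_F u (u x) y ^ 2 / d) * |st_F u (bb (c s)) y| ^ α) := by
              field_simp
          _ ≤ _ := by
              refine mul_le_mul_of_nonneg_left (mul_le_mul_of_nonneg_left h6 ?_) (by norm_num)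
              exact div_nonneg (mul_nonneg (hfr.nonneg y) (sq_nonneg _)) (by positivity)
      have hnn : 0 ≤ st_V π u p (bb (c s)) x / (256 * d) := div_nonneg (st_V_nonneg hfr p _ x) (by positivity)
      have hee : 0 ≤ (lam * st_t s) ^ α := by positivity
      exact max_le (by linarith) (by linarith))
  refine ⟨c, Finset.univ.filter fun x => |st_F u a x| ^ α ≤ 2 * 8 ^ α * Y x, ?_, ?_, ?_, ?_⟩
  · intro s hs x hx
    have hx := (Finset.mem_filter.mp hx).2
    have h4 : |st_F u a x - st_F u (bb (c s)) x| ≤ st_rho π u p lam (st_t s) (bb (c s)) x :=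
      hc1 s (by omega) x
    have h5 := abs_sub_abs_le_abs_sub (st_F u (bb (c s)) x) (st_F u a x)
    rw [abs_sub_comm] at h5
    linarith [hx.1, hx.2]
  · intro s hs x hx hx1 hx2
    have ht := st_t_pos s
    have hx : 2 * 8 ^ α * Y x < |st_F u a x| ^ α := by
      by_contra hcon
      exact hx (Finset.mem_filter.mpr ⟨Finset.mem_univ _, not_lt.mp hcon⟩)
    have h4 : |st_F u a x - st_F u (bb (c s)) x| ≤ st_rho π u p lam (st_t s) (bb (c s)) x :=
      hc1 s (by omega) x
    have h5 := abs_sub_abs_le_abs_sub (st_F u a x) (st_F u (bb (c s)) x)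
    have h6 : |st_F u a x| ^ α ≤ 8 ^ α * (st_t s / 4) ^ α := by
      rw [← Real.mul_rpow (by norm_num) (by positivity)]
      exact Real.rpow_le_rpow (abs_nonneg _) (by linarith) hα0.le
    have h7 : Y x ≤ 1 / 2 * (st_t s / 4) ^ α := by
      have h8 : (0 : ℝ) < 8 ^ α := by positivity
      have : (8 : ℝ) ^ α * (2 * Y x) ≤ 8 ^ α * (st_t s / 4) ^ α := by linarith
      have := le_of_mul_le_mul_left this h8
      linarith
    have h9 : st_rho π u p lam (st_t s) (bb (c s)) x ^ α ≤ Y x + 2 * (lam * st_t s) ^ α :=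
      hYq ⟨s, by omega⟩ x
    have h10 : (lam * st_t s) ^ α = 1 / 4 * (st_t s / 4) ^ α := by
      rw [Real.mul_rpow hlam.le ht.le, hlamα, show st_t s / 4 = 1 / 4 * st_t s by ring,
        Real.mul_rpow (by norm_num) ht.le]
      ring
    rw [h10] at h9
    have hρ0 : 0 ≤ st_rho π u p lam (st_t s) (bb (c s)) x := by
      refine le_trans ?_ (le_max_left _ _)
      positivity
    have h11 : st_rho π u p lam (st_t s) (bb (c s)) x ≤ st_t s / 4 :=
      (Real.rpow_le_rpow_iff hρ0 (by positivity) hα0).mp (by linarith)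
    exact Finset.mem_filter.mpr ⟨Finset.mem_univ _, by linarith, h11⟩
  · have h8 : (8 : ℝ) ^ α ≤ 8 := by
      have := Real.rpow_le_rpow_of_exponent_le (by norm_num : (1:ℝ) ≤ 8) hα1.le
      rwa [Real.rpow_one] at this
    calc _ ≤ ∑ x ∈ Finset.univ.filter fun x => |st_F u a x| ^ α ≤ 2 * 8 ^ α * Y x,
            16 ^ r * (π x * Y x ^ r) := by
          refine Finset.sum_le_sum fun x hx => ?_
          have hx := (Finset.mem_filter.mp hx).2
          have h9 : |st_F u a x| ^ α ≤ 16 * Y x := by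
            have := hY0 x
            nlinarith
          have h10 := Real.rpow_le_rpow (by positivity) h9 (by linarith : 0 ≤ r)
          rw [hpow _ (abs_nonneg _), Real.mul_rpow (by norm_num) (hY0 x)] at h10
          have := mul_le_mul_of_nonneg_left h10 (hfr.nonneg x)
          linarith
      _ ≤ ∑ x, 16 ^ r * (π x * Y x ^ r) := by
          apply Finset.sum_le_sum_of_subset_of_nonneg (Finset.filter_subset _ _)
          intro x _ _
          exact mul_nonneg (by positivity) (mul_nonneg (hfr.nonneg x) (Real.rpow_nonneg (hY0 x) _))
      _ ≤ 16 ^ r * (2 * (1 / 128) ^ r) := by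
          rw [← Finset.mul_sum]
          exact mul_le_mul_of_nonneg_left hYs (by positivity)
      _ = 2 * (1 / 8) ^ r := by
          rw [mul_left_comm, ← Real.mul_rpow (by norm_num) (by norm_num)]; norm_num
      _ ≤ 2 * (1 / 8) ^ (1 : ℝ) := by
          gcongr 2 * ?_
          exact Real.rpow_le_rpow_of_exponent_ge (by norm_num) (by norm_num) hr1
      _ ≤ 1 / 4 := by norm_num
  · have hP0 := st_P_nil (u := u) (p := p) (lam := lam) (η := η) (n := 4 * d) hfr.nonneg a
    have hgeo := st_geom h1.le S
    have htS : st_t S ^ p ≤ d := by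
      rw [← hRp]; exact Real.rpow_le_rpow (st_t_pos S).le hS1 (by linarith)
    have e1 : 2 / (η / 2 * lam ^ p / d) = B * d := by rw [hB]; field_simp
    rw [e1] at hc2
    simp only [List.length_nil, Nat.cast_zero, mul_zero, zero_add] at hc2
    have h3 : ∑ s ∈ Finset.range (S + 1), st_t s ^ p * (c s).length ≤ B * d := by
      refine hc2.trans ?_
      have : B * d * (st_P π u p lam η a ([] : List ((ι × Bool) × Fin (4 * d))) + 1) ≤ B * d * 1 := by
        gcongr; linarith
      linarith
    set Lg := Real.log (2 * Fintype.card ((ι × Bool) × Fin (4 * d))) with hLg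
    calc ∑ s ∈ Finset.range (S + 1), st_t s ^ p * (16 * 2 ^ p * (((c s).length + 2) * Lg))
        = 16 * 2 ^ p * Lg * (∑ s ∈ Finset.range (S + 1), st_t s ^ p * (c s).length
          + 2 * ∑ s ∈ Finset.range (S + 1), st_t s ^ p) := by
          rw [Finset.mul_sum, ← Finset.sum_add_distrib, Finset.mul_sum]
          exact Finset.sum_congr rfl fun s _ => by ring
      _ ≤ 16 * 2 ^ p * (4 * Real.log X) * (B * d + 2 * (2 * d)) := by
          have : ∑ s ∈ Finset.range (S + 1), st_t s ^ p ≤ 2 * d := by linarith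
          have h0 : 0 ≤ ∑ s ∈ Finset.range (S + 1), st_t s ^ p * ((c s).length : ℝ)
            + 2 * ∑ s ∈ Finset.range (S + 1), st_t s ^ p := by
            have : ∀ s, 0 ≤ st_t s ^ p := fun s => (Real.rpow_pos_of_pos (st_t_pos s) p).le
            refine add_nonneg (Finset.sum_nonneg fun s _ => mul_nonneg (this s) (by positivity))
              (mul_nonneg (by norm_num) (Finset.sum_nonneg fun s _ => this s))
          gcongr
      _ = 16 * 2 ^ p * 4 * (B + 4) * (d * Real.log X) := by ring
      _ ≤ M := hM

/-- Maximum over a finite type. -/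
noncomputable def st_mx {T : Type*} [Fintype T] [Nonempty T] (f : T → ℝ) : ℝ :=
  Finset.univ.sup' Finset.univ_nonempty f

lemma st_le_mx {T : Type*} [Fintype T] [Nonempty T] (f : T → ℝ) (t : T) : f t ≤ st_mx f :=
  Finset.le_sup' f (Finset.mem_univ t)

lemma st_mx_le {T : Type*} [Fintype T] [Nonempty T] (f : T → ℝ) {c : ℝ} (h : ∀ t, f t ≤ c) :
    st_mx f ≤ c := Finset.sup'_le _ _ fun t _ => h t

lemma st_mx_eq {T : Type*} [Fintype T] [Nonempty T] (f : T → ℝ) : ∃ t, st_mx f = f t := by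
  obtain ⟨t, _, h⟩ := Finset.exists_mem_eq_sup' Finset.univ_nonempty f
  exact ⟨t, h⟩

lemma st_onecoord {ι T : Type*} [Fintype ι] [Fintype T] [Nonempty T] (π : ι → ℝ)
    (hπ : ∀ x, 0 ≤ π x) (hπ1 : ∑ x, π x = 1) (f : T → ι → ℝ) (R : T → ℝ) :
    ∑ x, π x * st_mx (fun t => R t + (∑ y, π y * |f t y| - |f t x|)) ≤
      ∑ x, π x * ((st_mx (fun t => R t + 2 * f t x) + st_mx (fun t => R t - 2 * f t x)) / 2) := by
  have h1 : ∀ x, st_mx (fun t => R t + (∑ y, π y * |f t y| - |f t x|)) ≤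
      (∑ y, π y * st_mx (fun t => R t + 2 * |f t y|) + st_mx (fun t => R t - 2 * |f t x|)) / 2 := by
    intro x
    apply st_mx_le
    intro t
    have h2 := st_le_mx (fun t => R t - 2 * |f t x|) t
    have h3 : R t + 2 * ∑ y, π y * |f t y| ≤ ∑ y, π y * st_mx (fun t => R t + 2 * |f t y|) := by
      calc R t + 2 * ∑ y, π y * |f t y| = ∑ y, π y * (R t + 2 * |f t y|) := by
            simp_rw [mul_add, Finset.sum_add_distrib]
            rw [← Finset.sum_mul, hπ1, Finset.mul_sum, one_mul]
            congr 1
            exact Finset.sum_congr rfl fun y _ => by ring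
        _ ≤ _ := Finset.sum_le_sum fun y _ => mul_le_mul_of_nonneg_left
            (st_le_mx (fun t => R t + 2 * |f t y|) t) (hπ y)
    linarith
  have h4 : ∀ x, st_mx (fun t => R t + 2 * |f t x|) + st_mx (fun t => R t - 2 * |f t x|) ≤
      st_mx (fun t => R t + 2 * f t x) + st_mx (fun t => R t - 2 * f t x) := by
    intro x
    obtain ⟨t, ht⟩ := st_mx_eq (fun t => R t + 2 * |f t x|)
    obtain ⟨s, hs⟩ := st_mx_eq (fun t => R t - 2 * |f t x|)
    rw [ht, hs]
    have a1 := st_le_mx (fun t => R t + 2 * f t x) t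
    have a2 := st_le_mx (fun t => R t + 2 * f t x) s
    have a3 := st_le_mx (fun t => R t - 2 * f t x) t
    have a4 := st_le_mx (fun t => R t - 2 * f t x) s
    have h5 := abs_sub_abs_le_abs_sub (f t x) (f s x)
    rcases abs_cases (f t x - f s x) with h | h <;> linarith [h.1]
  calc _ ≤ ∑ x, π x * ((∑ y, π y * st_mx (fun t => R t + 2 * |f t y|)
          + st_mx (fun t => R t - 2 * |f t x|)) / 2) :=
        Finset.sum_le_sum fun x _ => mul_le_mul_of_nonneg_left (h1 x) (hπ x)
    _ = ∑ x, π x * ((st_mx (fun t => R t + 2 * |f t x|) + st_mx (fun t => R t - 2 * |f t x|)) / 2) := by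
        simp_rw [add_div, mul_add, Finset.sum_add_distrib]
        rw [← Finset.sum_mul, hπ1, one_mul, Finset.sum_div]
        congr 1
        exact Finset.sum_congr rfl fun y _ => by ring
    _ ≤ _ := Finset.sum_le_sum fun x _ => mul_le_mul_of_nonneg_left (by linarith [h4 x]) (hπ x)

lemma st_consum {α : Type*} [Fintype α] (n : ℕ) (h : (Fin (n + 1) → α) → ℝ) :
    ∑ ξ, h ξ = ∑ x, ∑ ξ : Fin n → α, h (Fin.cons x ξ) := by
  rw [← Fintype.sum_prod_type']
  exact (Fintype.sum_equiv (Fin.consEquiv (fun _ : Fin (n + 1) => α)) _ _ (fun _ => rfl)).symm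

/-- Sign of a Boolean. -/
def st_sg (b : Bool) : ℝ := if b then 1 else -1

lemma st_symm {ι T : Type*} [Fintype ι] [Fintype T] [Nonempty T] (π : ι → ℝ)
    (hπ : ∀ x, 0 ≤ π x) (hπ1 : ∑ x, π x = 1) (f : T → ι → ℝ) (n : ℕ) : ∀ (R : T → ℝ),
    ∑ ξ : Fin n → ι, (∏ i, π (ξ i)) * st_mx (fun t => R t + ∑ i, (∑ y, π y * |f t y| - |f t (ξ i)|)) ≤
    ∑ ζ : Fin n → ι × Bool, (∏ i, π (ζ i).1 / 2) *
      st_mx (fun t => R t + ∑ i, 2 * (st_sg (ζ i).2 * f t (ζ i).1)) := by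
  induction n with
  | zero => intro R; simp
  | succ n ih =>
    intro R
    rw [st_consum, st_consum]
    simp only [Fin.prod_univ_succ, Fin.sum_univ_succ, Fin.cons_zero, Fin.cons_succ]
    calc _ = ∑ x, π x * ∑ ξ : Fin n → ι, (∏ i, π (ξ i)) *
          st_mx (fun t => (R t + (∑ y, π y * |f t y| - |f t x|)) +
            ∑ i, (∑ y, π y * |f t y| - |f t (ξ i)|)) := by
          refine Finset.sum_congr rfl fun x _ => ?_
          rw [Finset.mul_sum]
          refine Finset.sum_congr rfl fun ξ _ => ?_
          rw [mul_assoc]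
          simp only [add_assoc]
      _ ≤ ∑ x, π x * ∑ ζ : Fin n → ι × Bool, (∏ i, π (ζ i).1 / 2) *
          st_mx (fun t => (R t + (∑ y, π y * |f t y| - |f t x|)) +
            ∑ i, 2 * (st_sg (ζ i).2 * f t (ζ i).1)) :=
          Finset.sum_le_sum fun x _ => mul_le_mul_of_nonneg_left (ih _) (hπ x)
      _ = ∑ ζ : Fin n → ι × Bool, (∏ i, π (ζ i).1 / 2) * ∑ x, π x *
          st_mx (fun t => (R t + ∑ i, 2 * (st_sg (ζ i).2 * f t (ζ i).1)) +
            (∑ y, π y * |f t y| - |f t x|)) := by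
          simp_rw [Finset.mul_sum]
          rw [Finset.sum_comm]
          refine Finset.sum_congr rfl fun ζ _ => Finset.sum_congr rfl fun x _ => ?_
          rw [mul_left_comm]
          congr 3
          funext t
          ring
      _ ≤ ∑ ζ : Fin n → ι × Bool, (∏ i, π (ζ i).1 / 2) * ∑ x, π x *
          ((st_mx (fun t => (R t + ∑ i, 2 * (st_sg (ζ i).2 * f t (ζ i).1)) + 2 * f t x) +
          st_mx (fun t => (R t + ∑ i, 2 * (st_sg (ζ i).2 * f t (ζ i).1)) - 2 * f t x)) / 2) := by
          refine Finset.sum_le_sum fun ζ _ => mul_le_mul_of_nonneg_left (st_onecoord π hπ hπ1 f _) ?_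
          exact Finset.prod_nonneg fun i _ => by have := hπ (ζ i).1; positivity
      _ = _ := by
          rw [Fintype.sum_prod_type]
          simp_rw [Finset.mul_sum]
          rw [Finset.sum_comm]
          refine Finset.sum_congr rfl fun x _ => ?_
          simp only [Fintype.sum_bool]
          rw [← Finset.sum_add_distrib]
          refine Finset.sum_congr rfl fun ζ _ => ?_
          have e1 : (fun t => R t + ∑ i, 2 * (st_sg (ζ i).2 * f t (ζ i).1) + 2 * f t x) =
            (fun t => R t + (2 * (st_sg true * f t x) + ∑ i, 2 * (st_sg (ζ i).2 * f t (ζ i).1))) := by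
            funext t; simp [st_sg]; ring
          have e2 : (fun t => R t + ∑ i, 2 * (st_sg (ζ i).2 * f t (ζ i).1) - 2 * f t x) =
            (fun t => R t + (2 * (st_sg false * f t x) + ∑ i, 2 * (st_sg (ζ i).2 * f t (ζ i).1))) := by
            funext t; simp [st_sg]; ring
          rw [e1, e2]
          ring

lemma st_expQ {ι : Type*} [Fintype ι] [DecidableEq ι] {d : ℕ} {π : ι → ℝ} {u : ι → Fin d → ℝ}
    (hfr : st_Frame π u) (M : ℕ) (y : ι) (lam : ℝ) (hl : |lam| * d ≤ 1) :
    ∑ ζ : Fin M → ι × Bool, (∏ i, π (ζ i).1 / 2) *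
      Real.exp (lam * ∑ i, st_sg (ζ i).2 * st_F u (u (ζ i).1) y) ≤ Real.exp (lam ^ 2 * d * M) := by
  have h1 : ∀ ζ : Fin M → ι × Bool, Real.exp (lam * ∑ i, st_sg (ζ i).2 * st_F u (u (ζ i).1) y)
      = ∏ i, (fun z : ι × Bool => Real.exp (lam * (st_sg z.2 * st_F u (u z.1) y))) (ζ i) := by
    intro ζ
    rw [Finset.mul_sum, Real.exp_sum]
  simp_rw [h1]
  rw [st_prodsum M (fun z : ι × Bool => π z.1 / 2)
    (fun z : ι × Bool => Real.exp (lam * (st_sg z.2 * st_F u (u z.1) y)))]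
  rw [Fintype.sum_prod_type]
  simp only [Fintype.sum_bool, st_sg]
  have h2 : ∑ x, (π x / 2 * Real.exp (lam * ((if true = true then (1:ℝ) else -1) * st_F u (u x) y))
      + π x / 2 * Real.exp (lam * ((if false = true then (1:ℝ) else -1) * st_F u (u x) y)))
      ≤ 1 + lam ^ 2 * d := by
    calc _ ≤ ∑ x, (π x + lam ^ 2 * (π x * st_F u (u y) x ^ 2)) := by
          refine Finset.sum_le_sum fun x _ => ?_
          rw [st_Ksymm u x y]
          set k := lam * st_F u (u y) x with hk
          have hkle : |k| ≤ 1 := by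
            rw [hk, abs_mul]
            exact (mul_le_mul_of_nonneg_left (st_Kle hfr y x) (abs_nonneg _)).trans hl
          have hk2 : k ^ 2 ≤ 1 := by rw [← sq_abs]; exact pow_le_one₀ (abs_nonneg _) hkle
          have hc := Real.cosh_le_exp_half_sq k
          have he := Real.abs_exp_sub_one_le (x := k ^ 2 / 2) (by rw [abs_of_nonneg (by positivity)]; linarith)
          rw [abs_of_nonneg (by positivity : 0 ≤ k ^ 2 / 2)] at he
          have he2 := (abs_le.mp he).2
          have hc2 : Real.exp k + Real.exp (-k) ≤ 2 * (1 + k ^ 2) := by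
            rw [Real.cosh_eq] at hc; linarith
          have e1 : lam * ((if true = true then (1:ℝ) else -1) * st_F u (u y) x) = k := by simp [hk]
          have e2 : lam * ((if false = true then (1:ℝ) else -1) * st_F u (u y) x) = -k := by simp [hk]
          rw [e1, e2]
          have := mul_le_mul_of_nonneg_left hc2 (hfr.nonneg x)
          have e3 : lam ^ 2 * (π x * st_F u (u y) x ^ 2) = π x * k ^ 2 := by rw [hk]; ring
          rw [e3]
          linarith
      _ = _ := by rw [Finset.sum_add_distrib, ← Finset.mul_sum, st_Ksq hfr, hfr.one]
  refine (pow_le_pow_left₀ ?_ h2 M).trans ?_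
  · refine Finset.sum_nonneg fun x _ => ?_
    have := hfr.nonneg x
    positivity
  · have := Real.add_one_le_exp (lam ^ 2 * d)
    refine (pow_le_pow_left₀ (by positivity) (by linarith : 1 + lam ^ 2 * d ≤ Real.exp (lam ^ 2 * d)) M).trans ?_
    rw [← Real.exp_nat_mul]
    apply le_of_eq; congr 1; ring

lemma st_core_one : ∃ C : ℝ, 0 < C ∧
    ∀ {ι : Type} [Fintype ι] [DecidableEq ι] {d : ℕ} (u : ι → Fin d → ℝ) (π g : ι → ℝ),
    1 ≤ d → st_Frame π u → (∀ x, 0 ≤ g x) → (∑ x, π x * g x ≤ 1) →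
    ∀ M : ℕ, C * ((d : ℝ) * Real.log (Fintype.card ι + d + 2)) ≤ M →
    ∃ ξ : Fin M → ι, (∑ i, g (ξ i) ≤ 4 * M) ∧
      ∀ a : Fin d → ℝ, M * ∑ x, π x * |st_F u a x|
        ≤ 8 * ∑ i, |st_F u a (ξ i)| := by
  classical
  refine ⟨512, by norm_num, ?_⟩
  intro ι _ _ d u π g hd hfr hg hg1 M hM
  have hne : Nonempty ι := by
    by_contra hcon
    rw [not_nonempty_iff] at hcon
    have := hfr.one
    simp at this
  have hc1 : 1 ≤ Fintype.card ι := Fintype.card_pos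
  have hc1r : (1 : ℝ) ≤ Fintype.card ι := by exact_mod_cast hc1
  have hd1 : (1 : ℝ) ≤ d := by exact_mod_cast hd
  set X : ℝ := Fintype.card ι + d + 2 with hX
  have hL1 : 1 ≤ Real.log X := by
    rw [Real.le_log_iff_exp_le (by positivity)]
    have := Real.exp_one_lt_d9
    linarith
  have hL2 : Real.log (2 * Fintype.card ι) ≤ 2 * Real.log X := by
    rw [show (2 : ℝ) * Real.log X = Real.log (X ^ 2) by rw [Real.log_pow]; norm_num]
    apply Real.log_le_log (by positivity)
    nlinarith
  have hM1 : 512 * (d : ℝ) ≤ M := by nlinarith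
  have hMr : (0 : ℝ) < M := by linarith
  -- bad witnesses
  have hw : ∀ ξ : Fin M → ι, ∃ a : Fin d → ℝ, ∑ x, π x * |st_F u a x| ≤ 1 ∧
      ((∃ a' : Fin d → ℝ, ∑ x, π x * |st_F u a' x| = 1 ∧ 7 / 8 * M < M - ∑ i, |st_F u a' (ξ i)|) →
        (∑ x, π x * |st_F u a x| = 1 ∧ 7 / 8 * M < M - ∑ i, |st_F u a (ξ i)|)) := by
    intro ξ
    by_cases h : ∃ a' : Fin d → ℝ, ∑ x, π x * |st_F u a' x| = 1 ∧ 7 / 8 * M < M - ∑ i, |st_F u a' (ξ i)|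
    · obtain ⟨a', h1, h2⟩ := h
      exact ⟨a', h1.le, fun _ => ⟨h1, h2⟩⟩
    · exact ⟨fun _ => 0, by simp [st_F], fun h' => absurd h' h⟩
  choose aw haw1 haw2 using hw
  set f : Option (Fin M → ι) → ι → ℝ := fun t x => match t with
    | none => 0
    | some ξ => st_F u (aw ξ) x with hf
  have hf1 : ∀ t, ∑ x, π x * |f t x| ≤ 1 := by
    intro t
    cases t with
    | none => simp [hf]
    | some ξ => exact haw1 ξ
  have hfK : ∀ t x, f t x = ∑ y, π y * (f t y * st_F u (u x) y) := by
    intro t x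
    cases t with
    | none => simp [hf]
    | some ξ =>
      simp only [hf]
      rw [st_frame_parseval hfr]; rfl
  set Z : (Fin M → ι) → ℝ := fun ξ => st_mx (fun t => ∑ i, (∑ y, π y * |f t y| - |f t (ξ i)|)) with hZ
  have hEZ : ∑ ξ : Fin M → ι, (∏ i, π (ξ i)) * Z ξ ≤ M / 2 := by
    have h0 := st_symm π hfr.nonneg hfr.one f M (fun _ => 0)
    simp only [zero_add] at h0
    refine h0.trans ?_
    set lam : ℝ := 1 / (16 * d) with hlam
    have hlam0 : 0 < lam := by positivity
    have hld : lam * d = 1 / 16 := by rw [hlam]; field_simp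
    have hl2 : lam ^ 2 * d * M = M / (256 * d) := by rw [hlam]; field_simp; norm_num
    set A : ℝ := M / 8 with hA
    have hpt : ∀ ζ : Fin M → ι × Bool, st_mx (fun t => ∑ i, 2 * (st_sg (ζ i).2 * f t (ζ i).1))
        ≤ 2 * A + 2 / lam * Real.exp (-(lam * A)) * ∑ y,
          (Real.exp (lam * ∑ i, st_sg (ζ i).2 * st_F u (u (ζ i).1) y)
          + Real.exp (-lam * ∑ i, st_sg (ζ i).2 * st_F u (u (ζ i).1) y)) := by
      intro ζ
      apply st_mx_le
      intro t
      set Q : ι → ℝ := fun y => ∑ i, st_sg (ζ i).2 * st_F u (u (ζ i).1) y with hQ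
      set B : ℝ := A + 1 / lam * Real.exp (-(lam * A)) * ∑ y, (Real.exp (lam * Q y) + Real.exp (-lam * Q y)) with hB
      have hQB : ∀ y, |Q y| ≤ B := by
        intro y
        have h1 := Real.add_one_le_exp (lam * (|Q y| - A))
        have h2 : Real.exp (lam * |Q y|) ≤ Real.exp (lam * Q y) + Real.exp (-lam * Q y) := by
          have := Real.exp_pos (lam * Q y)
          have := Real.exp_pos (-lam * Q y)
          rcases abs_cases (Q y) with h | h <;> rw [h.1]
          · linarith
          · rw [show lam * -Q y = -lam * Q y by ring]; linarith
        have h3 : Real.exp (lam * Q y) + Real.exp (-lam * Q y) ≤ ∑ y, (Real.exp (lam * Q y) + Real.exp (-lam * Q y)) :=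
          Finset.single_le_sum (f := fun y => Real.exp (lam * Q y) + Real.exp (-lam * Q y))
            (fun y _ => by positivity) (Finset.mem_univ y)
        have h4 : Real.exp (lam * (|Q y| - A)) = Real.exp (-(lam * A)) * Real.exp (lam * |Q y|) := by
          rw [← Real.exp_add]; congr 1; ring
        rw [h4] at h1
        have h5 := mul_le_mul_of_nonneg_left (h2.trans h3) (Real.exp_pos (-(lam * A))).le
        have h6 : lam * (|Q y| - A) ≤ Real.exp (-(lam * A)) * ∑ y, (Real.exp (lam * Q y) + Real.exp (-lam * Q y)) := by
          linarith
        have h7 := mul_le_mul_of_nonneg_left h6 (by positivity : 0 ≤ 1 / lam)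
        have h8 : 1 / lam * (lam * (|Q y| - A)) = |Q y| - A := by field_simp
        rw [h8] at h7
        rw [hB]
        linarith
      have hB0 : 0 ≤ B := (abs_nonneg _).trans (hQB hne.some)
      have e : ∑ i, 2 * (st_sg (ζ i).2 * f t (ζ i).1) = 2 * ∑ y, π y * (f t y * Q y) := by
        rw [← Finset.mul_sum]
        congr 1
        simp_rw [hfK t (ζ _).1, hQ, Finset.mul_sum]
        rw [Finset.sum_comm]
        exact Finset.sum_congr rfl fun y _ => Finset.sum_congr rfl fun i _ => by ring
      rw [e]
      have h1 : ∑ y, π y * (f t y * Q y) ≤ B := by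
        calc _ ≤ ∑ y, π y * |f t y| * B := by
              refine Finset.sum_le_sum fun y _ => ?_
              rw [mul_assoc]
              refine mul_le_mul_of_nonneg_left ?_ (hfr.nonneg y)
              refine (le_abs_self _).trans ?_
              rw [abs_mul]
              exact mul_le_mul_of_nonneg_left (hQB y) (abs_nonneg _)
          _ = (∑ y, π y * |f t y|) * B := by rw [Finset.sum_mul]
          _ ≤ 1 * B := mul_le_mul_of_nonneg_right (hf1 t) hB0
          _ = B := one_mul B
      calc _ ≤ 2 * B := by linarith
        _ = _ := by rw [hB]; ring
    have hw0 : ∀ ζ : Fin M → ι × Bool, 0 ≤ ∏ i, π (ζ i).1 / 2 := fun ζ =>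
      Finset.prod_nonneg fun i _ => by have := hfr.nonneg (ζ i).1; positivity
    have hw1 : ∑ ζ : Fin M → ι × Bool, ∏ i, π (ζ i).1 / 2 = 1 := by
      apply st_prodone M (fun z : ι × Bool => π z.1 / 2)
      rw [Fintype.sum_prod_type]
      simp only [Fintype.sum_bool, add_halves]
      exact hfr.one
    have hlabs : |lam| * d ≤ 1 := by rw [abs_of_pos hlam0, hld]; norm_num
    have hlabs' : |-lam| * d ≤ 1 := by rw [abs_neg]; exact hlabs
    calc _ ≤ ∑ ζ : Fin M → ι × Bool, (∏ i, π (ζ i).1 / 2) * (2 * A + 2 / lam * Real.exp (-(lam * A)) * ∑ y,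
          (Real.exp (lam * ∑ i, st_sg (ζ i).2 * st_F u (u (ζ i).1) y)
          + Real.exp (-lam * ∑ i, st_sg (ζ i).2 * st_F u (u (ζ i).1) y))) :=
          Finset.sum_le_sum fun ζ _ => mul_le_mul_of_nonneg_left (hpt ζ) (hw0 ζ)
      _ = 2 * A + 2 / lam * Real.exp (-(lam * A)) * ∑ y,
          (∑ ζ : Fin M → ι × Bool, (∏ i, π (ζ i).1 / 2) * Real.exp (lam * ∑ i, st_sg (ζ i).2 * st_F u (u (ζ i).1) y)
          + ∑ ζ : Fin M → ι × Bool, (∏ i, π (ζ i).1 / 2) * Real.exp (-lam * ∑ i, st_sg (ζ i).2 * st_F u (u (ζ i).1) y)) := by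
          simp_rw [mul_add (∏ i, π (_ : ι × Bool).1 / 2)]
          rw [Finset.sum_add_distrib, ← Finset.sum_mul, hw1, one_mul]
          congr 1
          simp_rw [← Finset.sum_add_distrib, Finset.mul_sum]
          rw [Finset.sum_comm]
          exact Finset.sum_congr rfl fun y _ => Finset.sum_congr rfl fun ζ _ => by ring
      _ ≤ 2 * A + 2 / lam * Real.exp (-(lam * A)) * ∑ _y : ι,
          (Real.exp (lam ^ 2 * d * M) + Real.exp (lam ^ 2 * d * M)) := by
          gcongr with y
          · exact st_expQ hfr M y lam hlabs
          · have := st_expQ hfr M y (-lam) hlabs'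
            rwa [neg_sq] at this
      _ = M / 4 + 32 * d * (2 * Fintype.card ι * Real.exp (-(M / (256 * d)))) := by
          rw [hl2, Finset.sum_const, Finset.card_univ, nsmul_eq_mul]
          have e1 : lam * A = 2 * (M / (256 * d)) := by rw [hlam, hA]; field_simp; norm_num
          have e2 : Real.exp (-(M / (256 * d))) = Real.exp (-(lam * A)) * Real.exp (M / (256 * d)) := by
            rw [← Real.exp_add, e1]; congr 1; ring
          rw [e2, hA, hlam]
          field_simp
          ring
      _ ≤ M / 4 + 32 * d * 1 := by
          gcongr
          have h1 : Real.log (2 * Fintype.card ι) ≤ M / (256 * d) := by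
            rw [le_div_iff₀ (by positivity)]
            nlinarith
          have h2 : 2 * (Fintype.card ι : ℝ) ≤ Real.exp (M / (256 * d)) := by
            rwa [← Real.log_le_iff_le_exp (by positivity)]
          rw [Real.exp_neg, mul_inv_le_iff₀ (Real.exp_pos _), one_mul]
          exact h2
      _ ≤ M / 2 := by linarith
  have hZ0 : ∀ ξ, 0 ≤ Z ξ := by
    intro ξ
    refine le_trans (le_of_eq ?_) (st_le_mx _ none)
    simp [hf]
  obtain ⟨ξ, hξ⟩ := st_exists_lt (fun ξ : Fin M → ι => ∏ i, π (ξ i))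
    (fun ξ => Z ξ / (7 / 8 * M) + (∑ i, g (ξ i)) / (4 * M))
    (fun ξ => Finset.prod_nonneg fun i _ => hfr.nonneg _) (st_prodone M π hfr.one) 1 (by
      simp_rw [mul_add, Finset.sum_add_distrib, ← mul_div_assoc, ← Finset.sum_div]
      rw [st_prodlin M π g hfr.one]
      have h1 : (∑ ξ : Fin M → ι, (∏ i, π (ξ i)) * Z ξ) / (7 / 8 * M) ≤ 4 / 7 := by
        rw [div_le_iff₀ (by positivity)]; linarith
      have h2 : M * (∑ x, π x * g x) / (4 * M) ≤ 1 / 4 := by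
        rw [div_le_iff₀ (by positivity)]; nlinarith
      linarith)
  have hgn : 0 ≤ ∑ i, g (ξ i) := Finset.sum_nonneg fun i _ => hg _
  have hz1 : 0 ≤ Z ξ / (7 / 8 * M) := div_nonneg (hZ0 ξ) (by positivity)
  have hg2 : 0 ≤ (∑ i, g (ξ i)) / (4 * M) := by positivity
  have hz2 : Z ξ < 7 / 8 * M := by
    have : Z ξ / (7 / 8 * M) < 1 := by linarith
    rwa [div_lt_one (by positivity)] at this
  refine ⟨ξ, ?_, ?_⟩
  · have : (∑ i, g (ξ i)) / (4 * M) < 1 := by linarith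
    rw [div_lt_one (by positivity)] at this
    exact this.le
  intro a
  by_contra hcon
  push Not at hcon
  set nn := ∑ x, π x * |st_F u a x| with hnn
  have hs0 : 0 ≤ ∑ i, |st_F u a (ξ i)| := Finset.sum_nonneg fun i _ => abs_nonneg _
  have hnn0 : 0 < nn := by
    by_contra h
    have : M * nn ≤ 0 := mul_nonpos_of_nonneg_of_nonpos hMr.le (not_lt.mp h)
    linarith
  have hF : ∀ x, |st_F u (fun j => nn⁻¹ * a j) x| = nn⁻¹ * |st_F u a x| := by
    intro x; rw [st_F_smul, abs_mul, abs_of_pos (inv_pos.mpr hnn0)]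
  have hb := haw2 ξ ⟨fun j => nn⁻¹ * a j, by
    simp_rw [hF, mul_left_comm _ nn⁻¹]
    rw [← Finset.mul_sum, ← hnn, inv_mul_cancel₀ hnn0.ne'], by
    simp_rw [hF]
    rw [← Finset.mul_sum]
    have : nn⁻¹ * ∑ i, |st_F u a (ξ i)| < M / 8 := by
      rw [inv_mul_lt_iff₀ hnn0]; linarith
    linarith⟩
  have h1 := st_le_mx (fun t => ∑ i, (∑ y, π y * |f t y| - |f t (ξ i)|)) (some ξ)
  have h2 : ∑ i, (∑ y, π y * |f (some ξ) y| - |f (some ξ) (ξ i)|) = M - ∑ i, |st_F u (aw ξ) (ξ i)| := by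
    simp only [hf]
    rw [Finset.sum_sub_distrib, hb.1]
    simp
  rw [h2] at h1
  have : Z ξ = st_mx (fun t => ∑ i, (∑ y, π y * |f t y| - |f t (ξ i)|)) := rfl
  linarith [hb.2]

/-- Lewis functional. -/
noncomputable def st_J {ι : Type*} [Fintype ι] {d : ℕ} (ν : ι → ℝ) (e : ι → Fin d → ℝ) (p : ℝ)
    (B : Matrix (Fin d) (Fin d) ℝ) : ℝ := ∑ x, ν x * (∑ i, (B.mulVec (e x) i) ^ 2) ^ (p / 2)

lemma st_J_smul {ι : Type*} [Fintype ι] {d : ℕ} (ν : ι → ℝ) (e : ι → Fin d → ℝ) (p : ℝ)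
    (B : Matrix (Fin d) (Fin d) ℝ) {c : ℝ} (hc : 0 ≤ c) :
    st_J ν e p (c • B) = c ^ p * st_J ν e p B := by
  unfold st_J
  rw [Finset.mul_sum]
  refine Finset.sum_congr rfl fun x _ => ?_
  have h1 : ∑ i, ((c • B).mulVec (e x) i) ^ 2 = c ^ 2 * ∑ i, (B.mulVec (e x) i) ^ 2 := by
    rw [Finset.mul_sum]
    refine Finset.sum_congr rfl fun i _ => ?_
    rw [Matrix.smul_mulVec, Pi.smul_apply, smul_eq_mul]; ring
  have h0 : 0 ≤ ∑ i, (B.mulVec (e x) i) ^ 2 := Finset.sum_nonneg fun i _ => sq_nonneg _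
  rw [h1, Real.mul_rpow (by positivity) h0, ← Real.rpow_natCast c 2, ← Real.rpow_mul hc]
  rw [show ((2 : ℕ) : ℝ) * (p / 2) = p by push_cast; ring]
  ring

lemma st_J_cont {ι : Type*} [Fintype ι] {d : ℕ} (ν : ι → ℝ) {p : ℝ} (hp : 0 < p) :
    Continuous fun w : ι → Fin d → ℝ => ∑ x, ν x * (∑ i, (w x i) ^ 2) ^ (p / 2) := by
  refine continuous_finsetSum _ fun x _ => continuous_const.mul ?_
  exact (Real.continuous_rpow_const (by positivity)).comp (by fun_prop)

lemma st_lewis_max {ι : Type*} [Fintype ι] {d : ℕ} (hd : 1 ≤ d) (ν : ι → ℝ) (hν : ∀ x, 0 < ν x)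
    (e : ι → Fin d → ℝ) (he : ∀ x, e x ≠ 0) (hinj : ∀ a : Fin d → ℝ, (∀ x, st_F e a x = 0) → a = 0)
    {p : ℝ} (hp : 1 ≤ p) :
    ∃ B : Matrix (Fin d) (Fin d) ℝ, 0 < B.det ∧ st_J ν e p B = 1 ∧
      ∀ T : Matrix (Fin d) (Fin d) ℝ, 0 < T.det → T.det ≤ st_J ν e p (T * B) ^ ((d : ℝ) / p) := by
  have hd0 : (0 : ℝ) < d := by exact_mod_cast hd
  have hp0 : 0 < p := by linarith
  have hne : Nonempty ι := by
    by_contra hcon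
    rw [not_nonempty_iff] at hcon
    have := congrFun (hinj (fun _ => 1) (fun x => hcon.elim x)) ⟨0, hd⟩
    simp at this
  have hJpos : ∀ B : Matrix (Fin d) (Fin d) ℝ, B.det ≠ 0 → 0 < st_J ν e p B := by
    intro B hB
    refine Finset.sum_pos (fun x _ => mul_pos (hν x) (Real.rpow_pos_of_pos ?_ _)) Finset.univ_nonempty
    have h1 : B.mulVec (e x) ≠ 0 := by
      intro h
      exact he x (Matrix.eq_zero_of_mulVec_eq_zero hB h)
    obtain ⟨i, hi⟩ := Function.ne_iff.mp h1
    exact Finset.sum_pos' (fun i _ => sq_nonneg _) ⟨i, Finset.mem_univ _, sq_pos_of_ne_zero hi⟩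
  -- compactness
  let L : Matrix (Fin d) (Fin d) ℝ →ₗ[ℝ] (ι → Fin d → ℝ) :=
    { toFun := fun B x => B.mulVec (e x)
      map_add' := fun A B => by funext x; exact Matrix.add_mulVec _ _ _
      map_smul' := fun c A => by funext x; exact Matrix.smul_mulVec _ _ _ }
  have hLinj : LinearMap.ker L = ⊥ := by
    rw [LinearMap.ker_eq_bot']
    intro B hB
    ext i j
    have h1 : (fun j => B i j) = 0 := by
      apply hinj
      intro x
      have := congrFun (congrFun hB x) i
      exact this
    exact congrFun h1 j
  have hemb := LinearMap.isClosedEmbedding_of_injective hLinj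
  set K : Set (ι → Fin d → ℝ) := {w | ∑ x, ν x * (∑ i, (w x i) ^ 2) ^ (p / 2) ≤ 1} with hK
  have hKc : IsCompact K := by
    have hcl : IsClosed K := isClosed_le (st_J_cont ν hp0) continuous_const
    refine IsCompact.of_isClosed_subset
      (isCompact_univ_pi fun x : ι => isCompact_univ_pi fun _ : Fin d =>
        isCompact_Icc (a := -((ν x)⁻¹ ^ (1 / p))) (b := (ν x)⁻¹ ^ (1 / p))) hcl ?_
    intro w hw x _ i _
    have hw : ∑ x, ν x * (∑ i, (w x i) ^ 2) ^ (p / 2) ≤ 1 := hw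
    have h1 : ν x * (∑ i, (w x i) ^ 2) ^ (p / 2) ≤ 1 :=
      (Finset.single_le_sum (f := fun x => ν x * (∑ i, (w x i) ^ 2) ^ (p / 2))
        (fun x _ => mul_nonneg (hν x).le (Real.rpow_nonneg (Finset.sum_nonneg fun i _ => sq_nonneg _) _))
        (Finset.mem_univ x)).trans hw
    have h2 : (w x i) ^ 2 ≤ ∑ i, (w x i) ^ 2 :=
      Finset.single_le_sum (f := fun i => (w x i) ^ 2) (fun i _ => sq_nonneg _) (Finset.mem_univ i)
    have h3 : |w x i| ^ p ≤ (ν x)⁻¹ := by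
      have : |w x i| ^ p = ((w x i) ^ 2) ^ (p / 2) := by
        rw [← sq_abs, ← Real.rpow_natCast _ 2, ← Real.rpow_mul (abs_nonneg _)]
        congr 1; push_cast; ring
      rw [this, ← mul_one (ν x)⁻¹, le_inv_mul_iff₀ (hν x)]
      refine le_trans (mul_le_mul_of_nonneg_left ?_ (hν x).le) h1
      exact Real.rpow_le_rpow (sq_nonneg _) h2 (by positivity)
    have h4 := Real.rpow_le_rpow (by positivity) h3 (by positivity : 0 ≤ 1 / p)
    rw [← Real.rpow_mul (abs_nonneg _), mul_one_div_cancel hp0.ne', Real.rpow_one] at h4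
    exact abs_le.mp h4
  have hc := hemb.isCompact_preimage hKc
  have hmemK : ∀ B, B ∈ L ⁻¹' K ↔ st_J ν e p B ≤ 1 := fun B => Iff.rfl
  obtain ⟨B, hB, hmax⟩ := hc.exists_isMaxOn (f := fun B : Matrix (Fin d) (Fin d) ℝ => B.det)
    ⟨0, by
      rw [hmemK]; unfold st_J
      simp [Real.zero_rpow (by positivity : p / 2 ≠ 0)]⟩ (by
        apply Continuous.continuousOn
        exact Continuous.matrix_det continuous_id)
  rw [hmemK] at hB
  have hscale : ∀ A : Matrix (Fin d) (Fin d) ℝ, A.det ≠ 0 → A.det ≤ B.det * st_J ν e p A ^ ((d : ℝ) / p) := by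
    intro A hA
    have hJ := hJpos A hA
    set c := st_J ν e p A ^ (-(1 / p)) with hcdef
    have hc0 : 0 < c := Real.rpow_pos_of_pos hJ _
    have h1 : (c • A) ∈ L ⁻¹' K := by
      rw [hmemK, st_J_smul ν e p A hc0.le, hcdef, ← Real.rpow_mul hJ.le]
      rw [show -(1 / p) * p = -1 by field_simp, Real.rpow_neg_one, inv_mul_cancel₀ hJ.ne']
    have h2 : (c • A).det ≤ B.det := hmax h1
    rw [Matrix.det_smul, Fintype.card_fin] at h2
    have h3 : c ^ d * st_J ν e p A ^ ((d : ℝ) / p) = 1 := by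
      rw [hcdef, ← Real.rpow_natCast, ← Real.rpow_mul hJ.le, ← Real.rpow_add hJ]
      rw [show -(1 / p) * (d : ℝ) + d / p = 0 by ring, Real.rpow_zero]
    have h4 : 0 < st_J ν e p A ^ ((d : ℝ) / p) := Real.rpow_pos_of_pos hJ _
    have := mul_le_mul_of_nonneg_right h2 h4.le
    calc A.det = (c ^ d * st_J ν e p A ^ ((d : ℝ) / p)) * A.det := by rw [h3, one_mul]
      _ = c ^ d * A.det * st_J ν e p A ^ ((d : ℝ) / p) := by ring
      _ ≤ _ := this
  have hBdet : 0 < B.det := by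
    have h1 := hscale 1 (by simp)
    rw [Matrix.det_one] at h1
    have h4 : 0 < st_J ν e p 1 ^ ((d : ℝ) / p) := Real.rpow_pos_of_pos (hJpos 1 (by simp)) _
    by_contra h
    have := mul_nonpos_of_nonpos_of_nonneg (not_lt.mp h) h4.le
    linarith
  refine ⟨B, hBdet, ?_, ?_⟩
  · refine le_antisymm hB ?_
    have h1 := hscale B hBdet.ne'
    have h2 : 1 ≤ st_J ν e p B ^ ((d : ℝ) / p) := by
      by_contra h
      nlinarith
    by_contra h
    have := Real.rpow_lt_one (hJpos B hBdet.ne').le (not_le.mp h) (by positivity : 0 < (d : ℝ) / p)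
    linarith
  · intro T hT
    have h1 := hscale (T * B) (by rw [Matrix.det_mul]; positivity)
    rw [Matrix.det_mul, mul_comm] at h1
    exact le_of_mul_le_mul_left h1 hBdet

lemma st_lewis {ι : Type*} [Fintype ι] {d : ℕ} (hd : 1 ≤ d) (ν : ι → ℝ) (hν : ∀ x, 0 < ν x)
    (e : ι → Fin d → ℝ) (he : ∀ x, e x ≠ 0) (hinj : ∀ a : Fin d → ℝ, (∀ x, st_F e a x = 0) → a = 0)
    {p : ℝ} (hp : 1 ≤ p) :
    ∃ (τ : ι → ℝ) (u : ι → Fin d → ℝ), (∀ x, 0 < τ x) ∧ st_Frame (fun x => ν x * τ x ^ p) u ∧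
      ∀ a : Fin d → ℝ, ∃ b : Fin d → ℝ, ∀ x, st_F e a x = τ x * st_F u b x := by
  have hd0 : (0 : ℝ) < d := by exact_mod_cast hd
  have hp0 : 0 < p := by linarith
  obtain ⟨B, hB, hJ, hmax⟩ := st_lewis_max hd ν hν e he hinj hp
  set φ : ι → Fin d → ℝ := fun x => B.mulVec (e x) with hφ
  set S : ι → ℝ := fun x => ∑ i, φ x i ^ 2 with hS
  have hSpos : ∀ x, 0 < S x := by
    intro x
    have h1 : φ x ≠ 0 := fun h => he x (Matrix.eq_zero_of_mulVec_eq_zero hB.ne' h)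
    obtain ⟨i, hi⟩ := Function.ne_iff.mp h1
    exact Finset.sum_pos' (fun i _ => sq_nonneg _) ⟨i, Finset.mem_univ _, sq_pos_of_ne_zero hi⟩
  have horth : ∀ i j, ∑ x, ν x * S x ^ (p / 2 - 1) * (φ x i * φ x j) = if i = j then 1 / (d : ℝ) else 0 := by
    intro i j
    set δ : ℝ := if i = j then 1 else 0 with hδ
    set T : ℝ → Matrix (Fin d) (Fin d) ℝ := fun s =>
      1 + Matrix.replicateCol Unit (Pi.single i s : Fin d → ℝ) * Matrix.replicateRow Unit (Pi.single j (1 : ℝ) : Fin d → ℝ) with hT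
    have hTdet : ∀ s, (T s).det = 1 + δ * s := by
      intro s
      rw [hT]
      simp only
      rw [Matrix.det_one_add_replicateCol_mul_replicateRow, hδ]
      by_cases hij : i = j
      · subst hij; simp
      · simp [hij, Pi.single_apply, Ne.symm hij]
    have hTv : ∀ s x, ∑ k, ((T s * B).mulVec (e x) k) ^ 2 = S x + 2 * s * (φ x i * φ x j) + s ^ 2 * φ x j ^ 2 := by
      intro s x
      have h1 : ∀ k, (T s * B).mulVec (e x) k = φ x k + (if k = i then s * φ x j else 0) := by
        intro k
        rw [← Matrix.mulVec_mulVec]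
        change (T s).mulVec (φ x) k = _
        rw [hT]
        simp only
        rw [Matrix.add_mulVec, Matrix.one_mulVec, Pi.add_apply, ← Matrix.mulVec_mulVec]
        congr 1
        simp [Matrix.mulVec, dotProduct, Matrix.replicateCol, Matrix.replicateRow, Pi.single_apply]
      simp_rw [h1]
      have h2 : ∀ k, (φ x k + (if k = i then s * φ x j else 0)) ^ 2 =
          φ x k ^ 2 + (if k = i then 2 * s * (φ x k * φ x j) + s ^ 2 * φ x j ^ 2 else 0) := by
        intro k; split_ifs <;> ring
      simp_rw [h2]
      rw [Finset.sum_add_distrib, Finset.sum_ite_eq' Finset.univ i]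
      simp only [Finset.mem_univ, if_true, hS]
      ring
    set h : ℝ → ℝ := fun s => ∑ x, ν x * (S x + 2 * s * (φ x i * φ x j) + s ^ 2 * φ x j ^ 2) ^ (p / 2)
      - (1 + δ * s) ^ (p / d) with hh
    have hder : HasDerivAt h (∑ x, ν x * ((2 * (φ x i * φ x j)) * (p / 2) * S x ^ (p / 2 - 1)) - δ * (p / d)) 0 := by
      have hd1 : ∀ x ∈ Finset.univ, HasDerivAt (fun s : ℝ => ν x * (S x + 2 * s * (φ x i * φ x j) + s ^ 2 * φ x j ^ 2) ^ (p / 2))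
          (ν x * ((2 * (φ x i * φ x j)) * (p / 2) * S x ^ (p / 2 - 1))) 0 := by
        intro x _
        apply HasDerivAt.const_mul
        have h0 : HasDerivAt (fun s : ℝ => S x + 2 * s * (φ x i * φ x j) + s ^ 2 * φ x j ^ 2) (2 * (φ x i * φ x j)) 0 := by
          have a1 : HasDerivAt (fun s : ℝ => s) 1 0 := hasDerivAt_id 0
          have := ((a1.const_mul 2).mul_const (φ x i * φ x j)).const_add (S x) |>.add ((a1.pow 2).mul_const (φ x j ^ 2))
          exact this.congr_deriv (by simp)
        have := h0.rpow_const (p := p / 2) (Or.inl (by simp; exact (hSpos x).ne'))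
        exact this.congr_deriv (by simp)
      have hd2 : HasDerivAt (fun s : ℝ => (1 + δ * s) ^ (p / d)) (δ * (p / d)) 0 := by
        have h0 : HasDerivAt (fun s : ℝ => 1 + δ * s) δ 0 := by
          have a1 : HasDerivAt (fun s : ℝ => s) 1 0 := hasDerivAt_id 0
          have := (a1.const_mul δ).const_add 1
          exact this.congr_deriv (by simp)
        have := h0.rpow_const (p := p / d) (Or.inl (by simp))
        exact this.congr_deriv (by simp)
      exact (HasDerivAt.fun_sum hd1).sub hd2
    have hmin : IsLocalMin h 0 := by
      have hcont : Filter.Tendsto (fun s : ℝ => 1 + δ * s) (nhds 0) (nhds (1 + δ * 0)) := by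
        apply Continuous.tendsto; fun_prop
      have hev : ∀ᶠ s in nhds (0 : ℝ), 0 < 1 + δ * s := by
        apply hcont.eventually (lt_mem_nhds _)
        norm_num
      filter_upwards [hev] with s hs
      have h0 : h 0 = 0 := by
        have : ∑ x, ν x * S x ^ (p / 2) = 1 := hJ
        simp only [hh]
        simp [this]
      rw [h0]
      have h1 := hmax (T s) (by rw [hTdet]; exact hs)
      rw [hTdet] at h1
      have e1 : st_J ν e p (T s * B) = ∑ x, ν x * (S x + 2 * s * (φ x i * φ x j) + s ^ 2 * φ x j ^ 2) ^ (p / 2) := by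
        unfold st_J
        simp_rw [hTv]
      have hJ0 : 0 ≤ st_J ν e p (T s * B) := Finset.sum_nonneg fun x _ => mul_nonneg (hν x).le
        (Real.rpow_nonneg (Finset.sum_nonneg fun i _ => sq_nonneg _) _)
      have h2 := Real.rpow_le_rpow hs.le h1 (by positivity : 0 ≤ p / d)
      rw [← Real.rpow_mul hJ0, show (d : ℝ) / p * (p / d) = 1 by field_simp, Real.rpow_one, e1] at h2
      simp only [hh]
      linarith
    have hz := hmin.hasDerivAt_eq_zero hder
    have e2 : ∑ x, ν x * ((2 * (φ x i * φ x j)) * (p / 2) * S x ^ (p / 2 - 1))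
        = p * ∑ x, ν x * S x ^ (p / 2 - 1) * (φ x i * φ x j) := by
      rw [Finset.mul_sum]; exact Finset.sum_congr rfl fun x _ => by ring
    rw [e2] at hz
    have e3 : p * (∑ x, ν x * S x ^ (p / 2 - 1) * (φ x i * φ x j)) = p * (δ * (1 / d)) := by
      rw [show p * (δ * (1 / d)) = δ * (p / d) by ring]; linarith
    have e4 := mul_left_cancel₀ hp0.ne' e3
    rw [e4, hδ]
    split_ifs <;> simp
  have hτp : ∀ x, Real.sqrt (S x) ^ p = S x ^ (p / 2) := by
    intro x
    rw [Real.sqrt_eq_rpow, ← Real.rpow_mul (hSpos x).le]; congr 1; ring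
  have hsq : ∀ x, Real.sqrt (S x) ^ 2 = S x := fun x => Real.sq_sqrt (hSpos x).le
  have hsd : Real.sqrt d ^ 2 = d := Real.sq_sqrt hd0.le
  have hs0 : ∀ x, 0 < Real.sqrt (S x) := fun x => Real.sqrt_pos.mpr (hSpos x)
  have hsd0 : 0 < Real.sqrt d := Real.sqrt_pos.mpr hd0
  refine ⟨fun x => Real.sqrt (S x), fun x i => Real.sqrt d * φ x i / Real.sqrt (S x), hs0, ?_, ?_⟩
  · refine ⟨fun x => ?_, ?_, fun x => ?_, fun i j => ?_⟩
    · have := hν x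
      have := hs0 x
      positivity
    · simp_rw [hτp]; exact hJ
    · have h1 : ∀ i, (Real.sqrt d * φ x i / Real.sqrt (S x)) ^ 2 = d * φ x i ^ 2 / S x := by
        intro i; rw [div_pow, mul_pow, hsq, hsd]
      simp_rw [h1]
      rw [← Finset.sum_div, ← Finset.mul_sum]
      have := (hSpos x).ne'
      change (d : ℝ) * S x / S x = d
      field_simp
    · have h1 : ∀ x, ν x * Real.sqrt (S x) ^ p * (Real.sqrt d * φ x i / Real.sqrt (S x) * (Real.sqrt d * φ x j / Real.sqrt (S x)))
          = d * (ν x * S x ^ (p / 2 - 1) * (φ x i * φ x j)) := by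
        intro x
        rw [hτp, Real.rpow_sub_one (hSpos x).ne']
        have e1 : Real.sqrt d * φ x i / Real.sqrt (S x) * (Real.sqrt d * φ x j / Real.sqrt (S x))
          = d * (φ x i * φ x j) / S x := by
          rw [div_mul_div_comm, ← sq (Real.sqrt (S x)), hsq, show Real.sqrt d * φ x i * (Real.sqrt d * φ x j) = Real.sqrt d ^ 2 * (φ x i * φ x j) by ring, hsd]
        rw [e1]; ring
      simp_rw [h1]
      rw [← Finset.mul_sum, horth]
      split_ifs
      · field_simp
      · simp
  · intro a
    set b0 : Fin d → ℝ := Matrix.vecMul a B⁻¹ with hb0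
    refine ⟨fun i => b0 i / Real.sqrt d, fun x => ?_⟩
    have h1 : st_F e a x = ∑ i, b0 i * φ x i := by
      change dotProduct a (e x) = dotProduct b0 (B.mulVec (e x))
      rw [hb0, Matrix.dotProduct_mulVec, Matrix.vecMul_vecMul, Matrix.nonsing_inv_mul _ (by simpa using hB.ne'),
        Matrix.vecMul_one]
    rw [h1]
    unfold st_F
    rw [Finset.mul_sum]
    refine Finset.sum_congr rfl fun i _ => ?_
    have := (hs0 x).ne'
    field_simp

/-- Restriction to a full-rank subfamily. -/
lemma st_restrict {ι : Type} [Fintype ι] {N : ℕ} (ν : ι → ℝ) (hν : ∀ x, 0 ≤ ν x) (e : ι → Fin N → ℝ) :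
    ∃ (s : Finset ι) (d : ℕ) (e' : s → Fin d → ℝ), d ≤ N ∧ (∀ x : s, 0 < ν x) ∧ (∀ x, e' x ≠ 0) ∧
      (∀ a : Fin d → ℝ, (∀ x, st_F e' a x = 0) → a = 0) ∧
      (∀ a : Fin N → ℝ, ∃ b : Fin d → ℝ, ∀ x : s, st_F e a x = st_F e' b x) ∧
      (∀ a : Fin N → ℝ, ∀ φ : ℝ → ℝ, φ 0 = 0 → ∑ x, ν x * φ (st_F e a x) = ∑ x : s, ν x * φ (st_F e a x)) := by
  classical
  set s : Finset ι := Finset.univ.filter fun x => 0 < ν x ∧ e x ≠ 0 with hs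
  set V : Submodule ℝ (Fin N → ℝ) := Submodule.span ℝ (Set.range fun x : s => e x) with hV
  have hmem : ∀ x : s, e x ∈ V := fun x => Submodule.subset_span ⟨x, rfl⟩
  let c := Module.finBasis ℝ V
  have hexp : ∀ (a : Fin N → ℝ) (x : s), st_F e a x = st_F (fun x : s => fun k => c.repr ⟨e x, hmem x⟩ k)
      (fun k => ∑ j, a j * (c k : Fin N → ℝ) j) x := by
    intro a x
    have h1 : e x = ∑ k, c.repr ⟨e x, hmem x⟩ k • (c k : Fin N → ℝ) := by
      have := congrArg (Subtype.val) (c.sum_repr ⟨e x, hmem x⟩)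
      rw [Submodule.coe_sum] at this
      exact this.symm
    unfold st_F
    simp_rw [Finset.sum_mul]
    rw [Finset.sum_comm]
    refine Finset.sum_congr rfl fun j _ => ?_
    have h2 := congrFun h1 j
    rw [Finset.sum_apply] at h2
    rw [h2, Finset.mul_sum]
    refine Finset.sum_congr rfl fun k _ => ?_
    simp only [Pi.smul_apply, smul_eq_mul]; ring
  refine ⟨s, Module.finrank ℝ V, fun x => fun k => c.repr ⟨e x, hmem x⟩ k, ?_, ?_, ?_, ?_, ?_, ?_⟩
  · simpa using Submodule.finrank_le V
  · intro x; exact (Finset.mem_filter.mp x.2).2.1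
  · intro x h
    have h0 := (Finset.mem_filter.mp x.2).2.2
    apply h0
    have h1 : c.repr ⟨e x, hmem x⟩ = 0 := by ext k; exact congrFun h k
    have h2 := c.repr.map_eq_zero_iff.mp h1
    exact congrArg Subtype.val h2
  · intro a ha
    let ℓ : V →ₗ[ℝ] ℝ := ∑ k, a k • c.coord k
    have hℓ : ∀ v : V, ℓ v = ∑ k, a k * c.repr v k := by intro v; simp [ℓ]
    have h0 : ∀ v (hv : v ∈ V), ℓ ⟨v, hv⟩ = 0 := by
      intro v hv
      induction hv using Submodule.span_induction with
      | mem v h =>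
        obtain ⟨x, rfl⟩ := h
        rw [hℓ]; exact ha x
      | zero => exact map_zero ℓ
      | add v w hv hw h1 h2 =>
        have := map_add ℓ ⟨v, hv⟩ ⟨w, hw⟩
        rw [h1, h2, add_zero] at this; exact this
      | smul r v hv h1 =>
        have := map_smul ℓ r ⟨v, hv⟩
        rw [h1, smul_zero] at this; exact this
    funext k
    have := h0 _ (c k).2
    rw [Subtype.coe_eta, hℓ] at this
    simpa [Finsupp.single_apply] using this
  · intro a
    exact ⟨_, hexp a⟩
  · intro a φ hφ
    rw [Finset.sum_coe_sort s (fun x => ν x * φ (st_F e a x))]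
    symm
    apply Finset.sum_subset (Finset.subset_univ s)
    intro x _ hx
    have hx' : ¬ (0 < ν x ∧ e x ≠ 0) := fun h => hx (Finset.mem_filter.mpr ⟨Finset.mem_univ _, h⟩)
    by_cases h : 0 < ν x
    · have : e x = 0 := by by_contra h'; exact hx' ⟨h, h'⟩
      have : st_F e a x = 0 := by unfold st_F; simp [this]
      rw [this, hφ, mul_zero]
    · rw [le_antisymm (not_lt.mp h) (hν x), zero_mul]

lemma st_weighted {p : ℝ} (hp : 1 ≤ p) {K : ℝ} {ι : Type} [Fintype ι] {N : ℕ} {M : ℕ} (hM : 1 ≤ M)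
    (hcore : ∀ (s : Finset ι) (d : ℕ) (u : s → Fin d → ℝ) (π g : s → ℝ), 1 ≤ d → d ≤ N → st_Frame π u →
      (∀ x, 0 ≤ g x) → ∑ x, π x * g x ≤ 1 → ∃ ξ : Fin M → s, ∑ i, g (ξ i) ≤ 4 * M ∧
        ∀ a, M * ∑ x, π x * |st_F u a x| ^ p ≤ K * ∑ i, |st_F u a (ξ i)| ^ p)
    (ν : ι → ℝ) (hν : ∀ x, 0 ≤ ν x) (hν1 : ∑ x, ν x ≤ 1) (e : ι → Fin N → ℝ) :
    ∃ (m : ℕ) (ξ : Fin m → ι) (w : Fin m → ℝ), m ≤ M ∧ (∀ i, 0 ≤ w i) ∧ ∑ i, w i ≤ 4 ∧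
      ∀ a, ∑ x, ν x * |st_F e a x| ^ p ≤ K * ∑ i, w i * |st_F e a (ξ i)| ^ p := by
  have hp0 : 0 < p := by linarith
  have hM0 : (0 : ℝ) < M := by exact_mod_cast hM
  obtain ⟨s, d, e', hdN, hνs, he', hinj, hrep, hsum⟩ := st_restrict ν hν e
  have hφ : (fun t : ℝ => |t| ^ p) 0 = 0 := by simp [hp0.ne']
  rcases Nat.eq_zero_or_pos d with hd | hd
  · subst hd
    refine ⟨0, Fin.elim0, Fin.elim0, Nat.zero_le _, fun i => i.elim0, by simp, fun a => ?_⟩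
    rw [hsum a (fun t => |t| ^ p) hφ]
    obtain ⟨b, hb⟩ := hrep a
    have : ∀ x : s, st_F e a x = 0 := by intro x; rw [hb x]; simp [st_F]
    simp [this, hp0.ne']
  obtain ⟨τ, u, hτ, hfr, hlew⟩ := st_lewis hd (fun x : s => ν x) hνs e' he' hinj hp
  have hτp : ∀ x, 0 < τ x ^ p := fun x => Real.rpow_pos_of_pos (hτ x) p
  obtain ⟨ξ, hg, hξ⟩ := hcore s d u _ (fun x => (τ x ^ p)⁻¹) hd hdN hfr (fun x => (inv_pos.mpr (hτp x)).le) (by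
    refine le_trans (le_of_eq ?_) ((Finset.sum_le_univ_sum_of_nonneg (s := s) hν).trans hν1)
    rw [← Finset.sum_coe_sort s]
    refine Finset.sum_congr rfl fun x _ => ?_
    have := (hτp x).ne'
    field_simp)
  refine ⟨M, fun i => ξ i, fun i => (τ (ξ i) ^ p)⁻¹ / M, le_rfl, fun i => ?_, ?_, fun a => ?_⟩
  · exact div_nonneg (inv_pos.mpr (hτp _)).le hM0.le
  · rw [← Finset.sum_div, div_le_iff₀ hM0]; exact hg
  · rw [hsum a (fun t => |t| ^ p) hφ]
    obtain ⟨b, hb⟩ := hrep a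
    obtain ⟨c, hc⟩ := hlew b
    have hab : ∀ x : s, |st_F e a x| ^ p = τ x ^ p * |st_F u c x| ^ p := by
      intro x
      rw [hb x, hc x, abs_mul, abs_of_pos (hτ x), Real.mul_rpow (hτ x).le (abs_nonneg _)]
    have h1 := hξ c
    simp_rw [hab]
    have h2 : ∑ x : s, ν x * (τ x ^ p * |st_F u c x| ^ p) = ∑ x : s, ν x * τ x ^ p * |st_F u c x| ^ p :=
      Finset.sum_congr rfl fun x _ => by ring
    have h3 : ∑ i, (τ (ξ i) ^ p)⁻¹ / M * (τ (ξ i) ^ p * |st_F u c (ξ i)| ^ p) = (∑ i, |st_F u c (ξ i)| ^ p) / M := by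
      rw [Finset.sum_div]
      refine Finset.sum_congr rfl fun i _ => ?_
      have := (hτp (ξ i)).ne'
      field_simp
    rw [h2, h3, mul_div_assoc', le_div_iff₀ hM0, mul_comm]
    exact h1

/-- Rounding weights to multiplicities. -/
lemma st_round {ι : Type} {n : ℕ} (ξ : Fin n → ι) (w : Fin n → ℝ) (hw : ∀ i, 0 ≤ w i) {A : ℝ}
    (hA : ∑ i, w i ≤ A) {M : ℕ} (hM : 1 ≤ M) (hn : n ≤ M) :
    ∃ (m : ℕ) (η : Fin m → ι), (m : ℝ) ≤ (A + 1) * M ∧ ∀ h : ι → ℝ, (∀ x, 0 ≤ h x) →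
      ∑ i, w i * h (ξ i) ≤ (A + 1) * ((1 / (m : ℝ)) * ∑ j, h (η j)) := by
  have hM0 : (0 : ℝ) < M := by exact_mod_cast hM
  set k : Fin n → ℕ := fun i => ⌈(M : ℝ) * w i⌉₊ with hk
  have hmle : ((∑ i, k i : ℕ) : ℝ) ≤ (A + 1) * M := by
    push_cast
    calc ∑ i, (k i : ℝ) ≤ ∑ i, (M * w i + 1) := by
          refine Finset.sum_le_sum fun i _ => ?_
          exact (Nat.ceil_lt_add_one (mul_nonneg hM0.le (hw i))).le
      _ = M * ∑ i, w i + n := by rw [Finset.sum_add_distrib, ← Finset.mul_sum]; simp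
      _ ≤ M * A + M := by
          have : (n : ℝ) ≤ M := by exact_mod_cast hn
          have := mul_le_mul_of_nonneg_left hA hM0.le
          linarith
      _ = _ := by ring
  refine ⟨∑ i, k i, fun j => ξ (finSigmaFinEquiv.symm j).1, hmle, fun h hh => ?_⟩
  have h1 : ∑ j : Fin (∑ i, k i), h (ξ (finSigmaFinEquiv.symm j).1) = ∑ i, (k i : ℝ) * h (ξ i) := by
    rw [Equiv.sum_comp finSigmaFinEquiv.symm (fun y : (i : Fin n) × Fin (k i) => h (ξ y.1)), Fintype.sum_sigma]
    simp
  rw [h1]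
  have h2 : ∀ i, w i ≤ (k i : ℝ) / M := by
    intro i; rw [le_div_iff₀ hM0, mul_comm]; exact Nat.le_ceil _
  have h3 : ∑ i, w i * h (ξ i) ≤ (∑ i, (k i : ℝ) * h (ξ i)) / M := by
    rw [Finset.sum_div]
    refine Finset.sum_le_sum fun i _ => ?_
    calc _ ≤ (k i : ℝ) / M * h (ξ i) := mul_le_mul_of_nonneg_right (h2 i) (hh _)
      _ = _ := by ring
  refine h3.trans ?_
  have h5 : 0 ≤ ∑ i, (k i : ℝ) * h (ξ i) := Finset.sum_nonneg fun i _ => mul_nonneg (Nat.cast_nonneg _) (hh _)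
  rcases Nat.eq_zero_or_pos (∑ i, k i) with h0 | h0
  · have h6 : ∀ i, k i = 0 := fun i => (Finset.sum_eq_zero_iff.mp h0) i (Finset.mem_univ _)
    simp [h6]
  · have hm0 : (0 : ℝ) < ((∑ i, k i : ℕ) : ℝ) := by exact_mod_cast h0
    rw [div_le_iff₀ hM0]
    generalize ((∑ i, k i : ℕ) : ℝ) = m at *
    generalize ∑ i, (k i : ℝ) * h (ξ i) = S at *
    rw [show (A + 1) * (1 / m * S) * M = ((A + 1) * M) * S / m by ring, le_div_iff₀ hm0, mul_comm]
    exact mul_le_mul_of_nonneg_right hmle h5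

/-- Sampling property for frames. -/
def st_Core (p θ K : ℝ) : Prop := ∃ C : ℝ, 0 < C ∧
    ∀ {ι : Type} [Fintype ι] [DecidableEq ι] {d : ℕ} (u : ι → Fin d → ℝ) (π g : ι → ℝ),
    1 ≤ d → st_Frame π u → (∀ x, 0 ≤ g x) → (∑ x, π x * g x ≤ 1) →
    ∀ M : ℕ, C * ((d : ℝ) ^ θ * Real.log (Fintype.card ι + d + 2)) ≤ M →
    ∃ ξ : Fin M → ι, (∑ i, g (ξ i) ≤ 4 * M) ∧
      ∀ a : Fin d → ℝ, M * ∑ x, π x * |st_F u a x| ^ p ≤ K * ∑ i, |st_F u a (ξ i)| ^ p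

/-- Discretization property for finite families. -/
def st_Fin (p : ℝ) (Φ : ℕ → ℝ) : Prop := ∃ C K : ℝ, 0 < C ∧ 0 < K ∧
    ∀ {ι : Type} [Fintype ι] {N : ℕ}, 3 ≤ N → ∀ (ν : ι → ℝ), (∀ x, 0 ≤ ν x) → ∑ x, ν x ≤ 1 →
    ∀ e : ι → Fin N → ℝ, ∃ (m : ℕ) (η : Fin m → ι), (m : ℝ) ≤ C * Φ N ∧
      ∀ a, ∑ x, ν x * |st_F e a x| ^ p ≤ K * ((1 / (m : ℝ)) * ∑ j, |st_F e a (η j)| ^ p)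

lemma st_two_stage {p θ K : ℝ} (hp : 1 ≤ p) (hθ : 0 ≤ θ) (hK : 0 < K) (hc : st_Core p θ K) :
    st_Fin p (fun N => (N : ℝ) ^ θ * Real.log N) := by
  classical
  obtain ⟨C0, hC0, hcrude⟩ := st_core_crude p hp
  obtain ⟨C1, hC1, hcore⟩ := hc
  have h2p : (0 : ℝ) < 2 ^ p := Real.rpow_pos_of_pos (by norm_num) p
  set K0 : ℝ := 32 * 2 ^ p * 2 ^ p with hK0
  have hK0p : 0 < K0 := by positivity
  set A : ℝ := Real.log (C0 + 4) + (p + 3) with hA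
  have hA0 : 0 < A := by
    have := Real.log_pos (by linarith : 1 < C0 + 4)
    linarith
  refine ⟨17 * (C1 * A + 1), K0 * (4 * K) * 17, by positivity, by positivity, ?_⟩
  intro ι _ N hN ν hν hν1 e
  have hN3 : (3 : ℝ) ≤ N := by exact_mod_cast hN
  have hN1 : (1 : ℝ) ≤ N := by linarith
  have hN0 : (0 : ℝ) < N := by linarith
  have hlog : 1 ≤ Real.log N := by
    rw [Real.le_log_iff_exp_le hN0]
    exact (Real.exp_one_lt_three.le).trans hN3
  set Q : ℝ := (N : ℝ) ^ p * N ^ 3 with hQ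
  have hNp1 : 1 ≤ (N : ℝ) ^ p := Real.one_le_rpow hN1 (by linarith)
  have hN31 : (1 : ℝ) ≤ (N : ℝ) ^ 3 := one_le_pow₀ hN1
  have hNQ : (N : ℝ) ≤ Q := by
    have h1 : (N : ℝ) ≤ (N : ℝ) ^ 3 := le_self_pow₀ hN1 (by norm_num)
    have h2 : (N : ℝ) ^ 3 ≤ Q := le_mul_of_one_le_left (by positivity) hNp1
    linarith
  have hQ1 : 1 ≤ Q := by linarith
  set M0 : ℕ := ⌈C0 * Q⌉₊ with hM0
  have hM0l : C0 * Q ≤ M0 := Nat.le_ceil _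
  have hM0u : (M0 : ℝ) ≤ C0 * Q + 1 := (Nat.ceil_lt_add_one (by positivity)).le
  have hM01 : 1 ≤ M0 := by
    have : (0 : ℝ) < M0 := lt_of_lt_of_le (by positivity) hM0l
    exact_mod_cast this
  obtain ⟨m0, ξ0, w0, hm0, hw0, hw0s, h0⟩ := st_weighted (K := K0) hp (N := N) hM01 (by
    intro s d u π g hd hdN hfr hg hg1
    refine hcrude u π g hd hfr hg hg1 M0 (le_trans ?_ hM0l)
    have : (d : ℝ) ≤ N := by exact_mod_cast hdN
    rw [hQ]
    gcongr) ν hν hν1 e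
  -- second stage
  have hNθ : 1 ≤ (N : ℝ) ^ θ := Real.one_le_rpow hN1 hθ
  set M1 : ℕ := ⌈C1 * A * ((N : ℝ) ^ θ * Real.log N)⌉₊ with hM1
  have hM1l : C1 * A * ((N : ℝ) ^ θ * Real.log N) ≤ M1 := Nat.le_ceil _
  have hNl : 1 ≤ (N : ℝ) ^ θ * Real.log N := by nlinarith
  have hM1u : (M1 : ℝ) ≤ (C1 * A + 1) * ((N : ℝ) ^ θ * Real.log N) := by
    have : (M1 : ℝ) ≤ C1 * A * ((N : ℝ) ^ θ * Real.log N) + 1 := (Nat.ceil_lt_add_one (by positivity)).le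
    linarith
  have hM11 : 1 ≤ M1 := by
    have : (0 : ℝ) < M1 := lt_of_lt_of_le (by positivity) hM1l
    exact_mod_cast this
  obtain ⟨m1, ξ1, w1, hm1, hw1, hw1s, h1⟩ := st_weighted (K := K) hp (N := N) hM11 (by
    intro s d u π g hd hdN hfr hg hg1
    refine hcore u π g hd hfr hg hg1 M1 (le_trans ?_ hM1l)
    have hdr : (d : ℝ) ≤ N := by exact_mod_cast hdN
    have hcard : (Fintype.card s : ℝ) ≤ M0 := by
      have : Fintype.card s ≤ M0 := by
        refine le_trans ?_ hm0
        simpa using Finset.card_le_univ s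
      exact_mod_cast this
    have hl : Real.log ((Fintype.card s : ℝ) + d + 2) ≤ A * Real.log N := by
      calc Real.log ((Fintype.card s : ℝ) + d + 2) ≤ Real.log ((C0 + 4) * Q) := by
            apply Real.log_le_log (by positivity)
            nlinarith
        _ = Real.log (C0 + 4) + (p + 3) * Real.log N := by
            rw [Real.log_mul (by positivity) (by positivity), hQ, Real.log_mul (by positivity) (by positivity),
              Real.log_rpow hN0, Real.log_pow]
            push_cast; ring
        _ ≤ A * Real.log N := by
            have := Real.log_pos (by linarith : 1 < C0 + 4)
            rw [hA]; nlinarith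
    have hl0 : 0 ≤ Real.log ((Fintype.card s : ℝ) + d + 2) := Real.log_nonneg (by
      have : (0 : ℝ) ≤ Fintype.card s := Nat.cast_nonneg _
      have : (0 : ℝ) ≤ d := Nat.cast_nonneg _
      linarith)
    rw [show C1 * A * ((N : ℝ) ^ θ * Real.log N) = C1 * ((N : ℝ) ^ θ * (A * Real.log N)) by ring]
    gcongr) (fun i => w0 i / 4) (fun i => by have := hw0 i; positivity) (by
      rw [← Finset.sum_div]; linarith) (fun i => e (ξ0 i))
  obtain ⟨m, η, hm, hη⟩ := st_round (fun i => ξ0 (ξ1 i)) (fun i => 4 * w1 i) (fun i => by have := hw1 i; positivity)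
    (A := 16) (by rw [← Finset.mul_sum]; linarith) hM11 hm1
  refine ⟨m, η, ?_, fun a => ?_⟩
  · calc (m : ℝ) ≤ (16 + 1) * M1 := hm
      _ ≤ (16 + 1) * ((C1 * A + 1) * ((N : ℝ) ^ θ * Real.log N)) := by gcongr
      _ = _ := by ring
  · have e0 := h0 a
    have e1 := h1 a
    have e2 := hη (fun x => |st_F e a x| ^ p) (fun x => by positivity)
    have e3 : ∑ i, w0 i * |st_F e a (ξ0 i)| ^ p = 4 * ∑ i, w0 i / 4 * |st_F (fun i => e (ξ0 i)) a i| ^ p := by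
      rw [Finset.mul_sum]; exact Finset.sum_congr rfl fun i _ => by
        change _ = 4 * (w0 i / 4 * |st_F e a (ξ0 i)| ^ p); ring
    have e4 : ∑ i, 4 * w1 i * |st_F e a (ξ0 (ξ1 i))| ^ p = 4 * ∑ i, w1 i * |st_F (fun i => e (ξ0 i)) a (ξ1 i)| ^ p := by
      rw [Finset.mul_sum]; exact Finset.sum_congr rfl fun i _ => by
        change _ = 4 * (w1 i * |st_F e a (ξ0 (ξ1 i))| ^ p); ring
    rw [e4] at e2
    rw [e3] at e0
    calc _ ≤ K0 * (4 * ∑ i, w0 i / 4 * |st_F (fun i => e (ξ0 i)) a i| ^ p) := e0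
      _ ≤ K0 * (4 * (K * ∑ i, w1 i * |st_F (fun i => e (ξ0 i)) a (ξ1 i)| ^ p)) := by gcongr
      _ = K0 * K * (4 * ∑ i, w1 i * |st_F (fun i => e (ξ0 i)) a (ξ1 i)| ^ p) := by ring
      _ ≤ K0 * K * ((16 + 1) * ((1 / (m : ℝ)) * ∑ j, |st_F e a (η j)| ^ p)) := by gcongr
      _ ≤ K0 * (4 * K) * 17 * ((1 / (m : ℝ)) * ∑ j, |st_F e a (η j)| ^ p) := by
          have : 0 ≤ (1 / (m : ℝ)) * ∑ j, |st_F e a (η j)| ^ p := by positivity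
          nlinarith [mul_nonneg (mul_pos hK0p hK).le this]

lemma st_fin_high {p : ℝ} (hp : 2 < p) : st_Fin p (fun N => (N : ℝ) ^ (p / 2) * Real.log N) := by
  have h2p : (0 : ℝ) < 2 ^ p := Real.rpow_pos_of_pos (by norm_num) p
  exact st_two_stage (by linarith) (by positivity) (by positivity) (st_core_high p hp)

lemma st_fin_low {p : ℝ} (hp : 1 < p) (hp2 : p < 2) : st_Fin p (fun N => (N : ℝ) ^ (1 : ℝ) * Real.log N) := by
  have h2p : (0 : ℝ) < 2 ^ p := Real.rpow_pos_of_pos (by norm_num) p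
  refine st_two_stage (K := 32 * 2 ^ p * 2 ^ p) (by linarith) (by positivity) (by positivity) ?_
  obtain ⟨C, hC, h⟩ := st_core_low p hp hp2
  refine ⟨C, hC, ?_⟩
  simp_rw [Real.rpow_one]
  exact h

lemma st_fin_one : st_Fin 1 (fun N => (N : ℝ) ^ (1 : ℝ) * Real.log N) := by
  refine st_two_stage (K := 8) (by norm_num) (by norm_num) (by norm_num) ?_
  obtain ⟨C, hC, h⟩ := st_core_one
  refine ⟨C, hC, ?_⟩
  simp_rw [Real.rpow_one]
  exact h

lemma st_bss_spec {d : ℕ} (B : Matrix (Fin d) (Fin d) ℝ) (hB : B.PosDef) (htr : B⁻¹.trace ≤ 1 / 4) :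
    ∃ R : Matrix (Fin d) (Fin d) ℝ, R.PosDef ∧ (B - 1) * R = 1 ∧ (B - 1).PosDef ∧ R.trace ≤ 1 / 3 ∧
      R.trace - B⁻¹.trace ≤ (R * R).trace := by
  have hU := hB.1.spectral_theorem
  set l := hB.1.eigenvalues with hl
  have hlpos : ∀ i, 0 < l i := fun i => hB.eigenvalues_pos i
  set Ψ := Unitary.conjStarAlgAut ℝ (Matrix (Fin d) (Fin d) ℝ) hB.1.eigenvectorUnitary with hΨ
  have hBΨ : B = Ψ (Matrix.diagonal l) := hU
  have htrΨ : ∀ g : Fin d → ℝ, (Ψ (Matrix.diagonal g)).trace = ∑ i, g i := by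
    intro g
    rw [hΨ, Unitary.conjStarAlgAut_apply, Matrix.trace_mul_cycle]
    simp [Matrix.trace_diagonal]
  have hpd : ∀ g : Fin d → ℝ, (∀ i, 0 < g i) → (Ψ (Matrix.diagonal g)).PosDef := by
    intro g hg
    rw [hΨ, Unitary.conjStarAlgAut_apply]
    rw [Matrix.IsUnit.posDef_star_right_conjugate_iff]
    · exact Matrix.posDef_diagonal_iff.mpr hg
    · exact ((Unitary.toUnits hB.1.eigenvectorUnitary)).isUnit
  have hinv : B⁻¹ = Ψ (Matrix.diagonal fun i => (l i)⁻¹) := by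
    apply Matrix.inv_eq_right_inv
    rw [hBΨ, ← map_mul, Matrix.diagonal_mul_diagonal]
    have : (fun i => l i * (l i)⁻¹) = fun _ => 1 := funext fun i => mul_inv_cancel₀ (hlpos i).ne'
    rw [this, Matrix.diagonal_one, map_one]
  have hsum : ∑ i, (l i)⁻¹ ≤ 1 / 4 := by rw [hinv, htrΨ] at htr; exact htr
  have hl4 : ∀ i, 4 ≤ l i := by
    intro i
    have h1 : (l i)⁻¹ ≤ 1 / 4 := (Finset.single_le_sum (f := fun i => (l i)⁻¹) (fun i _ => (inv_pos.mpr (hlpos i)).le) (Finset.mem_univ i)).trans hsum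
    rw [inv_le_comm₀ (hlpos i) (by norm_num)] at h1
    linarith
  have hl1 : ∀ i, 0 < l i - 1 := fun i => by linarith [hl4 i]
  have hC : B - 1 = Ψ (Matrix.diagonal fun i => l i - 1) := by
    have : (Matrix.diagonal fun i => l i - 1) = Matrix.diagonal l - 1 := by
      rw [← Matrix.diagonal_one, Matrix.diagonal_sub]
    rw [this, map_sub, map_one, ← hBΨ]
  refine ⟨Ψ (Matrix.diagonal fun i => (l i - 1)⁻¹), hpd _ fun i => inv_pos.mpr (hl1 i), ?_, ?_, ?_, ?_⟩
  · rw [hC, ← map_mul, Matrix.diagonal_mul_diagonal]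
    have : (fun i => (l i - 1) * (l i - 1)⁻¹) = fun _ => 1 := funext fun i => mul_inv_cancel₀ (hl1 i).ne'
    rw [this, Matrix.diagonal_one, map_one]
  · rw [hC]; exact hpd _ hl1
  · rw [htrΨ]
    calc ∑ i, (l i - 1)⁻¹ ≤ ∑ i, 4 / 3 * (l i)⁻¹ := by
          refine Finset.sum_le_sum fun i _ => ?_
          have := hl1 i; have := hlpos i; have := hl4 i
          rw [inv_le_iff_one_le_mul₀ (hl1 i), mul_assoc, inv_mul_eq_div, mul_div_assoc', le_div_iff₀ (hlpos i)]
          linarith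
      _ ≤ 1 / 3 := by rw [← Finset.mul_sum]; linarith
  · rw [hinv, ← map_mul, Matrix.diagonal_mul_diagonal, htrΨ, htrΨ, htrΨ, ← Finset.sum_sub_distrib]
    refine Finset.sum_le_sum fun i _ => ?_
    have h1 := hl1 i; have h2 := hlpos i
    have e : (l i - 1)⁻¹ - (l i)⁻¹ = (l i - 1)⁻¹ * (l i)⁻¹ := by
      field_simp; ring
    rw [e]
    apply mul_le_mul_of_nonneg_left _ (inv_pos.mpr h1).le
    exact inv_anti₀ h1 (by linarith)

lemma st_bss_step {ι : Type} [Fintype ι] [Nonempty ι] {d : ℕ} (ν : ι → ℝ) (hν : ∀ x, 0 < ν x)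
    (hν1 : ∑ x, ν x ≤ 1)
    (v : ι → Fin d → ℝ) (horth : ∀ i j, ∑ x, ν x * (v x i * v x j) = if i = j then 1 else 0)
    (B : Matrix (Fin d) (Fin d) ℝ) (hB : B.PosDef) (htr : B⁻¹.trace ≤ 1 / 4) :
    ∃ x, (B - 1 + (2 : ℝ) • Matrix.vecMulVec (v x) (v x)).PosDef ∧
      (B - 1 + (2 : ℝ) • Matrix.vecMulVec (v x) (v x))⁻¹.trace ≤ 1 / 4 := by
  obtain ⟨R, hR, hCR, hC, hR3, hΔ⟩ := st_bss_spec B hB htr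
  have hRT : R.transpose = R := by have := hR.1; simpa [Matrix.IsHermitian] using this
  set α : ι → ℝ := fun x => dotProduct (v x) (R.mulVec (v x)) with hα
  set β : ι → ℝ := fun x => dotProduct (v x) ((R * R).mulVec (v x)) with hβ
  have hquad : ∀ Q : Matrix (Fin d) (Fin d) ℝ, ∑ x, ν x * dotProduct (v x) (Q.mulVec (v x)) = Q.trace := by
    intro Q
    calc ∑ x, ν x * dotProduct (v x) (Q.mulVec (v x)) = ∑ x, ∑ i, ∑ j, Q i j * (ν x * (v x i * v x j)) := by
          refine Finset.sum_congr rfl fun x _ => ?_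
          simp only [dotProduct, Matrix.mulVec, Finset.mul_sum]
          refine Finset.sum_congr rfl fun i _ => Finset.sum_congr rfl fun j _ => by ring
      _ = ∑ i, ∑ j, Q i j * ∑ x, ν x * (v x i * v x j) := by
          rw [Finset.sum_comm]
          refine Finset.sum_congr rfl fun i _ => ?_
          rw [Finset.sum_comm]
          refine Finset.sum_congr rfl fun j _ => ?_
          rw [Finset.mul_sum]
      _ = Q.trace := by
          simp_rw [horth]
          simp [Matrix.trace]
  have hα0 : ∀ x, 0 ≤ α x := fun x => by
    have := hR.posSemidef.dotProduct_mulVec_nonneg (v x)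
    simpa using this
  have hRR0 : 0 ≤ (R * R).trace := by
    have := (Matrix.posSemidef_conjTranspose_mul_self R).trace_nonneg
    rwa [hR.1] at this
  obtain ⟨x, hx⟩ : ∃ x, (R.trace - B⁻¹.trace) * (1 + 2 * α x) ≤ 2 * β x := by
    by_contra hcon
    push Not at hcon
    have h1 : ∑ x, ν x * (2 * β x) < ∑ x, ν x * ((R.trace - B⁻¹.trace) * (1 + 2 * α x)) :=
      Finset.sum_lt_sum_of_nonempty Finset.univ_nonempty fun x _ => mul_lt_mul_of_pos_left (hcon x) (hν x)
    have h2 : ∑ x, ν x * (2 * β x) = 2 * (R * R).trace := by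
      rw [← hquad, Finset.mul_sum]; exact Finset.sum_congr rfl fun x _ => by ring
    have h3 : ∑ x, ν x * ((R.trace - B⁻¹.trace) * (1 + 2 * α x)) = (R.trace - B⁻¹.trace) * (∑ x, ν x + 2 * R.trace) := by
      rw [← hquad R, Finset.mul_sum, ← Finset.sum_add_distrib, Finset.mul_sum]
      exact Finset.sum_congr rfl fun x _ => by simp only [hα]; ring
    rw [h2, h3] at h1
    have hRt : 0 ≤ R.trace := hR.posSemidef.trace_nonneg
    have hs0 : 0 ≤ ∑ x, ν x := Finset.sum_nonneg fun x _ => (hν x).le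
    have h4 : (R.trace - B⁻¹.trace) * (∑ x, ν x + 2 * R.trace) ≤ (R * R).trace * (∑ x, ν x + 2 * R.trace) :=
      mul_le_mul_of_nonneg_right hΔ (by linarith)
    have h5 : (R * R).trace * (∑ x, ν x + 2 * R.trace) ≤ (R * R).trace * 2 :=
      mul_le_mul_of_nonneg_left (by linarith) hRR0
    linarith
  refine ⟨x, ?_, ?_⟩
  · refine hC.add_posSemidef (Matrix.PosSemidef.smul ?_ (by norm_num))
    simpa using Matrix.posSemidef_vecMulVec_self_star (v x)
  · have hD : 0 < 1 + 2 * α x := by linarith [hα0 x]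
    have hinv : (B - 1 + (2 : ℝ) • Matrix.vecMulVec (v x) (v x))⁻¹ =
        R - (2 / (1 + 2 * α x)) • Matrix.vecMulVec (R.mulVec (v x)) (R.mulVec (v x)) := by
      apply Matrix.inv_eq_right_inv
      have hCv : (B - 1).mulVec (R.mulVec (v x)) = v x := by
        rw [Matrix.mulVec_mulVec, hCR, Matrix.one_mulVec]
      have hvR : Matrix.vecMul (v x) R = R.mulVec (v x) := by
        conv_lhs => rw [← hRT]
        rw [Matrix.vecMul_transpose]
      rw [add_mul, mul_sub, mul_sub, hCR, mul_smul_comm, Matrix.mul_vecMulVec, hCv, smul_mul_assoc, smul_mul_assoc,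
        mul_smul_comm, Matrix.vecMulVec_mul, hvR, Matrix.vecMulVec_mul_vecMulVec]
      ext i j
      have hα' : dotProduct (v x) (R.mulVec (v x)) = α x := rfl
      simp only [Matrix.add_apply, Matrix.sub_apply, Matrix.smul_apply, smul_eq_mul, Matrix.vecMulVec_apply, hα', Pi.smul_apply]
      field_simp
      ring
    have htr2 : (Matrix.vecMulVec (R.mulVec (v x)) (R.mulVec (v x))).trace = β x := by
      rw [Matrix.trace_vecMulVec]
      simp only [hβ]
      rw [← Matrix.mulVec_mulVec, Matrix.dotProduct_mulVec (v x)]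
      congr 1
      conv_rhs => rw [← hRT]
      rw [Matrix.vecMul_transpose]
    rw [hinv, Matrix.trace_sub, Matrix.trace_smul, htr2, smul_eq_mul]
    have : R.trace - B⁻¹.trace ≤ 2 / (1 + 2 * α x) * β x := by
      rw [div_mul_eq_mul_div, le_div_iff₀ hD]; exact hx
    linarith

lemma st_bss {ι : Type} [Fintype ι] [Nonempty ι] {d : ℕ} (hd : 1 ≤ d) (ν : ι → ℝ) (hν : ∀ x, 0 < ν x)
    (hν1 : ∑ x, ν x ≤ 1)
    (v : ι → Fin d → ℝ) (horth : ∀ i j, ∑ x, ν x * (v x i * v x j) = if i = j then 1 else 0) :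
    ∃ ξ : Fin (8 * d) → ι, ∀ a, ∑ x, ν x * st_F v a x ^ 2 ≤ 4 * ((1 / ((8 * d : ℕ) : ℝ)) * ∑ i, st_F v a (ξ i) ^ 2) := by
  have hd0 : (0 : ℝ) < d := by exact_mod_cast hd
  have key : ∀ n : ℕ, ∃ (ξ : Fin n → ι),
      (((4 * d - n : ℝ)) • (1 : Matrix (Fin d) (Fin d) ℝ) + (2 : ℝ) • ∑ i, Matrix.vecMulVec (v (ξ i)) (v (ξ i))).PosDef ∧
      (((4 * d - n : ℝ)) • (1 : Matrix (Fin d) (Fin d) ℝ) + (2 : ℝ) • ∑ i, Matrix.vecMulVec (v (ξ i)) (v (ξ i)))⁻¹.trace ≤ 1 / 4 := by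
    intro n
    induction n with
    | zero =>
      refine ⟨Fin.elim0, ?_, ?_⟩
      · simp only [Finset.univ_eq_empty, Finset.sum_empty, smul_zero, add_zero]
        exact Matrix.PosDef.smul Matrix.PosDef.one (by push_cast; linarith)
      · simp only [Finset.univ_eq_empty, Finset.sum_empty, smul_zero, add_zero]
        have : ((4 * (d : ℝ) - ((0 : ℕ) : ℝ)) • (1 : Matrix (Fin d) (Fin d) ℝ))⁻¹ = (4 * (d : ℝ))⁻¹ • 1 := by
          apply Matrix.inv_eq_right_inv
          rw [smul_mul_smul_comm]
          push_cast
          rw [sub_zero, mul_inv_cancel₀ (by positivity), one_mul, one_smul]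
        rw [this, Matrix.trace_smul, Matrix.trace_one, Fintype.card_fin, smul_eq_mul]
        field_simp
        norm_num
    | succ n ih =>
      obtain ⟨ξ, h1, h2⟩ := ih
      obtain ⟨x, hx1, hx2⟩ := st_bss_step ν hν hν1 v horth _ h1 h2
      refine ⟨Fin.snoc ξ x, ?_⟩
      have e : ((4 * d - (n + 1 : ℕ) : ℝ)) • (1 : Matrix (Fin d) (Fin d) ℝ) +
          (2 : ℝ) • ∑ i, Matrix.vecMulVec (v ((Fin.snoc ξ x : Fin (n + 1) → ι) i)) (v ((Fin.snoc ξ x : Fin (n + 1) → ι) i))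
          = ((4 * d - n : ℝ)) • (1 : Matrix (Fin d) (Fin d) ℝ) + (2 : ℝ) • ∑ i, Matrix.vecMulVec (v (ξ i)) (v (ξ i)) - 1
            + (2 : ℝ) • Matrix.vecMulVec (v x) (v x) := by
        rw [Fin.sum_univ_castSucc]
        simp only [Fin.snoc_castSucc, Fin.snoc_last]
        push_cast
        module
      rw [e]
      exact ⟨hx1, hx2⟩
  obtain ⟨ξ, h1, -⟩ := key (8 * d)
  refine ⟨ξ, fun a => ?_⟩
  have h2 := h1.posSemidef.dotProduct_mulVec_nonneg a
  have h3 : ∀ w : Fin d → ℝ, dotProduct a ((Matrix.vecMulVec w w).mulVec a) = (∑ j, a j * w j) ^ 2 := by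
    intro w
    rw [Matrix.vecMulVec_mulVec]
    simp only [dotProduct, sq]
    simp
    rw [Finset.sum_mul]
    refine Finset.sum_congr rfl fun j _ => ?_
    rw [mul_assoc]
    simp_rw [mul_comm (w _) (a _)]
  have h4 : ∑ x, ν x * st_F v a x ^ 2 = ∑ j, a j ^ 2 := by
    calc ∑ x, ν x * st_F v a x ^ 2 = ∑ x, ∑ i, ∑ j, a i * a j * (ν x * (v x i * v x j)) := by
          refine Finset.sum_congr rfl fun x _ => ?_
          rw [sq, st_F, Finset.sum_mul_sum, Finset.mul_sum]
          refine Finset.sum_congr rfl fun i _ => ?_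
          rw [Finset.mul_sum]
          refine Finset.sum_congr rfl fun j _ => by ring
      _ = ∑ i, ∑ j, a i * a j * ∑ x, ν x * (v x i * v x j) := by
          rw [Finset.sum_comm]
          refine Finset.sum_congr rfl fun i _ => ?_
          rw [Finset.sum_comm]
          refine Finset.sum_congr rfl fun j _ => ?_
          rw [Finset.mul_sum]
      _ = _ := by
          simp_rw [horth]
          simp [sq]
  rw [h4]
  rw [Matrix.add_mulVec, Matrix.smul_mulVec, Matrix.smul_mulVec, Matrix.one_mulVec, Matrix.sum_mulVec, dotProduct_add,
    dotProduct_smul, dotProduct_smul, dotProduct_sum, star_trivial] at h2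
  simp_rw [h3] at h2
  have h5 : dotProduct a a = ∑ j, a j ^ 2 := by simp [dotProduct, sq]
  rw [h5] at h2
  simp only [smul_eq_mul] at h2
  push_cast at h2 ⊢
  change 0 ≤ _ + 2 * ∑ i, st_F v a (ξ i) ^ 2 at h2
  rw [show 4 * (1 / (8 * (d : ℝ)) * ∑ i, st_F v a (ξ i) ^ 2) = (∑ i, st_F v a (ξ i) ^ 2) / (2 * d) by field_simp; ring,
    le_div_iff₀ (by positivity)]
  nlinarith

lemma st_two {ι : Type} [Fintype ι] {D : ℕ} (ν : ι → ℝ) (hν : ∀ x, 0 ≤ ν x) (hν1 : ∑ x, ν x ≤ 1)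
    (e : ι → Fin D → ℝ) : ∃ (m : ℕ) (η : Fin m → ι), m ≤ 8 * D ∧
      ∀ a, ∑ x, ν x * st_F e a x ^ 2 ≤ 4 * ((1 / (m : ℝ)) * ∑ j, st_F e a (η j) ^ 2) := by
  obtain ⟨s, d, e', hdN, hνs, he', hinj, hrep, hsum⟩ := st_restrict ν hν e
  have hφ : (fun t : ℝ => t ^ 2) 0 = 0 := by simp
  rcases Nat.eq_zero_or_pos d with hd | hd
  · subst hd
    refine ⟨0, Fin.elim0, Nat.zero_le _, fun a => ?_⟩
    rw [hsum a (fun t => t ^ 2) hφ]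
    obtain ⟨b, hb⟩ := hrep a
    have : ∀ x : s, st_F e a x = 0 := by intro x; rw [hb x]; simp [st_F]
    simp [this]
  obtain ⟨τ, u, hτ, hfr, hlew⟩ := st_lewis hd (fun x : s => ν x) hνs e' he' hinj (p := 2) (by norm_num)
  have hne : Nonempty s := by
    by_contra hcon
    rw [not_nonempty_iff] at hcon
    have := hfr.one
    simp at this
  obtain ⟨ξ, hξ⟩ := st_bss hd (fun x : s => ν x) hνs (by
    rw [Finset.sum_coe_sort s ν]
    exact (Finset.sum_le_univ_sum_of_nonneg (s := s) hν).trans hν1) (fun x i => τ x * u x i) (by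
    intro i j
    rw [← hfr.orth i j]
    refine Finset.sum_congr rfl fun x _ => ?_
    rw [Real.rpow_two]; ring)
  refine ⟨8 * d, fun i => ξ i, by omega, fun a => ?_⟩
  obtain ⟨b, hb⟩ := hrep a
  obtain ⟨c, hc⟩ := hlew b
  have hab : ∀ x : s, st_F e a x = st_F (fun x i => τ x * u x i) c x := by
    intro x
    rw [hb x, hc x, st_F, st_F, Finset.mul_sum]
    exact Finset.sum_congr rfl fun j _ => by ring
  rw [hsum a (fun t => t ^ 2) hφ]
  simp_rw [hab]
  exact hξ c

lemma st_fin_even {k : ℕ} (hk : 1 ≤ k) : st_Fin (2 * k) (fun N => (N : ℝ) ^ k) := by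
  refine ⟨8, 4, by norm_num, by norm_num, ?_⟩
  intro ι _ N hN ν hν hν1 e
  have hcard : Fintype.card (Fin k → Fin N) = N ^ k := by simp
  let E : (Fin k → Fin N) ≃ Fin (N ^ k) := Fintype.equivFinOfCardEq hcard
  obtain ⟨m, η, hm, h⟩ := st_two ν hν hν1 (fun x t => ∏ i, e x (E.symm t i))
  refine ⟨m, η, (by exact_mod_cast hm : (m : ℝ) ≤ 8 * (N : ℝ) ^ k), fun a => ?_⟩
  have hF : ∀ x, |st_F e a x| ^ (2 * (k : ℝ)) =
      st_F (fun x t => ∏ i, e x (E.symm t i)) (fun t => ∏ i, a (E.symm t i)) x ^ 2 := by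
    intro x
    have h1 : st_F (fun x t => ∏ i, e x (E.symm t i)) (fun t => ∏ i, a (E.symm t i)) x = st_F e a x ^ k := by
      unfold st_F
      rw [Fintype.sum_pow]
      rw [← E.symm.sum_comp]
      refine Finset.sum_congr rfl fun t _ => ?_
      rw [Finset.prod_mul_distrib]
    rw [h1, show 2 * (k : ℝ) = ((2 * k : ℕ) : ℝ) by push_cast; ring, Real.rpow_natCast, pow_mul, sq_abs, ← pow_mul,
      ← pow_mul, mul_comm]
  simp_rw [hF]
  exact h _

lemma st_step0 {Ω : Type} [MeasurableSpace Ω] (μ : Measure Ω) [IsProbabilityMeasure μ] {p : ℝ} (hp : 1 ≤ p)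
    {N : ℕ} (u : Ω → Fin N → ℝ) (hu : ∀ j, Measurable fun ω => u ω j)
    (hi : ∀ j, Integrable (fun ω => |u ω j| ^ p) μ) :
    ∃ (ι : Type) (_ : Fintype ι) (x : ι → Ω) (ν : ι → ℝ), (∀ i, 0 ≤ ν i) ∧ ∑ i, ν i ≤ 1 ∧
      ∀ a : Fin N → ℝ, ∫ ω, |st_F u a ω| ^ p ∂μ ≤ 2 ^ p * ∑ i, ν i * |st_F u a (x i)| ^ p := by
  classical
  have hp0 : 0 < p := by linarith
  set P : ENNReal := ENNReal.ofReal p with hP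
  have hPr : P.toReal = p := ENNReal.toReal_ofReal hp0.le
  have hP0 : P ≠ 0 := by rw [hP]; simpa using hp0
  have hPt : P ≠ ⊤ := ENNReal.ofReal_ne_top
  have hP1 : 1 ≤ P := by rw [hP]; exact ENNReal.one_le_ofReal.mpr hp
  have : Fact (1 ≤ P) := ⟨hP1⟩
  have hum : Measurable u := measurable_pi_iff.mpr hu
  have huL : ∀ j, MemLp (fun ω => u ω j) P μ := by
    intro j
    rw [← integrable_norm_rpow_iff (hu j).aestronglyMeasurable hP0 hPt, hPr]
    exact hi j
  have huLp : MemLp u P μ := MemLp.of_eval huL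
  have hFm : ∀ (v : Ω → Fin N → ℝ), (∀ j, MemLp (fun ω => v ω j) P μ) → ∀ a : Fin N → ℝ, MemLp (st_F v a) P μ := by
    intro v hv a
    have : st_F v a = fun ω => ∑ j, a j * v ω j := rfl
    rw [this]
    exact memLp_finsetSum _ fun j _ => (hv j).const_mul (a j)
  have hF := hFm u huL
  let T : (Fin N → ℝ) →ₗ[ℝ] Lp ℝ P μ :=
    { toFun := fun a => (hF a).toLp _
      map_add' := fun a b => by
        rw [← MemLp.toLp_add]
        exact MemLp.toLp_congr _ _ (Filter.Eventually.of_forall fun ω => by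
          simp [st_F, add_mul, Finset.sum_add_distrib])
      map_smul' := fun c a => by
        rw [RingHom.id_apply, ← MemLp.toLp_const_smul]
        exact MemLp.toLp_congr _ _ (Filter.Eventually.of_forall fun ω => by
          simp [st_F, mul_assoc, Finset.mul_sum]) }
  have hTn : ∀ a, ‖T a‖ = (eLpNorm (st_F u a) P μ).toReal := fun a => Lp.norm_toLp _ (hF a)
  set W := LinearMap.ker T with hW
  obtain ⟨W', hWW'⟩ := Submodule.exists_isCompl W
  -- antilipschitz
  obtain ⟨K, hK0, hK⟩ := LinearMap.exists_antilipschitzWith (T.domRestrict W') (by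
    rw [LinearMap.ker_eq_bot']
    intro a ha
    have h1 : (a : Fin N → ℝ) ∈ W := ha
    have h2 : (a : Fin N → ℝ) ∈ W ⊓ W' := ⟨h1, a.2⟩
    rw [hWW'.inf_eq_bot] at h2
    exact Subtype.ext h2)
  have hKn : ∀ a ∈ W', ‖a‖ ≤ K * (eLpNorm (st_F u a) P μ).toReal := by
    intro a ha
    have := hK.le_mul_dist ⟨a, ha⟩ 0
    rw [dist_zero_right, map_zero, dist_zero_right] at this
    rw [← hTn]
    exact this
  -- null set
  let c := Module.finBasis ℝ W
  set Z : Set Ω := ⋃ k, {ω | st_F u (c k : Fin N → ℝ) ω ≠ 0} with hZ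
  have hZ0 : μ Z = 0 := by
    rw [hZ, measure_iUnion_null_iff]
    intro k
    have h1 : T (c k : Fin N → ℝ) = 0 := (c k).2
    have h2 : (hF (c k : Fin N → ℝ)).toLp _ = 0 := h1
    rw [Lp.eq_zero_iff_ae_eq_zero] at h2
    have h3 : st_F u (c k : Fin N → ℝ) =ᵐ[μ] 0 := ((hF _).coeFn_toLp).symm.trans h2
    exact ae_iff.mp h3
  have hZW : ∀ a ∈ W, ∀ ω, ω ∉ Z → st_F u a ω = 0 := by
    intro a ha ω hω
    have h1 : a = ∑ k, c.repr ⟨a, ha⟩ k • (c k : Fin N → ℝ) := by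
      have := congrArg (Subtype.val) (c.sum_repr ⟨a, ha⟩)
      rw [Submodule.coe_sum] at this
      exact this.symm
    have h2 : ∀ k, st_F u (c k : Fin N → ℝ) ω = 0 := by
      intro k
      by_contra h
      exact hω (Set.mem_iUnion.mpr ⟨k, h⟩)
    have h3 : st_F u a ω = ∑ k, c.repr ⟨a, ha⟩ k * st_F u (c k : Fin N → ℝ) ω := by
      conv_lhs => rw [h1]
      unfold st_F
      simp_rw [Finset.sum_apply, Finset.sum_mul, Finset.mul_sum]
      rw [Finset.sum_comm]
      refine Finset.sum_congr rfl fun k _ => Finset.sum_congr rfl fun j _ => ?_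
      simp only [Pi.smul_apply, smul_eq_mul]; ring
    rw [h3]
    simp [h2]
  set s : Set (Fin N → ℝ) := u '' Zᶜ with hs
  obtain ⟨ω0, hω0⟩ : ∃ ω, ω ∉ Z := by
    by_contra h
    push Not at h
    have : Z = Set.univ := Set.eq_univ_of_forall h
    rw [this, measure_univ] at hZ0
    exact one_ne_zero hZ0
  have h0s : u ω0 ∈ s := ⟨ω0, hω0, rfl⟩
  have hlim := SimpleFunc.tendsto_approxOn_Lp_eLpNorm (p := P) hum h0s hPt (μ := μ) (by
    have : ∀ᵐ ω ∂μ, ω ∉ Z := measure_eq_zero_iff_ae_notMem.mp hZ0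
    filter_upwards [this] with ω hω
    exact subset_closure ⟨ω, hω, rfl⟩) (huLp.sub (memLp_const _)).2
  set ε : ℝ := 1 / (2 * (N * K + 1)) with hε
  have hNK : (0 : ℝ) ≤ N * K := by positivity
  have hε0 : 0 < ε := by positivity
  obtain ⟨n, hn⟩ := (hlim.eventually_lt_const (ENNReal.ofReal_pos.mpr hε0)).exists
  set g := SimpleFunc.approxOn u hum s (u ω0) h0s n with hg
  have hgs : ∀ ω, g ω ∈ s := SimpleFunc.approxOn_mem hum h0s n
  have hgr : ∀ v : g.range, ∃ x, x ∉ Z ∧ u x = v := by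
    intro v
    obtain ⟨ω, hω⟩ := SimpleFunc.mem_range.mp v.2
    have := hgs ω
    rw [hω] at this
    obtain ⟨x, hx, hxv⟩ := this
    exact ⟨x, hx, hxv⟩
  choose x hxZ hxu using hgr
  have hgL : ∀ j, MemLp (fun ω => g ω j) P μ := (g.memLp_of_isFiniteMeasure P μ).eval
  have hFg := hFm g hgL
  have hint : ∀ a, ∫ ω, |st_F g a ω| ^ p ∂μ = ∑ i : g.range, μ.real (g ⁻¹' {(i : Fin N → ℝ)}) * |st_F u a (x i)| ^ p := by
    intro a
    set φ : (Fin N → ℝ) → ℝ := fun w => |∑ j, a j * w j| ^ p with hφ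
    have h1 := SimpleFunc.map_integral g φ (μ := μ) (g.integrable_of_isFiniteMeasure) (by simp [hφ, hp0.ne'])
    rw [SimpleFunc.integral_eq_integral _ (SimpleFunc.integrable_of_isFiniteMeasure _)] at h1
    rw [← Finset.sum_coe_sort g.range] at h1
    have h2 : ∫ ω, |st_F g a ω| ^ p ∂μ = ∫ ω, (SimpleFunc.map φ g) ω ∂μ := rfl
    rw [h2, h1]
    refine Finset.sum_congr rfl fun i _ => ?_
    have : st_F u a (x i) = ∑ j, a j * (i : Fin N → ℝ) j := by unfold st_F; rw [hxu]
    rw [this, smul_eq_mul]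
  have hconv : ∀ f : Ω → ℝ, MemLp f P μ → (eLpNorm f P μ).toReal = (∫ ω, |f ω| ^ p ∂μ) ^ p⁻¹ := by
    intro f hf
    rw [hf.eLpNorm_eq_integral_rpow_norm hP0 hPt, hPr, ENNReal.toReal_ofReal]
    · rfl
    · exact Real.rpow_nonneg (integral_nonneg fun ω => by positivity) _
  have hmain : ∀ a ∈ W', (eLpNorm (st_F u a) P μ).toReal ≤ 2 * (eLpNorm (st_F g a) P μ).toReal := by
    intro a ha
    have h1 : eLpNorm (st_F g a - st_F u a) P μ ≤ ENNReal.ofReal (N * ‖a‖) * eLpNorm (⇑g - u) P μ := by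
      apply eLpNorm_le_mul_eLpNorm_of_ae_le_mul
      refine Filter.Eventually.of_forall fun ω => ?_
      have : (st_F g a - st_F u a) ω = ∑ j, a j * (g ω - u ω) j := by
        simp [st_F, mul_sub, Finset.sum_sub_distrib]
      rw [this]
      calc ‖∑ j, a j * (g ω - u ω) j‖ ≤ ∑ j, ‖a j * (g ω - u ω) j‖ := norm_sum_le _ _
        _ ≤ ∑ j : Fin N, ‖a‖ * ‖g ω - u ω‖ := by
            refine Finset.sum_le_sum fun j _ => ?_
            rw [norm_mul]
            exact mul_le_mul (norm_le_pi_norm a j) (norm_le_pi_norm _ j) (norm_nonneg _) (norm_nonneg _)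
        _ = N * ‖a‖ * ‖g ω - u ω‖ := by simp; ring
    have h2 : (eLpNorm (st_F g a - st_F u a) P μ).toReal ≤ N * ‖a‖ * ε := by
      have h3 : eLpNorm (st_F g a - st_F u a) P μ ≤ ENNReal.ofReal (N * ‖a‖ * ε) := by
        rw [ENNReal.ofReal_mul (by positivity)]
        exact h1.trans (mul_le_mul_right hn.le _)
      exact ENNReal.toReal_le_of_le_ofReal (by positivity) h3
    have h4 : (eLpNorm (st_F u a) P μ).toReal ≤ (eLpNorm (st_F g a) P μ).toReal + (eLpNorm (st_F g a - st_F u a) P μ).toReal := by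
      rw [← ENNReal.toReal_add (hFg a).2.ne ((hFg a).sub (hF a)).2.ne]
      refine ENNReal.toReal_mono (ENNReal.add_ne_top.mpr ⟨(hFg a).2.ne, ((hFg a).sub (hF a)).2.ne⟩) ?_
      have : st_F u a = st_F g a - (st_F g a - st_F u a) := by abel
      conv_lhs => rw [this]
      exact eLpNorm_sub_le (hFg a).1 ((hFg a).sub (hF a)).1 hP1
    have h5 := hKn a ha
    set A := (eLpNorm (st_F u a) P μ).toReal with hA
    have hA0 : 0 ≤ A := ENNReal.toReal_nonneg
    have h6 : N * ‖a‖ * ε ≤ A / 2 := by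
      calc N * ‖a‖ * ε ≤ N * (K * A) * ε := by gcongr
        _ = (N * K) * A / (2 * (N * K + 1)) := by rw [hε]; ring
        _ ≤ A / 2 := by
            rw [div_le_div_iff₀ (by positivity) (by norm_num)]
            nlinarith
    linarith
  refine ⟨g.range, inferInstance, x, fun i => μ.real (g ⁻¹' {(i : Fin N → ℝ)}), fun i => measureReal_nonneg, ?_, ?_⟩
  · rw [Finset.sum_coe_sort g.range (fun v => μ.real (g ⁻¹' {v}))]
    have h1 := g.sum_range_measure_preimage_singleton μ
    simp only [Measure.real]
    rw [← ENNReal.toReal_sum (fun v _ => measure_ne_top _ _), h1]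
    simp
  · intro a
    obtain ⟨w, hw, a', ha', rfl⟩ : ∃ w ∈ W, ∃ a' ∈ W', w + a' = a := by
      have : a ∈ W ⊔ W' := by rw [hWW'.sup_eq_top]; trivial
      exact Submodule.mem_sup.mp this
    have hadd : ∀ ω, ω ∉ Z → st_F u (w + a') ω = st_F u a' ω := by
      intro ω hω
      have h1 := hZW w hw ω hω
      have h2 : st_F u (w + a') ω = st_F u w ω + st_F u a' ω := by
        simp [st_F, add_mul, Finset.sum_add_distrib]
      rw [h2, h1, zero_add]
    have hl : ∫ ω, |st_F u (w + a') ω| ^ p ∂μ = ∫ ω, |st_F u a' ω| ^ p ∂μ := by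
      apply integral_congr_ae
      have : ∀ᵐ ω ∂μ, ω ∉ Z := measure_eq_zero_iff_ae_notMem.mp hZ0
      filter_upwards [this] with ω hω
      rw [hadd ω hω]
    have hr : ∑ i : g.range, μ.real (g ⁻¹' {(i : Fin N → ℝ)}) * |st_F u (w + a') (x i)| ^ p =
        ∑ i : g.range, μ.real (g ⁻¹' {(i : Fin N → ℝ)}) * |st_F u a' (x i)| ^ p :=
      Finset.sum_congr rfl fun i _ => by rw [hadd _ (hxZ i)]
    rw [hl, hr, ← hint a']
    have h := hmain a' ha'
    rw [hconv _ (hF a'), hconv _ (hFg a')] at h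
    have i1 : 0 ≤ ∫ ω, |st_F u a' ω| ^ p ∂μ := integral_nonneg fun ω => by positivity
    have i2 : 0 ≤ ∫ ω, |st_F g a' ω| ^ p ∂μ := integral_nonneg fun ω => by positivity
    have h' := Real.rpow_le_rpow (Real.rpow_nonneg i1 _) h hp0.le
    rw [Real.mul_rpow (by norm_num) (Real.rpow_nonneg i2 _), ← Real.rpow_mul i1, ← Real.rpow_mul i2,
      inv_mul_cancel₀ hp0.ne', Real.rpow_one, Real.rpow_one] at h'
    exact h'

lemma st_final {p : ℝ} (hp : 1 ≤ p) {Φ : ℕ → ℝ} (h : st_Fin p Φ) :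
    ∃ C₁ C₂ : ℝ, 0 < C₁ ∧ 0 < C₂ ∧
      ∀ (Ω : Type) [MeasurableSpace Ω], ∀ (μ : Measure Ω) [IsProbabilityMeasure μ],
        ∀ (N : ℕ), 3 ≤ N →
        ∀ (X : Submodule ℝ (Ω → ℝ)), Module.finrank ℝ X = N →
          (∀ f ∈ X, Measurable f) →
          (∀ f ∈ X, Integrable (fun ω => |f ω| ^ p) μ) →
          ∃ (m : ℕ) (ξ : Fin m → Ω),
            (∀ f ∈ X, LpNorm μ p f ≤ C₂ * ((1 / (m : ℝ)) * ∑ j, |f (ξ j)| ^ p) ^ (1 / p)) ∧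
            (m : ℝ) ≤ C₁ * Φ N := by
  obtain ⟨C, K, hC, hK, h⟩ := h
  have hp0 : 0 < p := by linarith
  have h2p : (0 : ℝ) < 2 ^ p := Real.rpow_pos_of_pos (by norm_num) p
  refine ⟨C, (2 ^ p * K) ^ (1 / p), hC, Real.rpow_pos_of_pos (by positivity) _, ?_⟩
  intro Ω _ μ _ N hN X hX hmeas hint
  have : Module.Finite ℝ X := Module.finite_of_finrank_pos (by omega)
  let b := Module.finBasisOfFinrankEq ℝ X hX
  obtain ⟨ι, _, x, ν, hν, hν1, hx⟩ := st_step0 μ hp (fun ω j => (b j : Ω → ℝ) ω)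
    (fun j => hmeas _ (b j).2) (fun j => hint _ (b j).2)
  obtain ⟨m, η, hm, hη⟩ := h hN ν hν hν1 (fun i j => (b j : Ω → ℝ) (x i))
  refine ⟨m, fun j => x (η j), fun f hf => ?_, hm⟩
  set a : Fin N → ℝ := fun j => b.repr ⟨f, hf⟩ j with ha
  have hfa : ∀ ω, f ω = st_F (fun ω j => (b j : Ω → ℝ) ω) a ω := by
    intro ω
    have h1 := congrArg (Subtype.val) (b.sum_repr ⟨f, hf⟩)
    rw [Submodule.coe_sum] at h1
    have h2 := congrFun h1 ω
    rw [Finset.sum_apply] at h2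
    exact h2.symm
  have h1 := hx a
  have h2 := hη a
  have h3 : ∫ ω, |f ω| ^ p ∂μ ≤ (2 ^ p * K) * ((1 / (m : ℝ)) * ∑ j, |f (x (η j))| ^ p) := by
    simp_rw [hfa]
    refine h1.trans ?_
    rw [mul_assoc]
    exact mul_le_mul_of_nonneg_left h2 h2p.le
  unfold LpNorm
  rw [← Real.mul_rpow (by positivity) (by positivity)]
  exact Real.rpow_le_rpow (integral_nonneg fun ω => by positivity) h3 (by positivity)

/-- Proposition 3.2: for `1 ≤ p < ∞` there are constants `C₁(p), C₂(p) > 0` such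
that every `N`-dimensional subspace of `L_p` of a probability space admits an equal-weight LDI
`‖f‖_p ≤ C₂((1/m)∑_j |f(ξ^j)|^p)^{1/p}` with `m ≤ C₁N` if `p = 2`, `m ≤ C₁N log N` if `p = 1`,
`m ≤ C₁N log N (log log N)²` if `1 < p < 2`, `m ≤ C₁N^{p/2}` if `p` is an even integer, and
`m ≤ C₁N^{p/2} log N` if `p > 2`. -/
theorem stmt_7 (p : ℝ) (hp : 1 ≤ p) :
    ∃ C₁ C₂ : ℝ, 0 < C₁ ∧ 0 < C₂ ∧
      ∀ (Ω : Type) [MeasurableSpace Ω], ∀ (μ : Measure Ω) [IsProbabilityMeasure μ],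
        ∀ (N : ℕ), 3 ≤ N →
        ∀ (X : Submodule ℝ (Ω → ℝ)), Module.finrank ℝ X = N →
          (∀ f ∈ X, Measurable f) →
          (∀ f ∈ X, Integrable (fun ω => |f ω| ^ p) μ) →
          ∃ (m : ℕ) (ξ : Fin m → Ω),
            (∀ f ∈ X, LpNorm μ p f ≤ C₂ * ((1 / (m : ℝ)) * ∑ j, |f (ξ j)| ^ p) ^ (1 / p)) ∧
            (p = 2 → (m : ℝ) ≤ C₁ * N) ∧
            (p = 1 → (m : ℝ) ≤ C₁ * N * Real.log N) ∧
            (1 < p → p < 2 → (m : ℝ) ≤ C₁ * N * Real.log N * (Real.log (Real.log N)) ^ 2) ∧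
            ((∃ k : ℕ, 1 ≤ k ∧ p = 2 * k) → (m : ℝ) ≤ C₁ * (N : ℝ) ^ (p / 2)) ∧
            (2 < p → (m : ℝ) ≤ C₁ * (N : ℝ) ^ (p / 2) * Real.log N) := by
  have hlogs : ∀ N : ℕ, 3 ≤ N → 1 ≤ Real.log N := by
    intro N hN
    have hN3 : (3 : ℝ) ≤ N := by exact_mod_cast hN
    rw [Real.le_log_iff_exp_le (by linarith)]
    exact (Real.exp_one_lt_three.le).trans hN3
  by_cases hev : ∃ k : ℕ, 1 ≤ k ∧ p = 2 * k
  · obtain ⟨k, hk, rfl⟩ := hev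
    obtain ⟨C₁, C₂, hC₁, hC₂, h⟩ := st_final hp (st_fin_even hk)
    refine ⟨C₁, C₂, hC₁, hC₂, ?_⟩
    intro Ω _ μ _ N hN X hX hmeas hint
    obtain ⟨m, ξ, h1, h2⟩ := h Ω μ N hN X hX hmeas hint
    have hk1 : (1 : ℝ) ≤ k := by exact_mod_cast hk
    have hpow : (N : ℝ) ^ (2 * (k : ℝ) / 2) = (N : ℝ) ^ k := by
      rw [mul_div_cancel_left₀ _ (by norm_num : (2 : ℝ) ≠ 0), Real.rpow_natCast]
    have h2 : (m : ℝ) ≤ C₁ * (N : ℝ) ^ k := h2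
    refine ⟨m, ξ, h1, ?_, ?_, ?_, ?_, ?_⟩
    · intro h
      have : k = 1 := by
        have : (k : ℝ) = 1 := by linarith
        exact_mod_cast this
      subst this
      simpa using h2
    · intro h; linarith
    · intro _ h; linarith
    · intro _; rw [hpow]; exact h2
    · intro _
      rw [hpow]
      exact h2.trans (le_mul_of_one_le_right (by positivity) (hlogs N hN))
  have hp2 : p ≠ 2 := fun h => hev ⟨1, le_rfl, by rw [h]; norm_num⟩
  rcases lt_trichotomy p 2 with hlt | heq | hgt
  · rcases hp.eq_or_lt with h1 | h1
    · subst h1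
      obtain ⟨C₁, C₂, hC₁, hC₂, h⟩ := st_final hp st_fin_one
      refine ⟨C₁, C₂, hC₁, hC₂, ?_⟩
      intro Ω _ μ _ N hN X hX hmeas hint
      obtain ⟨m, ξ, h1, h2⟩ := h Ω μ N hN X hX hmeas hint
      refine ⟨m, ξ, h1, fun h => absurd h hp2, fun _ => ?_, fun h => absurd h (lt_irrefl _), fun h => absurd h hev,
        fun h => absurd h (by norm_num)⟩
      simp only [Real.rpow_one] at h2
      rw [mul_assoc]; exact h2
    · obtain ⟨C₁, C₂, hC₁, hC₂, h⟩ := st_final hp (st_fin_low h1 hlt)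
      set t : ℝ := Real.log (Real.log 3) with ht
      have hlog3 : 1 < Real.log 3 := by
        rw [Real.lt_log_iff_exp_lt (by norm_num)]; exact Real.exp_one_lt_three
      have ht0 : 0 < t := Real.log_pos hlog3
      refine ⟨C₁ / t ^ 2, C₂, by positivity, hC₂, ?_⟩
      intro Ω _ μ _ N hN X hX hmeas hint
      obtain ⟨m, ξ, hh1, h2⟩ := h Ω μ N hN X hX hmeas hint
      refine ⟨m, ξ, hh1, fun h => absurd h hp2, fun h => absurd h h1.ne', fun _ _ => ?_, fun h => absurd h hev,
        fun h => absurd h (not_lt.mpr hlt.le)⟩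
      simp only [Real.rpow_one] at h2
      have hN3 : (3 : ℝ) ≤ N := by exact_mod_cast hN
      have htN : t ≤ Real.log (Real.log N) :=
        Real.log_le_log (by linarith) (Real.log_le_log (by norm_num) hN3)
      have hl := hlogs N hN
      have hsq : t ^ 2 ≤ Real.log (Real.log N) ^ 2 := pow_le_pow_left₀ ht0.le htN 2
      calc (m : ℝ) ≤ C₁ * (N * Real.log N) := h2
        _ = C₁ / t ^ 2 * N * Real.log N * t ^ 2 := by field_simp
        _ ≤ _ := mul_le_mul_of_nonneg_left hsq (by positivity)
  · exact absurd heq hp2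
  · obtain ⟨C₁, C₂, hC₁, hC₂, h⟩ := st_final hp (st_fin_high hgt)
    refine ⟨C₁, C₂, hC₁, hC₂, ?_⟩
    intro Ω _ μ _ N hN X hX hmeas hint
    obtain ⟨m, ξ, h1, h2⟩ := h Ω μ N hN X hX hmeas hint
    refine ⟨m, ξ, h1, fun h => absurd h hp2, fun h => by linarith, fun _ h => by linarith, fun h => absurd h hev,
      fun _ => ?_⟩
    rw [mul_assoc]; exact h2
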